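/- Let D and G be strictly pseudoconvex domains in ℂⁿ (n ≥ 2) with the closure of D compactly contained in G. Then G ∖ cl(D) is a domain which is Gromov hyperbolic with respect to its Kobayashi distance. -/

import Mathlib

open Metric Set

noncomputable section

/-- Inverse hyperbolic tangent: `artanh t = (1/2) * log ((1+t)/(1-t))`. -/
def artanh (x : ℝ) : ℝ := Real.log ((1 + x) / (1 - x)) / 2

variable {E : Type*} [NormedAddCommGroup E] [NormedSpace ℂ E]

/-- The Lempert function of a set `D ⊆ E`:
`l_D(z,w) = inf { artanh |α| : ∃ φ : 𝔻 → D holomorphic, φ 0 = z, φ α = w }`. -/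
def lempert (D : Set E) (z w : E) : ℝ :=
  sInf { r : ℝ | ∃ α : ℂ, ‖α‖ < 1 ∧
    (∃ φ : ℂ → E, DifferentiableOn ℂ φ (ball 0 1) ∧ MapsTo φ (ball 0 1) D ∧
      φ 0 = z ∧ φ α = w) ∧ r = artanh ‖α‖ }

/-- The Kobayashi pseudodistance: infimum of `∑ l_D(z_{i-1}, z_i)` over all finite
chains of points `z = c 0, c 1, …, c m = w` in `D`. -/
def kobayashi (D : Set E) (z w : E) : ℝ :=
  sInf { r : ℝ | ∃ (m : ℕ) (c : ℕ → E), c 0 = z ∧ c m = w ∧ (∀ i ≤ m, c i ∈ D) ∧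
    r = ∑ i ∈ Finset.range m, lempert D (c i) (c (i + 1)) }

/-- The Carathéodory pseudodistance:
`c_D(z,w) = sup { artanh |f w| : f : D → 𝔻 holomorphic, f z = 0 }`. -/
def caratheodory (D : Set E) (z w : E) : ℝ :=
  sSup { r : ℝ | ∃ f : E → ℂ, DifferentiableOn ℂ f D ∧ MapsTo f D (ball 0 1) ∧
    f z = 0 ∧ r = artanh ‖f w‖ }

/-- `(D, d)` is Gromov hyperbolic if
`sup_{p,q,x,w ∈ D} ( min{(p,x)_w, (x,q)_w} − (p,q)_w ) < ∞`, where
`(x,y)_z = d x z + d z y - d x y` is the Gromov product. -/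
def GromovHyperbolicWith (D : Set E) (d : E → E → ℝ) : Prop :=
  ∃ C : ℝ, ∀ p ∈ D, ∀ q ∈ D, ∀ x ∈ D, ∀ w ∈ D,
    min (d p w + d w x - d p x) (d x w + d w q - d x q) - (d p w + d w q - d p q) ≤ C

end

noncomputable section LeviForm

variable {n : ℕ}

/-- The standard basis vector `e_j` of `ℂⁿ`. -/
def stdBasis (j : Fin n) : EuclideanSpace ℂ (Fin n) := EuclideanSpace.single j 1

/-- The second-order Wirtinger derivative `∂²ρ/∂z_j∂z̄_k` at `p` of a real-valued `ρ`,
where `∂/∂z_j = (∂/∂x_j − i·∂/∂y_j)/2` and `∂/∂z̄_j = (∂/∂x_j + i·∂/∂y_j)/2`, expressed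
through the real Hessian of `ρ` (`∂/∂x_j`, `∂/∂y_j` are the derivatives in the real
directions `e_j` and `i·e_j`). -/
def wirtinger2 (ρ : EuclideanSpace ℂ (Fin n) → ℝ) (p : EuclideanSpace ℂ (Fin n))
    (j k : Fin n) : ℂ :=
  (((iteratedFDeriv ℝ 2 ρ p ![stdBasis j, stdBasis k] +
      iteratedFDeriv ℝ 2 ρ p ![Complex.I • stdBasis j, Complex.I • stdBasis k] : ℝ) : ℂ) +
    Complex.I * ((iteratedFDeriv ℝ 2 ρ p ![stdBasis j, Complex.I • stdBasis k] -
      iteratedFDeriv ℝ 2 ρ p ![Complex.I • stdBasis j, stdBasis k] : ℝ) : ℂ)) / 4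

/-- The Levi form `Σ_{j,k} (∂²ρ/∂z_j∂z̄_k)(p) X_j conj(X_k)` of `ρ` at `p` applied
to `X ∈ ℂⁿ`. (It is a real number when `ρ` is real-valued; we take it in `ℂ`.) -/
def leviForm (ρ : EuclideanSpace ℂ (Fin n) → ℝ) (p : EuclideanSpace ℂ (Fin n))
    (X : EuclideanSpace ℂ (Fin n)) : ℂ :=
  ∑ j, ∑ k, wirtinger2 ρ p j k * X j * starRingEnd ℂ (X k)

/-- The Wirtinger derivative `(∂ρ/∂z_j)(p) = ((∂ρ/∂x_j)(p) − i·(∂ρ/∂y_j)(p))/2` of a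
real-valued function `ρ`. -/
def wirtingerDeriv (ρ : EuclideanSpace ℂ (Fin n) → ℝ) (p : EuclideanSpace ℂ (Fin n))
    (j : Fin n) : ℂ :=
  (((fderiv ℝ ρ p (stdBasis j) : ℝ) : ℂ) -
    Complex.I * ((fderiv ℝ ρ p (Complex.I • stdBasis j) : ℝ) : ℂ)) / 2

end LeviForm

/-- A bounded domain `D ⊆ ℂⁿ` is strictly pseudoconvex if it has a `C²` defining
function `ρ` on a neighborhood of `∂D` (`D` given locally by `{ρ < 0}`, `∇ρ ≠ 0` on
`∂D`) whose Levi form is positive on nonzero complex tangent vectors: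
`Σ_j (∂ρ/∂z_j)(p) X_j = 0`, `X ≠ 0` implies `Σ_{j,k} (∂²ρ/∂z_j∂z̄_k)(p) X_j conj(X_k) > 0`. -/
def IsStrictlyPseudoconvex {n : ℕ} (D : Set (EuclideanSpace ℂ (Fin n))) : Prop :=
  Bornology.IsBounded D ∧
  ∃ (U : Set (EuclideanSpace ℂ (Fin n))) (ρ : EuclideanSpace ℂ (Fin n) → ℝ),
    IsOpen U ∧ frontier D ⊆ U ∧ ContDiffOn ℝ 2 ρ U ∧
    (∀ p ∈ frontier D, fderiv ℝ ρ p ≠ 0) ∧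
    D ∩ U = { z ∈ U | ρ z < 0 } ∧
    ∀ p ∈ frontier D, ∀ X : EuclideanSpace ℂ (Fin n), X ≠ 0 →
      (∑ j, wirtingerDeriv ρ p j * X j) = 0 → 0 < (leviForm ρ p X).re


section P1
variable {E : Type*} [NormedAddCommGroup E] [NormedSpace ℂ E]

lemma artanh_nonneg' {x : ℝ} (h0 : 0 ≤ x) (h1 : x < 1) : 0 ≤ artanh x := by
  unfold artanh
  have : 1 ≤ (1 + x) / (1 - x) := by rw [le_div_iff₀ (by linarith)]; linarith
  have := Real.log_nonneg this
  linarith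

lemma lempert_bdd (D : Set E) (z w : E) : BddBelow { r : ℝ | ∃ α : ℂ, ‖α‖ < 1 ∧
    (∃ φ : ℂ → E, DifferentiableOn ℂ φ (ball 0 1) ∧ MapsTo φ (ball 0 1) D ∧
      φ 0 = z ∧ φ α = w) ∧ r = artanh ‖α‖ } := by
  refine ⟨0, ?_⟩
  rintro r ⟨α, h1, -, rfl⟩
  exact artanh_nonneg' (norm_nonneg _) h1

lemma lempert_nonneg (D : Set E) (z w : E) : 0 ≤ lempert D z w := by
  apply Real.sInf_nonneg
  rintro r ⟨α, h1, -, rfl⟩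
  exact artanh_nonneg' (norm_nonneg _) h1

lemma lempert_le {D : Set E} {φ : ℂ → E} {α : ℂ} (h1 : ‖α‖ < 1)
    (hd : DifferentiableOn ℂ φ (ball 0 1)) (hm : MapsTo φ (ball 0 1) D) :
    lempert D (φ 0) (φ α) ≤ artanh ‖α‖ :=
  csInf_le (lempert_bdd D _ _) ⟨α, h1, ⟨φ, hd, hm, rfl, rfl⟩, rfl⟩

lemma mob_den {a z : ℂ} (ha : ‖a‖ < 1) (hz : ‖z‖ < 1) : 1 + starRingEnd ℂ a * z ≠ 0 := by
  intro h
  have h2 : starRingEnd ℂ a * z = -1 := by linear_combination h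
  have : ‖starRingEnd ℂ a * z‖ = 1 := by rw [h2]; simp
  rw [norm_mul, RCLike.norm_conj] at this
  nlinarith [norm_nonneg a, norm_nonneg z]

lemma mob_lt {a z : ℂ} (ha : ‖a‖ < 1) (hz : ‖z‖ < 1) :
    ‖(z + a) / (1 + starRingEnd ℂ a * z)‖ < 1 := by
  have hd := mob_den ha hz
  rw [norm_div, div_lt_one (norm_pos_iff.2 hd)]
  have key : ‖1 + starRingEnd ℂ a * z‖ ^ 2 - ‖z + a‖ ^ 2 = (1 - ‖a‖ ^ 2) * (1 - ‖z‖ ^ 2) := by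
    rw [← Complex.normSq_eq_norm_sq, ← Complex.normSq_eq_norm_sq, ← Complex.normSq_eq_norm_sq,
      ← Complex.normSq_eq_norm_sq]
    simp only [Complex.normSq_apply, Complex.add_re, Complex.add_im, Complex.mul_re,
      Complex.mul_im, Complex.one_re, Complex.one_im, Complex.conj_re, Complex.conj_im]
    ring
  have : 0 < (1 - ‖a‖ ^ 2) * (1 - ‖z‖ ^ 2) := by
    apply mul_pos <;> nlinarith [norm_nonneg a, norm_nonneg z]
  apply lt_of_pow_lt_pow_left₀ 2 (norm_nonneg _)
  linarith

lemma mob_diff {a : ℂ} (ha : ‖a‖ < 1) :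
    DifferentiableOn ℂ (fun z => (z + a) / (1 + starRingEnd ℂ a * z)) (ball 0 1) := by
  apply DifferentiableOn.div
  · fun_prop
  · fun_prop
  · intro z hz
    exact mob_den ha (by simpa using hz)

lemma mob_comp {D : Set E} {φ : ℂ → E} {a : ℂ} (ha : ‖a‖ < 1)
    (hd : DifferentiableOn ℂ φ (ball 0 1)) (hm : MapsTo φ (ball 0 1) D) :
    DifferentiableOn ℂ (fun z => φ ((z + a) / (1 + starRingEnd ℂ a * z))) (ball 0 1) ∧
    MapsTo (fun z => φ ((z + a) / (1 + starRingEnd ℂ a * z))) (ball 0 1) D := by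
  have h : MapsTo (fun z => (z + a) / (1 + starRingEnd ℂ a * z)) (ball 0 1) (ball (0:ℂ) 1) := by
    intro z hz
    simpa using mob_lt ha (by simpa using hz)
  exact ⟨hd.comp (mob_diff ha) h, hm.comp h⟩

lemma lempert_symm_aux {D : Set E} {z w : E} {r : ℝ} (h : ∃ α : ℂ, ‖α‖ < 1 ∧
    (∃ φ : ℂ → E, DifferentiableOn ℂ φ (ball 0 1) ∧ MapsTo φ (ball 0 1) D ∧
      φ 0 = z ∧ φ α = w) ∧ r = artanh ‖α‖) : ∃ α : ℂ, ‖α‖ < 1 ∧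
    (∃ φ : ℂ → E, DifferentiableOn ℂ φ (ball 0 1) ∧ MapsTo φ (ball 0 1) D ∧
      φ 0 = w ∧ φ α = z) ∧ r = artanh ‖α‖ := by
  obtain ⟨α, h1, ⟨φ, hd, hm, rfl, rfl⟩, rfl⟩ := h
  obtain ⟨h2, h3⟩ := mob_comp h1 hd hm
  exact ⟨-α, by simpa using h1, ⟨_, h2, h3, by simp, by simp⟩, by simp⟩

lemma lempert_symm (D : Set E) (z w : E) : lempert D z w = lempert D w z := by
  unfold lempert
  congr 1
  ext r
  exact ⟨lempert_symm_aux, lempert_symm_aux⟩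

lemma kob_bdd (D : Set E) (z w : E) : BddBelow { r : ℝ | ∃ (m : ℕ) (c : ℕ → E), c 0 = z ∧ c m = w ∧
    (∀ i ≤ m, c i ∈ D) ∧ r = ∑ i ∈ Finset.range m, lempert D (c i) (c (i + 1)) } := by
  refine ⟨0, ?_⟩
  rintro r ⟨m, c, -, -, -, rfl⟩
  exact Finset.sum_nonneg fun i _ => lempert_nonneg _ _ _

lemma kob_nonneg (D : Set E) (z w : E) : 0 ≤ kobayashi D z w := by
  apply Real.sInf_nonneg
  rintro r ⟨m, c, -, -, -, rfl⟩
  exact Finset.sum_nonneg fun i _ => lempert_nonneg _ _ _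

lemma kob_ne {D : Set E} {z w : E} (hz : z ∈ D) (hw : w ∈ D) :
    lempert D z w ∈ { r : ℝ | ∃ (m : ℕ) (c : ℕ → E), c 0 = z ∧ c m = w ∧
    (∀ i ≤ m, c i ∈ D) ∧ r = ∑ i ∈ Finset.range m, lempert D (c i) (c (i + 1)) } := by
  refine ⟨1, fun i => if i = 0 then z else w, by simp, by simp, ?_, by simp⟩
  intro i _
  by_cases h : i = 0 <;> simp [h, hz, hw]

lemma kob_le_lempert {D : Set E} {z w : E} (hz : z ∈ D) (hw : w ∈ D) :
    kobayashi D z w ≤ lempert D z w := csInf_le (kob_bdd D _ _) (kob_ne hz hw)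

lemma kob_le_disc {D : Set E} {φ : ℂ → E} {α : ℂ} (h1 : ‖α‖ < 1)
    (hd : DifferentiableOn ℂ φ (ball 0 1)) (hm : MapsTo φ (ball 0 1) D) :
    kobayashi D (φ 0) (φ α) ≤ artanh ‖α‖ :=
  (kob_le_lempert (hm (by simp)) (hm (by simpa using h1))).trans (lempert_le h1 hd hm)

lemma kob_lower {D : Set E} {U : E → ℝ}
    (hU : ∀ x ∈ D, ∀ y ∈ D, U y - U x ≤ lempert D x y) {z w : E} (hz : z ∈ D) (hw : w ∈ D) :
    U w - U z ≤ kobayashi D z w := by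
  apply le_csInf ⟨_, kob_ne hz hw⟩
  rintro r ⟨m, c, rfl, rfl, hc, rfl⟩
  rw [← Finset.sum_range_sub (fun i => U (c i))]
  apply Finset.sum_le_sum
  intro i hi
  have := Finset.mem_range.1 hi
  exact hU _ (hc _ (by omega)) _ (hc _ (by omega))

lemma kob_triangle {D : Set E} {x y z : E} (hx : x ∈ D) (hy : y ∈ D) (hz : z ∈ D) :
    kobayashi D x z ≤ kobayashi D x y + kobayashi D y z := by
  apply le_of_forall_pos_le_add
  intro ε hε
  obtain ⟨r1, ⟨m1, c1, rfl, h1, hc1, rfl⟩, hr1⟩ :=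
    exists_lt_of_csInf_lt ⟨_, kob_ne hx hy⟩ (lt_add_of_pos_right (kobayashi D x y) (half_pos hε))
  obtain ⟨r2, ⟨m2, c2, h2, rfl, hc2, rfl⟩, hr2⟩ :=
    exists_lt_of_csInf_lt ⟨_, kob_ne hy hz⟩ (lt_add_of_pos_right (kobayashi D y z) (half_pos hε))
  have : kobayashi D (c1 0) (c2 m2) ≤ ∑ i ∈ Finset.range m1, lempert D (c1 i) (c1 (i + 1)) +
      ∑ i ∈ Finset.range m2, lempert D (c2 i) (c2 (i + 1)) := by
    apply csInf_le (kob_bdd D _ _)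
    refine ⟨m1 + m2, fun i => if i ≤ m1 then c1 i else c2 (i - m1), by simp, ?_, ?_, ?_⟩
    · by_cases h : m2 = 0
      · subst h; simp [h1, h2]
      · simp [h]
    · intro i hi
      by_cases h : i ≤ m1
      · simp [h, hc1 i h]
      · simp only [h, if_false]; exact hc2 _ (by omega)
    · rw [Finset.sum_range_add]
      congr 1
      · apply Finset.sum_congr rfl
        intro i hi
        have := Finset.mem_range.1 hi
        beta_reduce
        rw [if_pos (by omega), if_pos (by omega)]
      · apply Finset.sum_congr rfl
        intro i hi
        beta_reduce
        rw [if_neg (by omega : ¬ (m1 + i + 1 ≤ m1))]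
        by_cases h : i = 0
        · subst h; simp [h1, h2]
        · rw [if_neg (by omega)]
          congr 2 <;> omega
  linarith

lemma kob_symm_le {D : Set E} {x y : E} (hx : x ∈ D) (hy : y ∈ D) :
    kobayashi D x y ≤ kobayashi D y x := by
  apply le_csInf ⟨_, kob_ne hy hx⟩
  rintro r ⟨m, c, rfl, rfl, hc, rfl⟩
  apply csInf_le (kob_bdd D _ _)
  refine ⟨m, fun i => c (m - i), by simp, by simp, fun i _ => hc _ (by omega), ?_⟩
  rw [← Finset.sum_range_reflect]
  apply Finset.sum_congr rfl
  intro i hi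
  have := Finset.mem_range.1 hi
  rw [lempert_symm]
  congr 2 <;> omega

lemma kob_symm {D : Set E} {x y : E} (hx : x ∈ D) (hy : y ∈ D) :
    kobayashi D x y = kobayashi D y x := le_antisymm (kob_symm_le hx hy) (kob_symm_le hy hx)

lemma kob_self {D : Set E} {x : E} (hx : x ∈ D) : kobayashi D x x = 0 := by
  apply le_antisymm _ (kob_nonneg _ _ _)
  exact csInf_le (kob_bdd D _ _) ⟨0, fun _ => x, rfl, rfl, fun _ _ => hx, by simp⟩

end P1


section P2
open Filter Topology
variable {E : Type*} [NormedAddCommGroup E] [NormedSpace ℂ E]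

/-- A function whose variation along analytic discs is infinitesimally bounded. -/
def Subunit (Ω : Set E) (U : E → ℝ) : Prop :=
  ∀ φ : ℂ → E, DifferentiableOn ℂ φ (ball 0 1) → MapsTo φ (ball 0 1) Ω →
    ∀ ε > 0, ∀ᶠ ζ in 𝓝 (0:ℂ), |U (φ ζ) - U (φ 0)| ≤ (1 + ε) * ‖ζ‖

lemma subunit_real {Ω : Set E} {U : E → ℝ} (hU : Subunit Ω U) {φ : ℂ → E}
    (hd : DifferentiableOn ℂ φ (ball 0 1)) (hm : MapsTo φ (ball 0 1) Ω)
    {t : ℝ} (ht0 : 0 ≤ t) (ht1 : t < 1) {ε : ℝ} (hε : 0 < ε) :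
    ∀ᶠ s : ℝ in 𝓝 t, |U (φ s) - U (φ t)| ≤ (1 + ε) * |s - t| / (1 - t * s) := by
  have hta : ‖(t:ℂ)‖ < 1 := by simpa [abs_of_nonneg ht0] using ht1
  obtain ⟨h2, h3⟩ := mob_comp hta hd hm
  have h4 := hU _ h2 h3 ε hε
  have hne : 1 - t * t ≠ 0 := by nlinarith
  have hc : Tendsto (fun s : ℝ => (((s - t) / (1 - t * s) : ℝ) : ℂ)) (𝓝 t) (𝓝 0) := by
    have : ContinuousAt (fun s : ℝ => (((s - t) / (1 - t * s) : ℝ) : ℂ)) t := by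
      apply Complex.continuous_ofReal.continuousAt.comp
      apply ContinuousAt.div <;> first | fun_prop | assumption
    have h := this.tendsto
    simpa using h
  have hpos : ∀ᶠ s : ℝ in 𝓝 t, 0 < 1 - t * s := by
    have : ContinuousAt (fun s : ℝ => 1 - t * s) t := by fun_prop
    exact this.eventually (lt_mem_nhds (by nlinarith : (0:ℝ) < 1 - t * t))
  filter_upwards [hc.eventually h4, hpos] with s hs hp
  have e1 : ((((s - t) / (1 - t * s) : ℝ) : ℂ) + t) / (1 + (starRingEnd ℂ) (t:ℂ) *
      (((s - t) / (1 - t * s) : ℝ) : ℂ)) = (s : ℂ) := by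
    rw [Complex.conj_ofReal]
    norm_cast
    have : 1 + t * ((s - t) / (1 - t * s)) = (1 - t * t) / (1 - t * s) := by
      field_simp; ring
    rw [this, div_div_eq_mul_div, div_eq_iff hne, add_mul, div_mul_cancel₀ _ hp.ne']
    ring
  rw [e1] at hs
  simp only [zero_add, mul_zero, add_zero, div_one] at hs
  refine hs.trans (le_of_eq ?_)
  rw [Complex.norm_real, Real.norm_eq_abs, abs_div, abs_of_pos hp]
  ring

lemma artanh_deriv {t : ℝ} (ht0 : 0 ≤ t) (ht1 : t < 1) :
    HasDerivAt artanh (1 / (1 - t * t)) t := by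
  have h1 : HasDerivAt (fun x : ℝ => (1 + x) / (1 - x)) ((1 * (1 - t) - (1 + t) * (-1)) / (1 - t) ^ 2) t :=
    ((hasDerivAt_id t).const_add 1).div ((hasDerivAt_id t).const_sub 1) (by simp; linarith)
  have h2 := (h1.log (by have : (0:ℝ) < (1 + t) / (1 - t) := div_pos (by linarith) (by linarith)
                         exact this.ne')).div_const 2
  refine h2.congr_deriv ?_
  have h3 : 1 - t ≠ 0 := by linarith
  have h4 : 1 + t ≠ 0 := by linarith
  have h5 : 1 - t * t = (1 - t) * (1 + t) := by ring
  rw [h5]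
  field_simp
  ring

lemma subunit_disc_real {Ω : Set E} {U : E → ℝ} (hU : Subunit Ω U) {φ : ℂ → E}
    (hd : DifferentiableOn ℂ φ (ball 0 1)) (hm : MapsTo φ (ball 0 1) Ω)
    {τ : ℝ} (h0 : 0 ≤ τ) (h1 : τ < 1) : U (φ τ) - U (φ 0) ≤ artanh τ := by
  have key := image_le_of_liminf_slope_right_le_deriv_boundary
    (f := fun t : ℝ => U (φ t) - U (φ 0)) (a := 0) (b := τ) (B := artanh)
    (B' := fun t => 1 / (1 - t * t)) ?_ ?_ ?_ ?_ ?_ (x := τ) ⟨h0, le_rfl⟩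
  · exact key
  · intro t ht
    apply ContinuousAt.continuousWithinAt
    have := subunit_real hU hd hm ht.1 (ht.2.trans_lt h1) one_pos
    apply ContinuousAt.sub _ continuousAt_const
    rw [ContinuousAt, tendsto_iff_dist_tendsto_zero]
    have hne : 1 - t * t ≠ 0 := by nlinarith [ht.1, ht.2]
    have hc : Tendsto (fun s : ℝ => (1 + 1) * |s - t| / (1 - t * s)) (𝓝 t) (𝓝 0) := by
      have : ContinuousAt (fun s : ℝ => (1 + 1) * |s - t| / (1 - t * s)) t := by
        apply ContinuousAt.div <;> first | fun_prop | assumption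
      simpa using this.tendsto
    exact squeeze_zero' (Eventually.of_forall fun _ => dist_nonneg)
      (this.mono fun s hs => by rw [Real.dist_eq]; exact hs) hc
  · simp [artanh]
  · intro t ht
    exact (artanh_deriv ht.1 (ht.2.trans_lt h1)).continuousAt.continuousWithinAt
  · intro t ht
    exact (artanh_deriv ht.1 (ht.2.trans h1)).hasDerivWithinAt
  · intro t ht r hr
    have hp : 0 < 1 - t * t := by nlinarith [ht.1, ht.2]
    have hlim : Tendsto (fun ε : ℝ => (1 + ε) / (1 - t * t)) (𝓝[>] 0) (𝓝 ((1 + 0) / (1 - t * t))) := by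
      apply Tendsto.mono_left _ nhdsWithin_le_nhds
      exact Continuous.tendsto (by fun_prop) 0
    obtain ⟨ε, hε1, hε⟩ := ((hlim.eventually (gt_mem_nhds (by simpa using hr))).and
      self_mem_nhdsWithin).exists
    have hE := subunit_real hU hd hm ht.1 (ht.2.trans h1) hε
    have hc : ∀ᶠ s : ℝ in 𝓝 t, (1 + ε) / (1 - t * s) < r := by
      have : ContinuousAt (fun s : ℝ => (1 + ε) / (1 - t * s)) t := by
        apply ContinuousAt.div <;> first | fun_prop | exact hp.ne'
      exact this.eventually (gt_mem_nhds hε1)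
    apply Eventually.frequently
    filter_upwards [nhdsWithin_le_nhds hE, nhdsWithin_le_nhds hc, self_mem_nhdsWithin] with s h2 h3 h4
    have h4' : 0 < s - t := sub_pos.2 h4
    rw [slope_def_field]
    refine lt_of_le_of_lt ?_ h3
    rw [div_le_iff₀ h4']
    have := (le_abs_self _).trans h2
    rw [abs_of_pos h4'] at this
    calc _ = U (φ s) - U (φ t) := by ring
      _ ≤ _ := this
      _ = _ := by ring

lemma subunit_disc {Ω : Set E} {U : E → ℝ} (hU : Subunit Ω U) {φ : ℂ → E}
    (hd : DifferentiableOn ℂ φ (ball 0 1)) (hm : MapsTo φ (ball 0 1) Ω)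
    {α : ℂ} (h1 : ‖α‖ < 1) : U (φ α) - U (φ 0) ≤ artanh ‖α‖ := by
  by_cases h : α = 0
  · subst h; simp [artanh]
  have hn : ‖α‖ ≠ 0 := norm_ne_zero_iff.2 h
  set u : ℂ := α / ‖α‖ with hu
  have hu1 : ‖u‖ = 1 := by rw [hu, norm_div]; simp [hn]
  have hmap : MapsTo (fun ζ : ℂ => ζ * u) (ball 0 1) (ball 0 1) := by
    intro ζ hζ; simpa [hu1] using hζ
  have := subunit_disc_real hU (φ := fun ζ => φ (ζ * u)) (hd.comp (by fun_prop) hmap)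
    (hm.comp hmap) (norm_nonneg α) h1
  have e : (‖α‖ : ℂ) * u = α := by
    rw [hu]; exact mul_div_cancel₀ _ (by exact_mod_cast hn)
  simpa [e] using this

/-- Any two points are joined by a disc. -/
def DiscConn (Ω : Set E) : Prop := ∀ x ∈ Ω, ∀ y ∈ Ω, ∃ α : ℂ, ‖α‖ < 1 ∧
    (∃ φ : ℂ → E, DifferentiableOn ℂ φ (ball 0 1) ∧ MapsTo φ (ball 0 1) Ω ∧
      φ 0 = x ∧ φ α = y)

lemma subunit_kob {Ω : Set E} {U : E → ℝ} (hU : Subunit Ω U) (hc : DiscConn Ω)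
    {z w : E} (hz : z ∈ Ω) (hw : w ∈ Ω) : U w - U z ≤ kobayashi Ω z w := by
  apply kob_lower _ hz hw
  intro x hx y hy
  obtain ⟨α, h1, φ, h2⟩ := hc x hx y hy
  refine le_csInf (s := { r : ℝ | ∃ α : ℂ, ‖α‖ < 1 ∧
    (∃ φ : ℂ → E, DifferentiableOn ℂ φ (ball 0 1) ∧ MapsTo φ (ball 0 1) Ω ∧
      φ 0 = x ∧ φ α = y) ∧ r = artanh ‖α‖ }) ⟨_, α, h1, ⟨φ, h2⟩, rfl⟩ ?_
  rintro r ⟨α, h1, ⟨φ, hd, hm, rfl, rfl⟩, rfl⟩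
  exact subunit_disc hU hd hm h1

lemma hp_identity (b β : ℂ) : ‖b + starRingEnd ℂ β‖ ^ 2 - ‖b - β‖ ^ 2 = 4 * b.re * β.re := by
  rw [← Complex.normSq_eq_norm_sq, ← Complex.normSq_eq_norm_sq]
  simp only [Complex.normSq_apply, Complex.add_re, Complex.add_im, Complex.sub_re,
      Complex.sub_im, Complex.conj_re, Complex.conj_im]
  ring

lemma hp_schwarz {b : ℂ → ℂ} {s : ℝ} (hd : DifferentiableOn ℂ b (ball 0 s))
    (hpos : ∀ ζ ∈ ball (0:ℂ) s, 0 < (b ζ).re) {ζ : ℂ} (hζ : ζ ∈ ball (0:ℂ) s) :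
    s * ‖b ζ - b 0‖ ≤ ‖ζ‖ * ‖b ζ + starRingEnd ℂ (b 0)‖ := by
  have hs : 0 < s := nonempty_ball.1 ⟨_, hζ⟩
  have h0 := hpos 0 (by simpa using hs)
  have hne : ∀ ζ ∈ ball (0:ℂ) s, b ζ + starRingEnd ℂ (b 0) ≠ 0 := by
    intro ζ hζ h
    have := congrArg Complex.re h
    simp at this
    have := hpos ζ hζ
    linarith
  have := Complex.dist_le_div_mul_dist_of_mapsTo_ball (c := (0:ℂ)) (R₁ := s) (R₂ := 1)
    (f := fun ζ => (b ζ - b 0) / (b ζ + starRingEnd ℂ (b 0))) (z := ζ) ?_ ?_ hζ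
  · simp only [sub_self, zero_div, dist_zero_right, norm_div] at this
    have h2 := norm_pos_iff.2 (hne ζ hζ)
    rw [div_le_iff₀ h2] at this
    calc s * ‖b ζ - b 0‖ ≤ s * (1 / s * ‖ζ‖ * ‖b ζ + starRingEnd ℂ (b 0)‖) := by gcongr
      _ = _ := by field_simp
  · exact (hd.sub_const _).div (hd.add_const _) hne
  · intro ζ hζ
    simp only [sub_self, zero_div, mem_closedBall, dist_zero_right, norm_div]
    apply div_le_one_of_le₀ _ (norm_nonneg _)
    apply le_of_sq_le_sq _ (norm_nonneg _)
    have := hp_identity (b ζ) (b 0)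
    have := mul_pos (hpos ζ hζ) h0
    linarith

lemma hp_harnack {b : ℂ → ℂ} {s : ℝ} (hd : DifferentiableOn ℂ b (ball 0 s))
    (hpos : ∀ ζ ∈ ball (0:ℂ) s, 0 < (b ζ).re) {ζ : ℂ} (hζ : ζ ∈ ball (0:ℂ) s) :
    (s - ‖ζ‖) * (b ζ).re ≤ s * (4 * (b 0).re) := by
  have hs : 0 < s := nonempty_ball.1 ⟨_, hζ⟩
  have hζ' : ‖ζ‖ < s := by simpa using hζ
  have h0 := hpos 0 (by simpa using hs)
  have h1 := hpos ζ hζ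
  have hS := hp_schwarz hd hpos hζ
  have hI := hp_identity (b ζ) (b 0)
  set X := ‖b ζ + starRingEnd ℂ (b 0)‖
  set Y := ‖b ζ - b 0‖
  have hX : (b ζ).re ≤ X := by
    have := Complex.re_le_norm (b ζ + starRingEnd ℂ (b 0))
    simp at this
    linarith
  have hY : 0 ≤ Y := norm_nonneg _
  have hn := norm_nonneg ζ
  have h2 : (s * Y) ^ 2 ≤ (‖ζ‖ * X) ^ 2 := by gcongr
  have h3 : (s ^ 2 - ‖ζ‖ ^ 2) * X ^ 2 ≤ s ^ 2 * (4 * (b ζ).re * (b 0).re) := by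
    rw [← hI]; nlinarith
  have h4 : (s - ‖ζ‖) * s ≤ s ^ 2 - ‖ζ‖ ^ 2 := by nlinarith
  have h5 : (s - ‖ζ‖) * s * ((b ζ).re ^ 2) ≤ s ^ 2 * (4 * (b ζ).re * (b 0).re) := by
    refine le_trans ?_ h3
    have : (b ζ).re ^ 2 ≤ X ^ 2 := by gcongr
    have h6 : 0 ≤ s ^ 2 - ‖ζ‖ ^ 2 := by nlinarith
    calc _ ≤ (s ^ 2 - ‖ζ‖ ^ 2) * (b ζ).re ^ 2 := by gcongr
      _ ≤ _ := by gcongr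
  have h6 : (s * (b ζ).re) * ((s - ‖ζ‖) * (b ζ).re) ≤ (s * (b ζ).re) * (s * (4 * (b 0).re)) := by
    nlinarith
  exact le_of_mul_le_mul_left h6 (by positivity)

end P2


section P3
open Filter Topology
variable {E : Type*} [NormedAddCommGroup E] [NormedSpace ℂ E]

/-- thin disc around the unit interval -/
lemma thin_disc {ε : ℝ} (hε : 0 < ε) : ∃ (h : ℂ → ℂ) (α : ℂ), ‖α‖ < 1 ∧ h 0 = 1 ∧ h α = 0 ∧
    DifferentiableOn ℂ h (ball 0 1) ∧
    ∀ ζ ∈ ball (0:ℂ) 1, ∃ t : ℝ, 0 ≤ t ∧ t ≤ 1 ∧ dist (h ζ) t < ε := by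
  obtain ⟨κ, hκ0, hκ1, hκ2⟩ : ∃ κ : ℝ, 0 < κ ∧ κ ≤ 1 ∧ κ ≤ ε / 32 :=
    ⟨min 1 (ε / 32), by positivity, min_le_left _ _, min_le_right _ _⟩
  obtain ⟨τ, hτ0, hτ1, hτ2⟩ : ∃ κ : ℝ, 0 < κ ∧ κ ≤ 1 / 2 ∧ κ ≤ ε / 24 :=
    ⟨min (1 / 2) (ε / 24), by positivity, min_le_left _ _, min_le_right _ _⟩
  have hτne : (1 - τ : ℂ) ≠ 0 := by
    have : (1 - τ : ℝ) ≠ 0 := by linarith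
    exact_mod_cast this
  have hlog : Real.log τ / κ < 0 := div_neg_of_neg_of_pos (Real.log_neg hτ0 (by linarith)) hκ0
  refine ⟨fun ζ => (Complex.exp (κ * Complex.log (1 - ζ)) - τ) / (1 - τ),
    ((1 - Real.exp (Real.log τ / κ) : ℝ) : ℂ), ?_, ?_, ?_, ?_, ?_⟩
  · rw [Complex.norm_real, Real.norm_eq_abs, abs_lt]
    have h1 := Real.exp_pos (Real.log τ / κ)
    have h2 : Real.exp (Real.log τ / κ) < 1 := by simpa using hlog
    constructor <;> linarith
  · simp [hτne]
  · have : (1 - ((1 - Real.exp (Real.log τ / κ) : ℝ) : ℂ)) = ((Real.exp (Real.log τ / κ) : ℝ) : ℂ) := by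
      push_cast; ring
    beta_reduce
    rw [this, ← Complex.ofReal_log (Real.exp_pos _).le, Real.log_exp, ← Complex.ofReal_mul,
      ← Complex.ofReal_exp, mul_div_cancel₀ _ hκ0.ne', Real.exp_log hτ0]
    simp
  · apply DifferentiableOn.div_const
    apply DifferentiableOn.sub_const
    apply DifferentiableOn.cexp
    apply DifferentiableOn.const_mul
    apply DifferentiableOn.clog
    · fun_prop
    · intro ζ hζ
      left
      have h1 : ‖ζ‖ < 1 := by simpa using hζ
      have := Complex.re_le_norm ζ
      simp; linarith
  · intro ζ hζ
    have h1 : ‖ζ‖ < 1 := by simpa using hζ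
    have hne : (1 - ζ) ≠ 0 := by
      intro h
      have : ζ = 1 := by linear_combination -h
      simp [this] at h1
    set r : ℝ := Real.exp (κ * Real.log ‖1 - ζ‖) with hr
    set θ : ℝ := κ * (1 - ζ).arg with hθ
    have hg : Complex.exp (κ * Complex.log (1 - ζ)) = r * Complex.exp (Complex.I * θ) := by
      rw [hr, Complex.ofReal_exp, ← Complex.exp_add]
      congr 1
      rw [Complex.log, hθ]
      push_cast
      ring
    have hr0 : 0 < r := Real.exp_pos _
    have hn2 : ‖1 - ζ‖ ≤ 2 := by
      have := norm_sub_le (1:ℂ) ζ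
      simp at this; linarith
    have hrk : r ≤ 1 + 2 * κ := by
      have h2 : κ * Real.log ‖1 - ζ‖ ≤ κ := by
        have : Real.log ‖1 - ζ‖ ≤ ‖1 - ζ‖ - 1 := Real.log_le_sub_one_of_pos (norm_pos_iff.2 hne)
        nlinarith
      have h3 : r ≤ Real.exp κ := Real.exp_le_exp.2 h2
      have h4 := Real.abs_exp_sub_one_le (x := κ) (by rw [abs_of_pos hκ0]; exact hκ1)
      rw [abs_of_pos hκ0] at h4
      have := le_abs_self (Real.exp κ - 1)
      linarith
    have hθb : |θ| ≤ κ * 4 := by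
      rw [hθ, abs_mul, abs_of_pos hκ0]
      have := Complex.abs_arg_le_pi (1 - ζ)
      have := Real.pi_le_four
      gcongr
      linarith
    refine ⟨min r 1, by positivity, min_le_right _ _, ?_⟩
    beta_reduce
    rw [hg, dist_eq_norm]
    set e := Complex.exp (Complex.I * θ) with he
    have he1 : ‖e‖ = 1 := by
      rw [he, mul_comm, Complex.norm_exp_ofReal_mul_I]
    have he2 : ‖e - 1‖ ≤ |θ| := by
      have := Real.norm_exp_I_mul_ofReal_sub_one_le (x := θ)
      simpa [he] using this
    have e1 : ((r * e - τ) / (1 - τ) - (min r 1 : ℝ) : ℂ) =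
        (τ / (1 - τ)) * (r * e - 1) + r * (e - 1) + ((r - min r 1 : ℝ) : ℂ) := by
      field_simp
      push_cast
      ring
    rw [e1]
    have b1 : ‖((τ:ℂ) / (1 - τ)) * (r * e - 1)‖ ≤ 2 * τ * 4 := by
      rw [norm_mul]
      gcongr
      · have : ((τ:ℂ) / (1 - τ)) = ((τ / (1 - τ) : ℝ) : ℂ) := by push_cast; rfl
        rw [this, Complex.norm_real, Real.norm_eq_abs, abs_of_nonneg (by apply div_nonneg <;> linarith),
          div_le_iff₀ (by linarith)]
        nlinarith
      · have := norm_sub_le ((r:ℂ) * e) 1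
        rw [norm_mul, he1, Complex.norm_real, Real.norm_eq_abs, abs_of_pos hr0] at this
        simp at this
        linarith
    have b2 : ‖(r:ℂ) * (e - 1)‖ ≤ 3 * (κ * 4) := by
      rw [norm_mul, Complex.norm_real, Real.norm_eq_abs, abs_of_pos hr0]
      gcongr
      · linarith
      · exact he2.trans hθb
    have b3 : ‖((r - min r 1 : ℝ) : ℂ)‖ ≤ 2 * κ := by
      rw [Complex.norm_real, Real.norm_eq_abs, abs_le]
      rcases le_total r 1 with h | h
      · rw [min_eq_left h]; constructor <;> linarith
      · rw [min_eq_right h]; constructor <;> linarith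
    have b4 := norm_add₃_le (a := ((τ:ℂ) / (1 - τ)) * (r * e - 1)) (b := (r:ℂ) * (e - 1))
      (c := ((r - min r 1 : ℝ) : ℂ))
    linarith

lemma disc_conn {Ω : Set E} (hΩ : IsOpen Ω) (hc : IsConnected Ω) : DiscConn Ω := by
  intro x hx y hy
  have hp : IsPathConnected Ω := (hΩ.isConnected_iff_isPathConnected).1 hc
  obtain ⟨γ, hγ⟩ := hp.joinedIn y hy x hx
  let f : C(unitInterval, E) := γ.toContinuousMap
  have hK : IsCompact (range f) := isCompact_range f.continuous
  obtain ⟨ε, hε, hεs⟩ := hK.exists_thickening_subset_open hΩ (by rintro _ ⟨t, rfl⟩; exact hγ t)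
  have hB := bernsteinApproximation_uniform f
  rw [Metric.tendsto_nhds] at hB
  obtain ⟨n, hn, hn0⟩ := ((hB ε hε).and (eventually_gt_atTop 0)).exists
  let P : ℂ → E := fun ζ => ∑ k : Fin (n + 1),
    ((n.choose k : ℂ) * ζ ^ (k:ℕ) * (1 - ζ) ^ (n - (k:ℕ))) • f (bernstein.z k)
  have hP : Differentiable ℂ P := by
    intro ζ
    apply DifferentiableAt.fun_sum
    intro k _
    apply DifferentiableAt.smul_const
    fun_prop
  have hPt : ∀ t : unitInterval, P ((t:ℝ):ℂ) = bernsteinApproximation n f t := by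
    intro t
    rw [bernsteinApproximation.apply]
    apply Finset.sum_congr rfl
    intro k _
    rw [bernstein_apply, ← Complex.coe_smul]
    push_cast
    rfl
  have hPΩ : ∀ t : ℝ, 0 ≤ t → t ≤ 1 → P (t:ℂ) ∈ Ω := by
    intro t h0 h1
    have := hPt ⟨t, h0, h1⟩
    rw [show (t:ℂ) = (((⟨t, h0, h1⟩ : unitInterval) : ℝ) : ℂ) from rfl, this]
    apply hεs
    rw [mem_thickening_iff]
    refine ⟨f ⟨t, h0, h1⟩, ⟨_, rfl⟩, ?_⟩
    exact (ContinuousMap.dist_apply_le_dist _).trans_lt hn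
  have hP0 : P 0 = y := by
    have := hPt 0
    rw [bernsteinApproximation.apply_zero] at this
    simpa [f] using this
  have hP1 : P 1 = x := by
    have := hPt 1
    rw [bernsteinApproximation.apply_one hn0.ne'] at this
    simpa [f] using this
  have hK2 : IsCompact ((fun t : ℝ => (t:ℂ)) '' Icc 0 1) := isCompact_Icc.image Complex.continuous_ofReal
  obtain ⟨ε', hε', hεs'⟩ := hK2.exists_thickening_subset_open (hΩ.preimage hP.continuous)
    (by rintro _ ⟨t, ht, rfl⟩; exact hPΩ t ht.1 ht.2)
  obtain ⟨h, α, hα, h0, h1, hd, ht⟩ := thin_disc hε'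
  refine ⟨α, hα, fun ζ => P (h ζ), hP.comp_differentiableOn hd, ?_, by simp [h0, hP1], by simp [h1, hP0]⟩
  intro ζ hζ
  obtain ⟨t, t0, t1, hd⟩ := ht ζ hζ
  apply hεs'
  rw [mem_thickening_iff]
  exact ⟨t, ⟨t, ⟨t0, t1⟩, rfl⟩, hd⟩

end P3


section P4
open Filter Topology
variable {E : Type*} [NormedAddCommGroup E] [NormedSpace ℂ E]

/-- Uniform quantitative data near a strictly pseudoconvex boundary piece `K` of `Ω`. -/
structure BD (Ω K : Set E) (ρ : E → ℝ) (lam : E → E →L[ℂ] ℂ) (a : E → E → ℂ)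
    (η c M : ℝ) : Prop where
  η_pos : 0 < η
  c_pos : 0 < c
  M_one : 1 ≤ M
  diam : ∀ x ∈ Ω, ∀ y ∈ Ω, dist x y ≤ M
  notmem : ∀ p ∈ K, p ∉ Ω
  zero : ∀ p ∈ K, ρ p = 0
  near : ∀ p ∈ K, ∀ x, dist x p < η → (x ∈ Ω ↔ ρ x < 0)
  proj : ∀ x ∈ Ω, ∀ q ∈ K, dist x q < η → ∃ p ∈ K, dist x p ≤ M * (-ρ x)
  lamLip : ∀ z w, ‖lam z - lam w‖ ≤ M * ‖z - w‖
  lamB : ∀ z, ‖lam z‖ ≤ M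
  taylor : ∀ z v, |ρ (z + v) - ρ z - (lam z v).re| ≤ M * ‖v‖ ^ 2
  nu : ∀ p ∈ K, ∀ z, dist z p < η → ∃ ν, lam z ν = -1 ∧ ‖ν‖ ≤ M
  adiff : ∀ p ∈ K, Differentiable ℂ (a p)
  aapp : ∀ p ∈ K, ∀ x, ‖a p x + lam p (x - p)‖ ≤ M * ‖x - p‖ ^ 2
  apos : ∀ p ∈ K, ∀ x ∈ Ω, dist x p < η → c * ‖x - p‖ ^ 2 ≤ (a p x).re

variable {Ω K : Set E} {ρ : E → ℝ} {lam : E → E →L[ℂ] ℂ} {a : E → E → ℂ} {η c M : ℝ}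

lemma BD.apos' (H : BD Ω K ρ lam a η c M) {p x : E} (hp : p ∈ K) (hx : x ∈ Ω)
    (hd : dist x p < η) : 0 < (a p x).re := by
  have h1 := H.apos p hp x hx hd
  have h2 : 0 < ‖x - p‖ := by
    rw [norm_pos_iff, sub_ne_zero]
    rintro rfl
    exact H.notmem _ hp hx
  have := H.c_pos
  have : 0 < c * ‖x - p‖ ^ 2 := by positivity
  linarith

lemma BD.localization (H : BD Ω K ρ lam a η c M) : ∃ C > 0, ∀ φ : ℂ → E,
    DifferentiableOn ℂ φ (ball 0 1) → MapsTo φ (ball 0 1) Ω → ∀ p ∈ K, dist (φ 0) p < η / 2 →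
    ∀ ζ, ‖ζ‖ < 1 → ‖ζ‖ < 1 - C * (a p (φ 0)).re → dist (φ ζ) p < η := by
  have hη := H.η_pos
  have hc := H.c_pos
  have hM := H.M_one
  set κ : ℝ := η / (2 * (M + η)) with hκ
  have hκ0 : 0 < κ := by positivity
  have hκ1 : κ < 1 / 2 := by rw [hκ, div_lt_div_iff₀ (by positivity) (by norm_num)]; linarith
  have hκM : M * κ ≤ η / 2 := by
    rw [hκ, ← mul_div_assoc, div_le_div_iff₀ (by positivity) (by norm_num)]; nlinarith
  refine ⟨16 / (κ * c * η ^ 2), by positivity, ?_⟩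
  intro φ hd hm p hp h0 ζ1 hζ1 hζ2
  by_contra hcon
  push Not at hcon
  have hcont : ContinuousOn φ (ball 0 1) := hd.continuousOn
  -- minimal modulus
  have hsub : closedBall (0:ℂ) ‖ζ1‖ ⊆ ball 0 1 := closedBall_subset_ball hζ1
  have hcl : IsCompact {ζ ∈ closedBall (0:ℂ) ‖ζ1‖ | η ≤ dist (φ ζ) p} := by
    have hcc : ContinuousOn (fun ζ => dist (φ ζ) p) (closedBall (0:ℂ) ‖ζ1‖) :=
      (continuous_id.dist continuous_const).comp_continuousOn (hcont.mono hsub)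
    have := hcc.preimage_isClosed_of_isClosed isClosed_closedBall (isClosed_Ici (a := η))
    exact (isCompact_closedBall (0:ℂ) ‖ζ1‖).of_isClosed_subset this inter_subset_left
  obtain ⟨ζ0, ⟨hζ0a, hζ0b⟩, hmin⟩ := hcl.exists_isMinOn ⟨ζ1, by simp, hcon⟩
    (continuous_norm.continuousOn)
  set t := ‖ζ0‖ with ht
  have ht1 : t ≤ ‖ζ1‖ := by simpa using hζ0a
  have htlt : t < 1 := by linarith
  have hin : ∀ ζ : ℂ, ‖ζ‖ < t → dist (φ ζ) p < η := by
    intro ζ hζ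
    by_contra hh
    push Not at hh
    have : t ≤ ‖ζ‖ := hmin (a := ζ) ⟨by simp; linarith, hh⟩
    linarith
  have hball : ball ζ0 (1 - t) ⊆ ball (0:ℂ) 1 := by
    apply ball_subset_ball'
    simp [← ht]
  have hζ0m : ζ0 ∈ ball (0:ℂ) 1 := by simpa using htlt
  have hlip : ∀ ζ ∈ ball ζ0 (1 - t), dist (φ ζ) (φ ζ0) ≤ M / (1 - t) * dist ζ ζ0 := by
    intro ζ hζ
    apply Complex.dist_le_div_mul_dist_of_mapsTo_ball (hd.mono hball) _ hζ
    intro ξ hξ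
    exact H.diam _ (hm (hball hξ)) _ (hm hζ0m)
  have hlip2 : ∀ ζ, dist ζ ζ0 ≤ κ * (1 - t) → η / 2 ≤ dist (φ ζ) p := by
    intro ζ hζ
    have h1 : ζ ∈ ball ζ0 (1 - t) := by
      rw [mem_ball]; nlinarith
    have h2 := hlip ζ h1
    have h3 : M / (1 - t) * dist ζ ζ0 ≤ M / (1 - t) * (κ * (1 - t)) := by
      have : 0 < 1 - t := by linarith
      gcongr
    have h4 : M / (1 - t) * (κ * (1 - t)) = M * κ := by
      have : 1 - t ≠ 0 := by linarith
      field_simp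
    have h5 := dist_triangle (φ ζ0) (φ ζ) p
    rw [dist_comm (φ ζ0) (φ ζ)] at h5
    linarith
  have hbig : κ * (1 - t) < t := by
    by_contra hh
    push Not at hh
    have := hlip2 0 (by rw [dist_zero_left]; exact hh)
    linarith
  have htpos : 0 < t := lt_of_le_of_lt (by nlinarith) hbig
  set ζ' : ℂ := ((1 - κ * (1 - t) / t : ℝ) : ℂ) * ζ0 with hζ'
  have hfac : 0 < 1 - κ * (1 - t) / t := by
    rw [sub_pos, div_lt_one htpos]; exact hbig
  have hn' : ‖ζ'‖ = t - κ * (1 - t) := by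
    rw [hζ', norm_mul, Complex.norm_real, Real.norm_eq_abs, abs_of_pos hfac, ← ht]
    field_simp
  have hd' : dist ζ' ζ0 ≤ κ * (1 - t) := by
    have : ζ' - ζ0 = ((- (κ * (1 - t) / t) : ℝ) : ℂ) * ζ0 := by
      rw [hζ']; push_cast; ring
    rw [dist_eq_norm, this, norm_mul, Complex.norm_real, Real.norm_eq_abs, abs_neg,
      abs_of_nonneg (by apply div_nonneg <;> nlinarith), ← ht]
    apply le_of_eq
    field_simp
  have hpos : 0 < κ * (1 - t) := by nlinarith
  have hbsub : ball (0:ℂ) t ⊆ ball 0 1 := ball_subset_ball htlt.le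
  have hζ'm : ζ' ∈ ball (0:ℂ) t := by
    rw [mem_ball, dist_zero_right, hn']; linarith
  have hη' := hlip2 ζ' hd'
  have hhar := hp_harnack (b := fun ζ => a p (φ ζ)) (s := t)
    ((H.adiff p hp).comp_differentiableOn (hd.mono hbsub))
    (fun ζ hζ => H.apos' hp (hm (hbsub hζ)) (hin ζ (by simpa using hζ))) hζ'm
  have h6 := H.apos p hp (φ ζ') (hm (hbsub hζ'm)) (hin ζ' (by simpa using hζ'm))
  have h7 : c * (η / 2) ^ 2 ≤ (a p (φ ζ')).re := by
    refine le_trans ?_ h6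
    rw [← dist_eq_norm]
    gcongr
  rw [hn'] at hhar
  have h00 := H.apos' hp (hm (by simp : (0:ℂ) ∈ ball (0:ℂ) 1)) (by linarith)
  have h8 : κ * (1 - t) * (c * (η / 2) ^ 2) ≤ 4 * (a p (φ 0)).re := by
    calc _ ≤ (t - (t - κ * (1 - t))) * (a p (φ ζ')).re := by
          rw [sub_sub_cancel]; gcongr
      _ ≤ t * (4 * (a p (φ 0)).re) := hhar
      _ ≤ 1 * (4 * (a p (φ 0)).re) := by gcongr
      _ = _ := one_mul _
  have h9 : 1 - t ≤ 16 / (κ * c * η ^ 2) * (a p (φ 0)).re := by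
    rw [div_mul_eq_mul_div, le_div_iff₀ (by positivity)]
    nlinarith
  linarith

/-- profile -/
noncomputable def Psi (C s : ℝ) : ℝ := (Real.log s - C * s) / 2

open Classical in
/-- truncated local peak gauge -/
noncomputable def uf (a : E → E → ℂ) (η C m : ℝ) (p x : E) : ℝ :=
  if dist x p < η then Psi C (min ‖a p x‖ m) else Psi C m

lemma Psi_deriv {C s : ℝ} (hs : 0 < s) : HasDerivAt (Psi C) ((1 / s - C) / 2) s := by
  have h1 := (Real.hasDerivAt_log hs.ne').sub ((hasDerivAt_id s).const_mul C)
  have h2 := h1.div_const 2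
  refine h2.congr_deriv ?_
  simp

lemma Psi_local {C s d ε : ℝ} (hs : 0 < s) (hd : d = (1 / s - C) / 2) (hd0 : 0 ≤ d) (hε : 0 < ε) :
    ∀ᶠ y in 𝓝 s, |Psi C y - Psi C s| ≤ (d + ε) * |y - s| := by
  have h := (Psi_deriv (C := C) hs).isLittleO
  filter_upwards [h.def hε] with y hy
  simp only [Real.norm_eq_abs] at hy
  rw [← hd] at hy
  simp only [smul_eq_mul] at hy
  have h2 := abs_sub_abs_le_abs_sub (Psi C y - Psi C s) ((y - s) * d)
  rw [abs_mul, abs_of_nonneg hd0] at h2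
  linarith

/-- the localization constant together with smallness of the level -/
structure Loc (Ω K : Set E) (a : E → E → ℂ) (η c C m : ℝ) : Prop where
  C_pos : 0 < C
  m_pos : 0 < m
  hCm : C * m < 1
  hm : m < c * (η / 4) ^ 2
  loc : ∀ φ : ℂ → E,
    DifferentiableOn ℂ φ (ball 0 1) → MapsTo φ (ball 0 1) Ω → ∀ p ∈ K, dist (φ 0) p < η / 2 →
    ∀ ζ, ‖ζ‖ < 1 → ‖ζ‖ < 1 - C * (a p (φ 0)).re → dist (φ ζ) p < η

lemma uf_active (H : BD Ω K ρ lam a η c M) {C m : ℝ} (L : Loc Ω K a η c C m) {φ : ℂ → E}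
    (hd : DifferentiableOn ℂ φ (ball 0 1)) (hm : MapsTo φ (ball 0 1) Ω) {p : E} (hp : p ∈ K)
    (h1 : dist (φ 0) p < η / 2) (h2 : ‖a p (φ 0)‖ ≤ m) {ε : ℝ} (hε : 0 < ε) :
    ∀ᶠ ζ in 𝓝 (0:ℂ), |uf a η C m p (φ ζ) - uf a η C m p (φ 0)| ≤ (1 + ε) * ‖ζ‖ := by
  have hη := H.η_pos
  have hC := L.C_pos
  have h0m : φ 0 ∈ Ω := hm (by simp)
  set β := a p (φ 0) with hβ
  have hβre : 0 < β.re := H.apos' hp h0m (by linarith)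
  have hβn : 0 < ‖β‖ := lt_of_lt_of_le hβre (Complex.re_le_norm β)
  have hCβ : C * ‖β‖ < 1 := lt_of_le_of_lt (by gcongr) L.hCm
  set s := 1 - C * β.re with hs
  have hs0 : 1 - C * ‖β‖ ≤ s := by
    have : C * β.re ≤ C * ‖β‖ := by gcongr; exact Complex.re_le_norm β
    linarith
  have hspos : 0 < s := by linarith
  have hs1 : s ≤ 1 := by
    have : 0 < C * β.re := by positivity
    linarith
  have hbsub : ball (0:ℂ) s ⊆ ball 0 1 := ball_subset_ball hs1
  have hin : ∀ ζ ∈ ball (0:ℂ) s, dist (φ ζ) p < η := by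
    intro ζ hζ
    have : ‖ζ‖ < s := by simpa using hζ
    exact L.loc φ hd hm p hp h1 ζ (by linarith) this
  have hbd : DifferentiableOn ℂ (fun ζ => a p (φ ζ)) (ball 0 s) :=
    (H.adiff p hp).comp_differentiableOn (hd.mono hbsub)
  have hsch : ∀ ζ ∈ ball (0:ℂ) s, s * ‖a p (φ ζ) - β‖ ≤ ‖ζ‖ * ‖a p (φ ζ) + starRingEnd ℂ β‖ :=
    fun ζ hζ => hp_schwarz hbd (fun ζ hζ => H.apos' hp (hm (hbsub hζ)) (hin ζ hζ)) hζ
  have hbc : ContinuousAt (fun ζ => a p (φ ζ)) 0 :=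
    hbd.continuousOn.continuousAt (ball_mem_nhds _ hspos)
  set d := (1 / ‖β‖ - C) / 2 with hdd
  have hd2 : d * (2 * ‖β‖) = 1 - C * ‖β‖ := by rw [hdd]; field_simp
  have hd0 : 0 ≤ d := by
    by_contra hh
    push Not at hh
    nlinarith
  set ε1 := ε * (1 - C * ‖β‖) / (4 * ‖β‖) with hε1
  have hε1p : 0 < ε1 := by
    have : 0 < 1 - C * ‖β‖ := by linarith
    positivity
  have hPl := Psi_local hβn hdd hd0 hε1p
  have htend : Tendsto (fun ζ => min ‖a p (φ ζ)‖ m) (𝓝 0) (𝓝 ‖β‖) := by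
    have : ContinuousAt (fun ζ => min ‖a p (φ ζ)‖ m) 0 := hbc.norm.min continuousAt_const
    have h := this.tendsto
    rwa [← hβ, min_eq_left h2] at h
  have hlim : ∀ᶠ ζ in 𝓝 (0:ℂ), (d + ε1) * ‖a p (φ ζ) + starRingEnd ℂ β‖ < (1 + ε) * s := by
    have hcc : ContinuousAt (fun ζ => (d + ε1) * ‖a p (φ ζ) + starRingEnd ℂ β‖) 0 :=
      continuousAt_const.mul (hbc.add continuousAt_const).norm
    apply hcc.eventually (gt_mem_nhds _)
    have e1 : a p (φ 0) + starRingEnd ℂ β = ((2 * β.re : ℝ) : ℂ) := by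
      rw [← hβ, Complex.add_conj]
    beta_reduce
    rw [e1, Complex.norm_real, Real.norm_eq_abs, abs_of_pos (by positivity)]
    have e2 : ε1 * (2 * ‖β‖) = ε / 2 * (1 - C * ‖β‖) := by rw [hε1]; field_simp; ring
    calc (d + ε1) * (2 * β.re) ≤ (d + ε1) * (2 * ‖β‖) := by
          gcongr; exact Complex.re_le_norm β
      _ = (1 + ε / 2) * (1 - C * ‖β‖) := by rw [add_mul, hd2, e2]; ring
      _ < (1 + ε) * (1 - C * ‖β‖) := by
          apply mul_lt_mul_of_pos_right <;> linarith
      _ ≤ _ := by gcongr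
  filter_upwards [htend.eventually hPl, hlim, ball_mem_nhds (0:ℂ) hspos] with ζ k1 k2 k3
  unfold uf
  rw [if_pos (hin ζ k3), if_pos (by linarith : dist (φ 0) p < η), ← hβ, min_eq_left h2]
  have k4 : |min ‖a p (φ ζ)‖ m - ‖β‖| ≤ ‖a p (φ ζ) - β‖ := by
    refine le_trans ?_ (abs_norm_sub_norm_le _ _)
    rcases le_total ‖a p (φ ζ)‖ m with h | h
    · rw [min_eq_left h]
    · rw [min_eq_right h, abs_of_nonneg (by linarith), abs_of_nonneg (by linarith)]
      linarith
  have k5 := hsch ζ k3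
  calc _ ≤ _ := k1
    _ ≤ (d + ε1) * ‖a p (φ ζ) - β‖ := by gcongr
    _ = (d + ε1) * (s * ‖a p (φ ζ) - β‖) / s := by field_simp
    _ ≤ (d + ε1) * (‖ζ‖ * ‖a p (φ ζ) + starRingEnd ℂ β‖) / s := by gcongr
    _ = ((d + ε1) * ‖a p (φ ζ) + starRingEnd ℂ β‖) * ‖ζ‖ / s := by ring
    _ ≤ ((1 + ε) * s) * ‖ζ‖ / s := by gcongr
    _ = _ := by field_simp

lemma uf_far (H : BD Ω K ρ lam a η c M) {C m : ℝ} (L : Loc Ω K a η c C m) {p x : E} (hp : p ∈ K)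
    (hx : x ∈ Ω) (h : η / 4 < dist x p) : uf a η C m p x = Psi C m := by
  have hη := H.η_pos
  have hc := H.c_pos
  unfold uf
  split_ifs with hd
  · rw [min_eq_right]
    have h1 := H.apos p hp x hx hd
    rw [← dist_eq_norm] at h1
    have h2 : c * (η / 4) ^ 2 ≤ c * dist x p ^ 2 := by gcongr
    have := Complex.re_le_norm (a p x)
    linarith [L.hm]
  · rfl

lemma uf_inactive (H : BD Ω K ρ lam a η c M) {C m : ℝ} (L : Loc Ω K a η c C m) {φ : ℂ → E}
    (hd : DifferentiableOn ℂ φ (ball 0 1)) (hm : MapsTo φ (ball 0 1) Ω) {p : E} (hp : p ∈ K)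
    (h : ¬ (dist (φ 0) p < η / 2 ∧ ‖a p (φ 0)‖ ≤ m)) :
    ∀ᶠ ζ in 𝓝 (0:ℂ), uf a η C m p (φ ζ) = Psi C m := by
  have hη := H.η_pos
  have hφ : ContinuousAt φ 0 := hd.continuousOn.continuousAt (ball_mem_nhds _ one_pos)
  by_cases h1 : dist (φ 0) p < η / 2
  · have h2 : m < ‖a p (φ 0)‖ := by
      by_contra hh; push Not at hh; exact h ⟨h1, hh⟩
    have hac : ContinuousAt (fun ζ => ‖a p (φ ζ)‖) 0 :=
      ((H.adiff p hp).continuous.continuousAt.comp hφ).norm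
    filter_upwards [hac.eventually (lt_mem_nhds h2)] with ζ hζ
    unfold uf
    rw [min_eq_right hζ.le, ite_self]
  · push Not at h1
    have hdc : ContinuousAt (fun ζ => dist (φ ζ) p) 0 := hφ.dist continuousAt_const
    filter_upwards [hdc.eventually (lt_mem_nhds (by linarith : η / 4 < dist (φ 0) p)),
      ball_mem_nhds (0:ℂ) one_pos] with ζ hζ h2
    exact uf_far H L hp (hm h2) hζ

lemma uf_subunit (H : BD Ω K ρ lam a η c M) {C m : ℝ} (L : Loc Ω K a η c C m) {p : E}
    (hp : p ∈ K) : Subunit Ω (uf a η C m p) := by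
  intro φ hd hm ε hε
  by_cases h : dist (φ 0) p < η / 2 ∧ ‖a p (φ 0)‖ ≤ m
  · exact uf_active H L hd hm hp h.1 h.2 hε
  · have h2 := uf_inactive H L hd hm hp h
    filter_upwards [h2] with ζ hζ
    rw [hζ, h2.self_of_nhds, sub_self, abs_zero]
    positivity

lemma uf_subunit2 (H : BD Ω K ρ lam a η c M) {C m : ℝ} (L : Loc Ω K a η c C m) {p q : E}
    (hp : p ∈ K) (hq : q ∈ K)
    (hdis : ∀ x ∈ Ω, dist x p < η / 2 → ‖a p x‖ ≤ m → dist x q < η / 2 → ‖a q x‖ ≤ m → False) :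
    Subunit Ω (fun x => uf a η C m p x - uf a η C m q x) := by
  intro φ hd hm ε hε
  have h0m : φ 0 ∈ Ω := hm (by simp)
  by_cases h : dist (φ 0) p < η / 2 ∧ ‖a p (φ 0)‖ ≤ m
  · have h2 := uf_inactive H L hd hm hq (fun h' => hdis _ h0m h.1 h.2 h'.1 h'.2)
    filter_upwards [h2, uf_subunit H L hp φ hd hm ε hε] with ζ hζ h3
    rw [hζ, h2.self_of_nhds]
    simpa using h3
  · have h2 := uf_inactive H L hd hm hp h
    filter_upwards [h2, uf_subunit H L hq φ hd hm ε hε] with ζ hζ h3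
    rw [hζ, h2.self_of_nhds, abs_sub_comm]
    simpa using h3

end P4


section P5
open Filter Topology
variable {E : Type*} [NormedAddCommGroup E] [NormedSpace ℂ E]
variable {Ω K : Set E} {ρ : E → ℝ} {lam : E → E →L[ℂ] ℂ} {a : E → E → ℂ} {η c M : ℝ}

/-- the boundary quasi-metric -/
noncomputable def Dq (ρ : E → ℝ) (lam : E → E →L[ℂ] ℂ) (z w : E) : ℝ :=
  -ρ z + -ρ w + ‖z - w‖ ^ 2 + ‖lam z (w - z)‖

/-- neighbourhood of the boundary piece -/
def Nb (Ω K : Set E) (r : ℝ) : Set E := {z | z ∈ Ω ∧ ∃ q ∈ K, dist z q < r}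

lemma BD.lamdiff (H : BD Ω K ρ lam a η c M) (z w v : E) :
    ‖lam z v‖ ≤ ‖lam w v‖ + M * ‖z - w‖ * ‖v‖ := by
  have h1 : lam z v = lam w v + (lam z - lam w) v := by simp
  rw [h1]
  refine (norm_add_le _ _).trans ?_
  gcongr
  exact ((lam z - lam w).le_opNorm v).trans (by gcongr; exact H.lamLip z w)

lemma BD.dq_symm (H : BD Ω K ρ lam a η c M) {z w : E} (hz : ρ z ≤ 0) (hw : ρ w ≤ 0) :
    Dq ρ lam w z ≤ (M + 2) * Dq ρ lam z w := by
  have hM := H.M_one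
  have h := H.lamdiff w z (z - w)
  have e1 : ‖lam z (z - w)‖ = ‖lam z (w - z)‖ := by
    rw [← norm_neg, ← map_neg, neg_sub]
  have e2 : ‖w - z‖ = ‖z - w‖ := norm_sub_rev _ _
  rw [e1, e2] at h
  unfold Dq
  rw [e2]
  have n1 := norm_nonneg (lam z (w - z))
  have n2 := sq_nonneg ‖z - w‖
  nlinarith

lemma BD.dq_tri (H : BD Ω K ρ lam a η c M) {z u w : E} (hz : ρ z ≤ 0) (hu : ρ u ≤ 0)
    (hw : ρ w ≤ 0) :
    Dq ρ lam z w ≤ (M + 2) * (Dq ρ lam z u + Dq ρ lam u w) := by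
  have hM := H.M_one
  have h := H.lamdiff z u (w - u)
  have h1 : ‖lam z (w - z)‖ ≤ ‖lam z (u - z)‖ + ‖lam z (w - u)‖ := by
    have : w - z = (u - z) + (w - u) := by abel
    rw [this, map_add]; exact norm_add_le _ _
  have h2 : ‖z - w‖ ≤ ‖z - u‖ + ‖u - w‖ := norm_sub_le_norm_sub_add_norm_sub _ _ _
  have e2 : ‖w - u‖ = ‖u - w‖ := norm_sub_rev _ _
  rw [e2] at h
  unfold Dq
  have n1 := norm_nonneg (lam z (u - z))
  have n2 := norm_nonneg (lam u (w - u))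
  have n3 := norm_nonneg (z - u)
  have n4 := norm_nonneg (u - w)
  have n5 := norm_nonneg (z - w)
  have k1 : ‖z - w‖ ^ 2 ≤ 2 * ‖z - u‖ ^ 2 + 2 * ‖u - w‖ ^ 2 := by
    nlinarith [sq_nonneg (‖z - u‖ - ‖u - w‖)]
  have k2 : M * ‖z - u‖ * ‖u - w‖ ≤ M * (‖z - u‖ ^ 2 + ‖u - w‖ ^ 2) := by
    rw [mul_assoc]; gcongr
    nlinarith [sq_nonneg (‖z - u‖ - ‖u - w‖), sq_nonneg (‖z - u‖ + ‖u - w‖)]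
  nlinarith

lemma BD.dq_nonneg {z w : E} (hz : ρ z ≤ 0) (hw : ρ w ≤ 0) : 0 ≤ Dq ρ lam z w := by
  unfold Dq
  have n1 := norm_nonneg (lam z (w - z))
  have n2 := sq_nonneg ‖z - w‖
  linarith

lemma BD.dq_le_a (H : BD Ω K ρ lam a η c M) {p x : E} (hp : p ∈ K) (hx : x ∈ Ω)
    (hd : dist x p < η) : Dq ρ lam p x ≤ (2 + (3 * M + 1) / c) * ‖a p x‖ := by
  have hM := H.M_one
  have hc := H.c_pos
  have h1 := H.apos p hp x hx hd
  have h2 := H.aapp p hp x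
  have h3 := H.taylor p (x - p)
  rw [add_sub_cancel, H.zero p hp, sub_zero] at h3
  have h4 := Complex.re_le_norm (a p x)
  have h5 := Complex.abs_re_le_norm (lam p (x - p))
  have h6 : ‖lam p (x - p)‖ ≤ ‖a p x‖ + M * ‖x - p‖ ^ 2 := by
    have : lam p (x - p) = (a p x + lam p (x - p)) - a p x := by ring
    rw [this]
    refine (norm_sub_le _ _).trans ?_
    linarith
  have h7 : ‖x - p‖ ^ 2 ≤ ‖a p x‖ / c := by
    rw [le_div_iff₀ hc]; linarith
  unfold Dq
  rw [H.zero p hp, norm_sub_rev p x]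
  have h8 : (3 * M + 1) * ‖x - p‖ ^ 2 ≤ (3 * M + 1) * (‖a p x‖ / c) := by gcongr
  have e : (2 + (3 * M + 1) / c) * ‖a p x‖ = 2 * ‖a p x‖ + (3 * M + 1) * (‖a p x‖ / c) := by ring
  rw [e]
  have := abs_le.1 h3
  have := abs_le.1 h5
  linarith

lemma BD.a_le_dq (H : BD Ω K ρ lam a η c M) {p x : E} (hp : p ∈ K) (hx : ρ x ≤ 0) :
    ‖a p x‖ ≤ M * Dq ρ lam p x := by
  have hM := H.M_one
  have h2 := H.aapp p hp x
  have h6 : ‖a p x‖ ≤ ‖lam p (x - p)‖ + M * ‖x - p‖ ^ 2 := by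
    have : a p x = (a p x + lam p (x - p)) - lam p (x - p) := by ring
    rw [this]
    refine (norm_sub_le _ _).trans ?_
    linarith
  unfold Dq
  rw [H.zero p hp, norm_sub_rev p x]
  nlinarith [norm_nonneg (lam p (x - p))]

/-- properties of points close to the boundary -/
lemma BD.exists_r (H : BD Ω K ρ lam a η c M) : ∃ r0 > 0, r0 ≤ η / 16 ∧ r0 ≤ 1 ∧ ∀ z ∈ Nb Ω K r0,
    0 < -ρ z ∧ -ρ z ≤ 1 ∧ ∃ p ∈ K, dist z p < η / 4 ∧
      Dq ρ lam z p ≤ (1 + M + M ^ 2) * (-ρ z) ∧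
      ‖a p z‖ ≤ M * (M + 2) * (1 + M + M ^ 2) * (-ρ z) := by
  have hM := H.M_one
  have hη := H.η_pos
  have hr1 : min (1 / (2 * M ^ 2)) (η / (16 * M ^ 2)) ≤ 1 / (2 * M ^ 2) := min_le_left _ _
  have hr2 : min (1 / (2 * M ^ 2)) (η / (16 * M ^ 2)) ≤ η / (16 * M ^ 2) := min_le_right _ _
  set r0 := min (1 / (2 * M ^ 2)) (η / (16 * M ^ 2)) with hr0
  rw [le_div_iff₀ (by positivity)] at hr1 hr2
  have hpos : 0 < r0 := by rw [hr0]; positivity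
  have hM2 : 1 ≤ M ^ 2 := one_le_pow₀ hM
  have hMM : M ≤ M ^ 2 := by nlinarith
  have hrr : r0 ≤ r0 * M ^ 2 := by nlinarith
  refine ⟨r0, hpos, by linarith, by linarith, ?_⟩
  rintro z ⟨hz, q, hq, hd⟩
  have hρ : ρ z < 0 := (H.near q hq z (by linarith)).1 hz
  have hz2 : dist z q < 1 := by linarith
  have h3 := H.taylor q (z - q)
  rw [add_sub_cancel, H.zero q hq, sub_zero] at h3
  have h5 := Complex.abs_re_le_norm (lam q (z - q))
  have h6 : ‖lam q (z - q)‖ ≤ M * ‖z - q‖ := ((lam q).le_opNorm _).trans (by gcongr; exact H.lamB q)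
  rw [dist_eq_norm] at hd hz2
  have n1 := norm_nonneg (z - q)
  have h7 : M * ‖z - q‖ ^ 2 ≤ M * ‖z - q‖ := by gcongr; nlinarith
  have h8 : M * ‖z - q‖ ≤ M * r0 := by gcongr
  have h9 : -ρ z ≤ 2 * (M * r0) := by
    have := abs_le.1 h3
    have := abs_le.1 h5
    linarith
  have hMr : M * r0 ≤ r0 * M ^ 2 := by nlinarith
  obtain ⟨p, hp, hdp⟩ := H.proj z hz q hq (by rw [dist_eq_norm]; linarith)
  have h10 : dist z p ≤ 2 * (r0 * M ^ 2) := by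
    calc _ ≤ _ := hdp
      _ ≤ M * (2 * (M * r0)) := by gcongr
      _ = _ := by ring
  have h11 : Dq ρ lam z p ≤ (1 + M + M ^ 2) * (-ρ z) := by
    unfold Dq
    rw [H.zero p hp]
    rw [dist_eq_norm] at h10 hdp
    have n2 := norm_nonneg (z - p)
    have k1 : ‖lam z (p - z)‖ ≤ M * ‖z - p‖ := by
      rw [norm_sub_rev]
      exact ((lam z).le_opNorm _).trans (by gcongr; exact H.lamB z)
    have k2 : ‖z - p‖ ^ 2 ≤ ‖z - p‖ := by nlinarith
    nlinarith
  refine ⟨by linarith, by linarith, p, hp, by nlinarith, h11, ?_⟩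
  have h12 := H.a_le_dq hp hρ.le
  have h13 := H.dq_symm hρ.le (H.zero p hp).le
  calc _ ≤ _ := h12
    _ ≤ M * ((M + 2) * Dq ρ lam z p) := by gcongr
    _ ≤ M * ((M + 2) * ((1 + M + M ^ 2) * (-ρ z))) := by gcongr
    _ = _ := by ring

lemma BD.exists_loc (H : BD Ω K ρ lam a η c M) : ∃ C m0 : ℝ, 0 < m0 ∧
    ∀ m, 0 < m → m ≤ m0 → Loc Ω K a η c C m := by
  obtain ⟨C, hC, h⟩ := H.localization
  have hη := H.η_pos
  have hc := H.c_pos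
  refine ⟨C, min (1 / (2 * C)) (c * (η / 4) ^ 2 / 2), by positivity, ?_⟩
  intro m hm hm0
  have h1 := hm0.trans (min_le_left _ _)
  have h2 := hm0.trans (min_le_right _ _)
  have h3 : 0 < c * (η / 4) ^ 2 := by positivity
  refine ⟨hC, hm, ?_, by linarith, h⟩
  rw [le_div_iff₀ (by positivity)] at h1
  linarith

lemma uf_le (H : BD Ω K ρ lam a η c M) {C m : ℝ} (L : Loc Ω K a η c C m) {p x : E} (hp : p ∈ K)
    (hx : x ∈ Ω) (hd : dist x p < η) : uf a η C m p x ≤ Real.log ‖a p x‖ / 2 := by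
  have h1 := H.apos' hp hx hd
  have h2 : 0 < ‖a p x‖ := lt_of_lt_of_le h1 (Complex.re_le_norm _)
  have h3 : 0 < min ‖a p x‖ m := lt_min h2 L.m_pos
  unfold uf Psi
  rw [if_pos hd]
  have h4 := Real.log_le_log h3 (min_le_left ‖a p x‖ m)
  have := mul_pos L.C_pos h3
  linarith

lemma uf_out (H : BD Ω K ρ lam a η c M) {C m : ℝ} (L : Loc Ω K a η c C m) {p x : E} (hp : p ∈ K)
    (hx : x ∈ Ω) (h : ¬ (dist x p < η / 2 ∧ ‖a p x‖ ≤ m)) : uf a η C m p x = Psi C m := by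
  by_cases h1 : dist x p < η / 2
  · have h2 : m < ‖a p x‖ := by
      by_contra hh; push Not at hh; exact h ⟨h1, hh⟩
    unfold uf
    rw [min_eq_right h2.le, ite_self]
  · push Not at h1
    exact uf_far H L hp hx (by linarith [H.η_pos])

lemma Psi_ge {C m s : ℝ} (hC : 0 < C) (hs : s ≤ m) (h : C * m < 1) :
    (Real.log s - 1) / 2 ≤ Psi C s := by
  unfold Psi
  have : C * s ≤ C * m := by gcongr
  linarith

set_option maxHeartbeats 1000000 in
lemma BD.lower (H : BD Ω K ρ lam a η c M) (hconn : DiscConn Ω) :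
    ∃ r0 > 0, r0 ≤ η / 16 ∧ r0 ≤ 1 ∧ (∀ z ∈ Nb Ω K r0, 0 < -ρ z ∧ -ρ z ≤ 1) ∧
    ∃ C : ℝ, ∀ z ∈ Nb Ω K r0, ∀ w ∈ Nb Ω K r0,
      Real.log (Dq ρ lam z w) - Real.log (-ρ z) / 2 - Real.log (-ρ w) / 2 - C
        ≤ kobayashi Ω z w := by
  obtain ⟨r0, hr0, hr1, hr2, hr⟩ := H.exists_r
  obtain ⟨C, m0, hm0, hL⟩ := H.exists_loc
  have hM := H.M_one
  have hc := H.c_pos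
  have hη := H.η_pos
  refine ⟨r0, hr0, hr1, hr2, fun z hz => ⟨(hr z hz).1, (hr z hz).2.1⟩, ?_⟩
  set T := M + 2 with hT
  set C1 := 2 + (3 * M + 1) / c with hC1
  set C2 := 1 + M + M ^ 2 with hC2
  set C3 := M * T * C2 with hC3
  have hT1 : 1 ≤ T := by linarith
  have pC1 : 0 < C1 := by positivity
  have pC2 : 0 < C2 := by positivity
  have pC3 : 0 < C3 := by positivity
  set Dm := 2 + 2 * M ^ 2 with hDm
  have pDm : 0 < Dm := by positivity
  have hDq0 : ∀ z ∈ Nb Ω K r0, ∀ w ∈ Nb Ω K r0, 0 < Dq ρ lam z w := by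
    intro z hz w hw
    have := (hr z hz).1
    have := (hr w hw).1
    unfold Dq
    positivity
  have hDqm : ∀ z ∈ Nb Ω K r0, ∀ w ∈ Nb Ω K r0, Dq ρ lam z w ≤ Dm := by
    intro z hz w hw
    have h1 := (hr z hz).2.1
    have h2 := (hr w hw).2.1
    have h3 := H.diam z hz.1 w hw.1
    rw [dist_eq_norm] at h3
    have h4 : ‖lam z (w - z)‖ ≤ M * M := by
      refine ((lam z).le_opNorm _).trans ?_
      rw [norm_sub_rev]
      gcongr
      exact H.lamB z
    have h5 : ‖z - w‖ ^ 2 ≤ M ^ 2 := by gcongr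
    unfold Dq
    rw [hDm]; nlinarith
  -- one sided bound
  obtain ⟨A, hA⟩ : ∃ A : ℝ, ∀ z ∈ Nb Ω K r0, ∀ w ∈ Nb Ω K r0,
      Real.log (Dq ρ lam z w) / 2 - Real.log (-ρ z) / 2 - A ≤ kobayashi Ω z w := by
    set κ := min (1 / (2 * T * C1)) (m0 / Dm) with hκ
    have pκ : 0 < κ := by rw [hκ]; positivity
    refine ⟨max (Real.log (2 * T * C2) / 2) (1 / 2 + Real.log C3 / 2 - Real.log κ / 2), ?_⟩
    intro z hz w hw
    obtain ⟨dz, dz1, p, hp, hzp, hDz, haz⟩ := hr z hz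
    obtain ⟨dw, dw1, -⟩ := hr w hw
    have hDp := hDq0 z hz w hw
    by_cases hcase : Dq ρ lam z w ≤ 2 * T * C2 * (-ρ z)
    · have h1 := Real.log_le_log hDp hcase
      rw [Real.log_mul (by positivity) dz.ne'] at h1
      have h2 := le_max_left (Real.log (2 * T * C2) / 2)
        (1 / 2 + Real.log C3 / 2 - Real.log κ / 2)
      have := kob_nonneg Ω z w
      linarith
    · push Not at hcase
      have L := hL m0 hm0 le_rfl
      have hk := subunit_kob (uf_subunit H L hp) hconn hz.1 hw.1
      have h1 := uf_le H L hp hz.1 (by linarith)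
      have hza : 0 < ‖a p z‖ :=
        lt_of_lt_of_le (H.apos' hp hz.1 (by linarith)) (Complex.re_le_norm _)
      have h2 := Real.log_le_log hza haz
      rw [Real.log_mul (by positivity) dz.ne'] at h2
      have hm' : κ * Dq ρ lam z w ≤ m0 := by
        calc _ ≤ (m0 / Dm) * Dm := by
              gcongr
              · exact min_le_right _ _
              · exact hDqm z hz w hw
          _ = m0 := by field_simp
      have h3 : (Real.log (κ * Dq ρ lam z w) - 1) / 2 ≤ uf a η C m0 p w := by
        have key : ∀ s, κ * Dq ρ lam z w ≤ s → s ≤ m0 →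
            (Real.log (κ * Dq ρ lam z w) - 1) / 2 ≤ Psi C s := by
          intro s hs1 hs2
          refine le_trans ?_ (Psi_ge L.C_pos hs2 L.hCm)
          have := Real.log_le_log (by positivity) hs1
          linarith
        unfold uf
        split_ifs with hd
        · apply key _ _ (min_le_right _ _)
          apply le_min _ hm'
          have k1 := H.dq_tri (z := z) (u := p) (w := w) (by linarith) (H.zero p hp).le (by linarith)
          have k2 := H.dq_le_a hp hw.1 hd
          have k3 : Dq ρ lam z w ≤ 2 * T * C1 * ‖a p w‖ := by
            have : T * (Dq ρ lam z p + Dq ρ lam p w) ≤ T * (C2 * (-ρ z) + C1 * ‖a p w‖) := by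
              gcongr
            nlinarith
          calc κ * Dq ρ lam z w ≤ (1 / (2 * T * C1)) * (2 * T * C1 * ‖a p w‖) := by
                gcongr
                exact min_le_left _ _
            _ = _ := by field_simp
        · exact key _ hm' le_rfl
      rw [Real.log_mul pκ.ne' hDp.ne'] at h3
      have h4 := le_max_right (Real.log (2 * T * C2) / 2)
        (1 / 2 + Real.log C3 / 2 - Real.log κ / 2)
      linarith
  set κ := min (1 / (8 * T ^ 4 * C1)) (m0 / Dm) with hκ
  have pκ : 0 < κ := by rw [hκ]; positivity
  set B := max (4 * T ^ 4 * C2) (C3 / κ) with hB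
  have pB : 0 < B := by rw [hB]; positivity
  refine ⟨max (A + Real.log T / 2 + Real.log (2 * B) / 2) (1 + Real.log C3 - Real.log κ), ?_⟩
  intro z hz w hw
  obtain ⟨dz, dz1, p, hp, hzp, hDz, haz⟩ := hr z hz
  obtain ⟨dw, dw1, q, hq, hwq, hDw, haw⟩ := hr w hw
  have hDp := hDq0 z hz w hw
  have hDp' := hDq0 w hw z hz
  by_cases hcase : Dq ρ lam z w ≤ B * (-ρ z + -ρ w)
  · have hmx := le_max_left (A + Real.log T / 2 + Real.log (2 * B) / 2)
      (1 + Real.log C3 - Real.log κ)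
    have hlT := Real.log_nonneg hT1
    rcases le_total (-ρ z) (-ρ w) with hle | hle
    · have h1 : Dq ρ lam z w ≤ 2 * B * (-ρ w) := by nlinarith
      have h2 := Real.log_le_log hDp h1
      rw [Real.log_mul (by positivity) dw.ne'] at h2
      have := hA z hz w hw
      linarith
    · have h1 : Dq ρ lam z w ≤ 2 * B * (-ρ z) := by nlinarith
      have h2 := Real.log_le_log hDp h1
      rw [Real.log_mul (by positivity) dz.ne'] at h2
      have h3 := hA w hw z hz
      rw [kob_symm hw.1 hz.1] at h3
      have h4 := Real.log_le_log hDp (H.dq_symm (z := w) (w := z) (by linarith) (by linarith))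
      rw [Real.log_mul (by positivity) hDp'.ne'] at h4
      linarith
  · push Not at hcase
    set m := κ * Dq ρ lam z w with hm
    have pm : 0 < m := by positivity
    have hm' : m ≤ m0 := by
      calc _ ≤ (m0 / Dm) * Dm := by
            rw [hm]
            gcongr
            · exact min_le_right _ _
            · exact hDqm z hz w hw
        _ = m0 := by field_simp
    have L := hL m pm hm'
    have hB1 : 4 * T ^ 4 * C2 ≤ B := le_max_left _ _
    have hB2 : C3 / κ ≤ B := le_max_right _ _
    rw [div_le_iff₀ pκ] at hB2
    have hmC : 8 * T ^ 4 * C1 * m ≤ Dq ρ lam z w := by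
      have : κ ≤ 1 / (8 * T ^ 4 * C1) := min_le_left _ _
      rw [le_div_iff₀ (by positivity)] at this
      rw [hm]
      calc _ = (κ * (8 * T ^ 4 * C1)) * Dq ρ lam z w := by ring
        _ ≤ 1 * Dq ρ lam z w := by gcongr
        _ = _ := one_mul _
    have hB3 : 4 * T ^ 4 * C2 * (-ρ z + -ρ w) < Dq ρ lam z w := by
      have : 4 * T ^ 4 * C2 * (-ρ z + -ρ w) ≤ B * (-ρ z + -ρ w) := by gcongr
      linarith
    have hdis : ∀ x ∈ Ω, dist x p < η / 2 → ‖a p x‖ ≤ m → dist x q < η / 2 → ‖a q x‖ ≤ m →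
        False := by
      intro x hx hxp hap hxq haq
      have hρx : ρ x < 0 := (H.near p hp x (by linarith)).1 hx
      have hρz : ρ z ≤ 0 := by linarith
      have hρw : ρ w ≤ 0 := by linarith
      have ep := (H.zero p hp).le
      have eq := (H.zero q hq).le
      have t1 := H.dq_tri hρz ep hρw
      have t2 := H.dq_tri ep hρx.le hρw
      have t3 := H.dq_tri hρx.le eq hρw
      have t4 := H.dq_symm eq hρx.le
      have t5 := H.dq_symm hρw eq
      have s1 : Dq ρ lam p x ≤ C1 * m :=
        (H.dq_le_a hp hx (by linarith)).trans (by gcongr)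
      have s2 : Dq ρ lam q x ≤ C1 * m :=
        (H.dq_le_a hq hx (by linarith)).trans (by gcongr)
      have u3 : Dq ρ lam x w ≤ T * (T * (C1 * m) + T * (C2 * (-ρ w))) := by
        refine t3.trans ?_
        gcongr
        · exact t4.trans (by gcongr)
        · exact t5.trans (by gcongr)
      have u2 : Dq ρ lam p w ≤ T * (C1 * m + T * (T * (C1 * m) + T * (C2 * (-ρ w)))) :=
        t2.trans (by gcongr)
      have u1 : Dq ρ lam z w ≤
          T * (C2 * (-ρ z) + T * (C1 * m + T * (T * (C1 * m) + T * (C2 * (-ρ w))))) :=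
        t1.trans (by gcongr)
      have hT2 : T ^ 1 ≤ T ^ 4 := pow_le_pow_right₀ hT1 (by norm_num)
      have hT3 : T ^ 2 ≤ T ^ 4 := pow_le_pow_right₀ hT1 (by norm_num)
      have v1 : T ^ 1 * (C2 * (-ρ z)) ≤ T ^ 4 * (C2 * (-ρ z)) := by gcongr
      have v2 : T ^ 2 * (C1 * m) ≤ T ^ 4 * (C1 * m) := by gcongr
      have e : T * (C2 * (-ρ z) + T * (C1 * m + T * (T * (C1 * m) + T * (C2 * (-ρ w))))) =
        T ^ 1 * (C2 * (-ρ z)) + T ^ 2 * (C1 * m) + T ^ 4 * (C1 * m) + T ^ 4 * (C2 * (-ρ w)) := by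
        ring
      rw [e] at u1
      have v3 : 0 < T ^ 4 * (C1 * m) := by positivity
      linarith
    have hk := subunit_kob (uf_subunit2 H L hp hq hdis) hconn hz.1 hw.1
    beta_reduce at hk
    have haw2 : ‖a q w‖ ≤ m := by
      calc _ ≤ _ := haw
        _ ≤ B * κ * (-ρ w) := by gcongr
        _ ≤ κ * (B * (-ρ z + -ρ w)) := by
            have : 0 < κ * B * (-ρ z) := by positivity
            linarith
        _ ≤ _ := by rw [hm]; gcongr
    have haz2 : ‖a p z‖ ≤ m := by
      calc _ ≤ _ := haz
        _ ≤ B * κ * (-ρ z) := by gcongr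
        _ ≤ κ * (B * (-ρ z + -ρ w)) := by
            have : 0 < κ * B * (-ρ w) := by positivity
            linarith
        _ ≤ _ := by rw [hm]; gcongr
    have o1 := uf_out H L hp hw.1 (fun h => hdis w hw.1 h.1 h.2 (by linarith) haw2)
    have o2 := uf_out H L hq hz.1 (fun h => hdis z hz.1 (by linarith) haz2 h.1 h.2)
    have l1 := uf_le H L hp hz.1 (by linarith)
    have l2 := uf_le H L hq hw.1 (by linarith)
    have hza : 0 < ‖a p z‖ :=
      lt_of_lt_of_le (H.apos' hp hz.1 (by linarith)) (Complex.re_le_norm _)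
    have hwa : 0 < ‖a q w‖ :=
      lt_of_lt_of_le (H.apos' hq hw.1 (by linarith)) (Complex.re_le_norm _)
    have g1 := Real.log_le_log hza haz
    rw [Real.log_mul (by positivity) dz.ne'] at g1
    have g2 := Real.log_le_log hwa haw
    rw [Real.log_mul (by positivity) dw.ne'] at g2
    have g3 := Psi_ge L.C_pos le_rfl L.hCm
    have g4 : Real.log m = Real.log κ + Real.log (Dq ρ lam z w) := by
      rw [hm, Real.log_mul pκ.ne' hDp.ne']
    have hmx := le_max_right (A + Real.log T / 2 + Real.log (2 * B) / 2)
      (1 + Real.log C3 - Real.log κ)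
    rw [o1, o2] at hk
    linarith

end P5


section P6
open Filter Topology
variable {E : Type*} [NormedAddCommGroup E] [NormedSpace ℂ E]
variable {Ω K : Set E} {ρ : E → ℝ} {lam : E → E →L[ℂ] ℂ} {a : E → E → ℂ} {η c M : ℝ}

lemma BD.rho_le (H : BD Ω K ρ lam a η c M) {q x : E} (hq : q ∈ K) (h : dist x q ≤ 1) :
    -ρ x ≤ 2 * M * dist x q := by
  have hM := H.M_one
  have h3 := H.taylor q (x - q)
  rw [add_sub_cancel, H.zero q hq, sub_zero] at h3
  have h5 := Complex.abs_re_le_norm (lam q (x - q))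
  have h6 : ‖lam q (x - q)‖ ≤ M * ‖x - q‖ := ((lam q).le_opNorm _).trans (by gcongr; exact H.lamB q)
  rw [dist_eq_norm] at h ⊢
  have n1 := norm_nonneg (x - q)
  have h7 : M * ‖x - q‖ ^ 2 ≤ M * ‖x - q‖ := by gcongr; nlinarith
  have := abs_le.1 h3
  have := abs_le.1 h5
  linarith

lemma BD.raise (H : BD Ω K ρ lam a η c M) {z ν q : E} {h : ℝ} (hz : z ∈ Ω) (hq : q ∈ K)
    (hzq : dist z q < η / 2) (hν : lam z ν = -1) (hνM : ‖ν‖ ≤ M) (h1 : -ρ z ≤ h)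
    (h2 : h * (4 * M ^ 3) ≤ 1) (h3 : 3 * h * M ≤ η / 2) :
    z + (h : ℂ) • ν ∈ Ω ∧ h / 2 ≤ -ρ (z + (h : ℂ) • ν) ∧
    kobayashi Ω z (z + (h : ℂ) • ν) ≤ Real.log h / 2 - Real.log (-ρ z) / 2 + Real.log 9 / 2 := by
  have hM := H.M_one
  have hη := H.η_pos
  have hρ : ρ z < 0 := (H.near q hq z (by linarith)).1 hz
  set d := -ρ z with hd
  have dpos : 0 < d := by linarith
  have hpos : 0 < h := by linarith
  have key : ∀ t : ℂ, ρ (z + t • ν) ≤ -d - t.re + M ^ 3 * ‖t‖ ^ 2 := by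
    intro t
    have k1 := H.taylor z (t • ν)
    rw [map_smul, hν, norm_smul] at k1
    have k2 : (t • (-1 : ℂ)).re = -t.re := by simp
    rw [k2] at k1
    have k3 := (abs_le.1 k1).2
    have k4 : M * (‖t‖ * ‖ν‖) ^ 2 ≤ M * (‖t‖ * M) ^ 2 := by gcongr
    have e : M * (‖t‖ * M) ^ 2 = M ^ 3 * ‖t‖ ^ 2 := by ring
    linarith
  have hin : ∀ t : ℂ, ‖t‖ < 3 * h → ρ (z + t • ν) < 0 → z + t • ν ∈ Ω := by
    intro t ht hr
    refine (H.near q hq _ ?_).2 hr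
    have k1 : dist (z + t • ν) z ≤ 3 * h * M := by
      rw [dist_eq_norm, add_sub_cancel_left, norm_smul]; gcongr
    have := dist_triangle (z + t • ν) z q
    linarith
  have hnh : ‖(h : ℂ)‖ = h := by rw [Complex.norm_real, Real.norm_of_nonneg hpos.le]
  have hr := key h
  rw [hnh, Complex.ofReal_re] at hr
  have hr2 : ρ (z + (h : ℂ) • ν) ≤ -d - h / 2 := by nlinarith
  have hzO : z + (h : ℂ) • ν ∈ Ω := hin h (by rw [hnh]; linarith) (by linarith)
  refine ⟨hzO, by linarith, ?_⟩
  set R := h + d / 4 with hR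
  have hRp : 0 < R := by linarith
  have hdisc : MapsTo (fun ζ : ℂ => z + ((h : ℂ) + R * ζ) • ν) (ball 0 1) Ω := by
    intro ζ hζ
    have hζ : ‖ζ‖ < 1 := by simpa using hζ
    set t : ℂ := (h : ℂ) + R * ζ with ht
    have tn : ‖(R : ℂ) * ζ‖ < R := by
      rw [norm_mul, Complex.norm_real, Real.norm_of_nonneg hRp.le]; nlinarith
    have tl : ‖t‖ < 3 * h := by
      have := norm_add_le (h : ℂ) (R * ζ)
      rw [hnh] at this
      linarith
    have tre : -(d / 4) < t.re := by
      have k1 := (abs_le.1 (Complex.abs_re_le_norm ((R : ℂ) * ζ))).1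
      have k2 : t.re = h + ((R : ℂ) * ζ).re := by simp [ht]
      linarith
    have tsq : ‖t‖ ^ 2 ≤ 2 * h * t.re + h * d / 2 + d ^ 2 / 16 := by
      have k1 : (t - h).re ^ 2 + (t - h).im ^ 2 = ‖t - h‖ ^ 2 := by
        rw [← Complex.normSq_eq_norm_sq, Complex.normSq_apply]; ring
      have k2 : t.re ^ 2 + t.im ^ 2 = ‖t‖ ^ 2 := by
        rw [← Complex.normSq_eq_norm_sq, Complex.normSq_apply]; ring
      have k3 : ‖t - h‖ < R := by rw [ht, add_sub_cancel_left]; exact tn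
      have k4 : ‖t - h‖ ^ 2 < R ^ 2 := by gcongr
      simp only [Complex.sub_re, Complex.sub_im, Complex.ofReal_re, Complex.ofReal_im] at k1
      rw [hR] at k4
      nlinarith
    apply hin t tl
    refine lt_of_le_of_lt (key t) ?_
    have k1 : M ^ 3 * ‖t‖ ^ 2 ≤ M ^ 3 * (2 * h * t.re + h * d / 2 + d ^ 2 / 16) := by gcongr
    set s := M ^ 3 * h with hs
    have s1 : s ≤ 1 / 4 := by rw [hs]; linarith
    have s0 : 0 < s := by positivity
    have sd : M ^ 3 * d ≤ s := by rw [hs]; gcongr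
    have e : M ^ 3 * (2 * h * t.re + h * d / 2 + d ^ 2 / 16) =
      2 * s * t.re + s * d / 2 + (M ^ 3 * d) * d / 16 := by rw [hs]; ring
    rw [e] at k1
    have k2 : (M ^ 3 * d) * d ≤ s * d := by gcongr
    have k3 : s * d ≤ 1 / 4 * d := by gcongr
    have k4 : 0 ≤ (t.re + d / 4) * (1 - 2 * s) := by
      apply mul_nonneg <;> linarith
    have k5 : 0 ≤ s * d := by positivity
    nlinarith
  have hα : ‖((-(h / R) : ℝ) : ℂ)‖ = h / R := by
    rw [Complex.norm_real, norm_neg, Real.norm_of_nonneg (by positivity)]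
  have hlt : h / R < 1 := by rw [div_lt_one hRp]; linarith
  have hk := kob_le_disc (φ := fun ζ : ℂ => z + ((h : ℂ) + R * ζ) • ν) (α := ((-(h / R) : ℝ) : ℂ))
    (by rw [hα]; exact hlt) (by fun_prop) hdisc
  rw [hα] at hk
  have e0 : (h : ℂ) + R * ((-(h / R) : ℝ) : ℂ) = 0 := by
    rw [← Complex.ofReal_mul, ← Complex.ofReal_add]
    have : h + R * -(h / R) = 0 := by field_simp; ring
    rw [this, Complex.ofReal_zero]
  beta_reduce at hk
  rw [e0, mul_zero, zero_smul, add_zero, add_zero, kob_symm hzO hz] at hk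
  refine hk.trans ?_
  unfold artanh
  have e1 : (1 + h / R) / (1 - h / R) = (8 * h + d) / d := by
    have e2 : 1 - h / R = d / 4 / R := by rw [hR]; field_simp; ring
    have e3 : 1 + h / R = (8 * h + d) / 4 / R := by rw [hR]; field_simp; ring
    rw [e2, e3]; field_simp
  rw [e1, Real.log_div (by positivity) dpos.ne']
  have : Real.log (8 * h + d) ≤ Real.log (9 * h) := Real.log_le_log (by positivity) (by linarith)
  rw [Real.log_mul (by norm_num) hpos.ne'] at this
  linarith

set_option maxHeartbeats 1000000 in
lemma BD.cross (H : BD Ω K ρ lam a η c M) {z w ν ν' q : E} {h : ℝ} (hq : q ∈ K)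
    (hzq : dist z q < η / 2) (hν : lam z ν = -1) (hνM : ‖ν‖ ≤ M)
    (hν' : lam w ν' = -1) (hνM' : ‖ν'‖ ≤ M) (hρz : ρ z ≤ 0) (hρw : ρ w ≤ 0) (hpos : 0 < h)
    (hD : 40 * M * Dq ρ lam z w ≤ h) (h1 : 200 * M ^ 4 * h ≤ 1)
    (h2 : 5 * h * M ≤ η / 4) (h3 : 64 * h ≤ η ^ 2) :
    kobayashi Ω (z + (h : ℂ) • ν) (w + (h : ℂ) • ν') ≤ artanh (1 / 2) := by
  have hM := H.M_one
  have hη := H.η_pos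
  have hnh : ‖(h : ℂ)‖ = h := by rw [Complex.norm_real, Real.norm_of_nonneg hpos.le]
  set D := Dq ρ lam z w with hDdef
  have D0 : 0 ≤ D := BD.dq_nonneg hρz hρw
  have hMD : D ≤ M * D := by nlinarith
  have hDh : D ≤ h := by linarith
  have n1 := norm_nonneg (lam z (w - z))
  have hD1 : ‖w - z‖ ^ 2 ≤ D := by
    rw [hDdef, Dq, norm_sub_rev w z]; linarith
  have hD2 : ‖lam z (w - z)‖ ≤ D := by
    rw [hDdef, Dq]
    have := sq_nonneg ‖z - w‖
    linarith
  set x := ‖w - z‖ with hx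
  have x0 : 0 ≤ x := norm_nonneg _
  have hM4 : 1 ≤ M ^ 4 := one_le_pow₀ hM
  set y := (w + (h : ℂ) • ν') - (z + (h : ℂ) • ν) with hy
  have hye : y = (w - z) + (h : ℂ) • (ν' - ν) := by rw [hy, smul_sub]; abel
  have hyn : ‖y‖ ≤ x + 2 * h * M := by
    rw [hye]
    refine (norm_add_le _ _).trans ?_
    rw [norm_smul, hnh]
    have := norm_sub_le ν' ν
    have : h * ‖ν' - ν‖ ≤ h * (M + M) := by gcongr; linarith
    linarith
  have hly : ‖lam z y‖ ≤ D + h * (M * x * M) := by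
    rw [hye, map_add, map_smul, map_sub (lam z) ν' ν, hν]
    refine (norm_add_le _ _).trans ?_
    rw [norm_smul, hnh]
    gcongr
    have e : lam z ν' - -1 = (lam z - lam w) ν' := by
      rw [ContinuousLinearMap.sub_apply, hν']
    rw [e]
    refine ((lam z - lam w).le_opNorm _).trans ?_
    gcongr
    have := H.lamLip z w
    rwa [norm_sub_rev z w] at this
  have hdisc : MapsTo (fun ζ : ℂ => (z + (h : ℂ) • ν) + (2 * ζ) • y) (ball 0 1) Ω := by
    intro ζ hζ
    have hζ : ‖ζ‖ < 1 := by simpa using hζ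
    beta_reduce
    rw [add_assoc]
    set v := (h : ℂ) • ν + (2 * ζ) • y with hv
    have n2 : ‖(2 * ζ : ℂ)‖ ≤ 2 := by
      rw [norm_mul]; norm_num; linarith
    have vn : ‖v‖ ≤ 5 * h * M + 2 * x := by
      have k1 := norm_add_le ((h : ℂ) • ν) ((2 * ζ) • y)
      rw [norm_smul, norm_smul, hnh] at k1
      have k2 : h * ‖ν‖ ≤ h * M := by gcongr
      have k3 : ‖(2 * ζ : ℂ)‖ * ‖y‖ ≤ 2 * (x + 2 * h * M) := by gcongr
      linarith
    have lv : (lam z v).re ≤ -h + 2 * (D + h * (M * x * M)) := by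
      rw [hv, map_add, map_smul, map_smul, hν, Complex.add_re]
      have k1 : ((h : ℂ) • (-1 : ℂ)).re = -h := by simp
      rw [k1]
      have k2 := Complex.re_le_norm ((2 * ζ) • lam z y)
      rw [norm_smul] at k2
      have k3 : ‖(2 * ζ : ℂ)‖ * ‖lam z y‖ ≤ 2 * (D + h * (M * x * M)) := by gcongr
      linarith
    have hx8 : 8 * x ≤ η := by
      have : 64 * x ^ 2 ≤ η ^ 2 := by linarith
      nlinarith
    have hrho : ρ (z + v) < 0 := by
      have k1 := (abs_le.1 (H.taylor z v)).2
      have k2 : ‖v‖ ^ 2 ≤ (5 * h * M + 2 * x) ^ 2 := by gcongr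
      have k3 : (5 * h * M + 2 * x) ^ 2 ≤ 50 * h ^ 2 * M ^ 2 + 8 * D := by
        nlinarith [sq_nonneg (5 * h * M - 2 * x)]
      have k4 : M * ‖v‖ ^ 2 ≤ M * (50 * h ^ 2 * M ^ 2 + 8 * D) := by gcongr; linarith
      have k5 : M * (50 * h ^ 2 * M ^ 2 + 8 * D) ≤ h / 4 + h / 5 := by
        have k51 : 50 * M ^ 3 * h * h ≤ 50 * M ^ 4 * h * h := by gcongr <;> norm_num
        have k52 : 50 * M ^ 4 * h * h ≤ (1 / 4) * h := by gcongr; linarith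
        have k53 : M * (50 * h ^ 2 * M ^ 2 + 8 * D) = 50 * M ^ 3 * h * h + 8 * (M * D) := by ring
        rw [k53]
        linarith
      have k6 : M ^ 2 * x ≤ 1 / 10 := by
        have : (M ^ 2 * x) ^ 2 ≤ (1 / 10) ^ 2 := by
          calc (M ^ 2 * x) ^ 2 = M ^ 4 * x ^ 2 := by ring
            _ ≤ M ^ 4 * h := by gcongr; linarith
            _ ≤ _ := by linarith
        exact le_of_sq_le_sq this (by norm_num)
      have k7 : h * (M * x * M) ≤ h * (1 / 10) := by
        have : M * x * M = M ^ 2 * x := by ring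
        rw [this]; gcongr
      have k8 : 2 * D ≤ h / 20 := by linarith
      linarith
    refine (H.near q hq _ ?_).2 hrho
    have k1 := dist_triangle (z + v) z q
    have k2 : dist (z + v) z = ‖v‖ := by rw [dist_eq_norm, add_sub_cancel_left]
    linarith
  have hα : ‖(1 / 2 : ℂ)‖ = 1 / 2 := by norm_num
  have hk := kob_le_disc (φ := fun ζ : ℂ => (z + (h : ℂ) • ν) + (2 * ζ) • y) (α := (1 / 2 : ℂ))
    (by rw [hα]; norm_num) (by fun_prop) hdisc
  rw [hα] at hk
  beta_reduce at hk
  have e1 : (2 * (1 / 2) : ℂ) = 1 := by norm_num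
  rw [e1, mul_zero, zero_smul, add_zero, one_smul, hy, add_sub_cancel] at hk
  exact hk

lemma BD.upper (H : BD Ω K ρ lam a η c M)
    (hS : ∀ ε > 0, ∃ C, ∀ x ∈ Ω, ∀ y ∈ Ω, (∀ q ∈ K, ε ≤ dist x q) → (∀ q ∈ K, ε ≤ dist y q) →
      kobayashi Ω x y ≤ C) :
    ∃ r1 > 0, ∃ C : ℝ, ∀ z ∈ Nb Ω K r1, ∀ w ∈ Nb Ω K r1,
      kobayashi Ω z w ≤
      Real.log (Dq ρ lam z w) - Real.log (-ρ z) / 2 - Real.log (-ρ w) / 2 + C := by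
  have hM := H.M_one
  have hη := H.η_pos
  obtain ⟨h0, h0p, a1, a2, a3, a4, a5⟩ : ∃ h0 > 0, 200 * M ^ 4 * h0 ≤ 1 ∧ 5 * h0 * M ≤ η / 4 ∧
      64 * h0 ≤ η ^ 2 ∧ h0 * (4 * M ^ 3) ≤ 1 ∧ 3 * h0 * M ≤ η / 2 := by
    refine ⟨min (1 / (200 * M ^ 4)) (min (η / (20 * M)) (η ^ 2 / 64)), by positivity, ?_⟩
    set h0 := min (1 / (200 * M ^ 4)) (min (η / (20 * M)) (η ^ 2 / 64)) with hh
    have b1 : h0 ≤ 1 / (200 * M ^ 4) := min_le_left _ _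
    have b2 : h0 ≤ η / (20 * M) := (min_le_right _ _).trans (min_le_left _ _)
    have b3 : h0 ≤ η ^ 2 / 64 := (min_le_right _ _).trans (min_le_right _ _)
    have b0 : 0 < h0 := by rw [hh]; positivity
    rw [le_div_iff₀ (by positivity)] at b1 b2 b3
    refine ⟨by linarith, by linarith, by linarith, ?_, by linarith⟩
    have : M ^ 3 ≤ M ^ 4 := pow_le_pow_right₀ hM (by norm_num)
    have : h0 * (4 * M ^ 3) ≤ h0 * (200 * M ^ 4) := by gcongr; norm_num
    linarith
  set ε := min 1 (h0 / (8 * M)) with hε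
  have pε : 0 < ε := by positivity
  have ε1 : ε ≤ 1 := min_le_left _ _
  have ε2 : ε ≤ h0 / (8 * M) := min_le_right _ _
  rw [le_div_iff₀ (by positivity)] at ε2
  obtain ⟨Cε, hCε⟩ := hS ε pε
  refine ⟨min ε (η / 2), by positivity, |Cε| + artanh (1 / 2) + Real.log 9 + Real.log (40 * M), ?_⟩
  have hfacts : ∀ z ∈ Nb Ω K (min ε (η / 2)), z ∈ Ω ∧ 0 < -ρ z ∧ -ρ z ≤ h0 ∧ ∃ q ∈ K, dist z q < η / 2 ∧
      ∃ ν, lam z ν = -1 ∧ ‖ν‖ ≤ M := by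
    rintro z ⟨hz, q, hq, hd⟩
    have hd1 := hd.trans_le (min_le_left _ _)
    have hd2 := hd.trans_le (min_le_right _ _)
    have hρ := (H.near q hq z (by linarith)).1 hz
    refine ⟨hz, by linarith, ?_, q, hq, hd2, H.nu q hq z (by linarith)⟩
    have := H.rho_le hq (by linarith : dist z q ≤ 1)
    nlinarith
  intro z hz w hw
  obtain ⟨zO, dz, dz0, q, hq, hzq, ν, hν, hνM⟩ := hfacts z hz
  obtain ⟨wO, dw, dw0, q', hq', hwq, ν', hν', hνM'⟩ := hfacts w hw
  have n1 := norm_nonneg (lam z (w - z))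
  have n2 := sq_nonneg ‖z - w‖
  have hDz : -ρ z ≤ Dq ρ lam z w := by unfold Dq; linarith
  have hDw : -ρ w ≤ Dq ρ lam z w := by unfold Dq; linarith
  have hDp : 0 < Dq ρ lam z w := by linarith
  have har : 0 ≤ artanh (1 / 2) := artanh_nonneg' (by norm_num) (by norm_num)
  have tri : ∀ z' ∈ Ω, ∀ w' ∈ Ω, kobayashi Ω z w ≤
      kobayashi Ω z z' + kobayashi Ω z' w' + kobayashi Ω w w' := by
    intro z' hz' w' hw'
    have t1 := kob_triangle zO hz' wO
    have t2 := kob_triangle hz' hw' wO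
    rw [kob_symm hw' wO] at t2
    linarith
  by_cases hcase : 40 * M * Dq ρ lam z w ≤ h0
  · set h := 40 * M * Dq ρ lam z w with hh
    have hp : 0 < h := by positivity
    have hDh : Dq ρ lam z w ≤ h := by rw [hh]; nlinarith
    have b1 : 200 * M ^ 4 * h ≤ 1 := le_trans (by gcongr) a1
    have b2 : 5 * h * M ≤ η / 4 := le_trans (by gcongr) a2
    have b3 : 64 * h ≤ η ^ 2 := le_trans (by gcongr) a3
    have b4 : h * (4 * M ^ 3) ≤ 1 := le_trans (by gcongr) a4
    have b5 : 3 * h * M ≤ η / 2 := le_trans (by gcongr) a5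
    obtain ⟨r1, -, r2⟩ := H.raise zO hq hzq hν hνM (hDz.trans hDh) b4 b5
    obtain ⟨s1, -, s2⟩ := H.raise wO hq' hwq hν' hνM' (hDw.trans hDh) b4 b5
    have cr := H.cross hq hzq hν hνM hν' hνM' (by linarith) (by linarith) hp hh.ge b1 b2 b3
    have := tri _ r1 _ s1
    have lg : Real.log h = Real.log (40 * M) + Real.log (Dq ρ lam z w) := by
      rw [hh, Real.log_mul (by positivity) hDp.ne']
    have := abs_nonneg Cε
    linarith
  · push Not at hcase
    obtain ⟨r1, r3, r2⟩ := H.raise zO hq hzq hν hνM dz0 a4 a5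
    obtain ⟨s1, s3, s2⟩ := H.raise wO hq' hwq hν' hνM' dw0 a4 a5
    have hfar : ∀ x, h0 / 2 ≤ -ρ x → ∀ q ∈ K, ε ≤ dist x q := by
      intro x hx q hq
      by_contra hh
      push Not at hh
      have := H.rho_le hq (by linarith : dist x q ≤ 1)
      have : 2 * M * dist x q < 2 * M * ε := by gcongr
      linarith
    have cr := hCε _ r1 _ s1 (hfar _ r3) (hfar _ s3)
    have := tri _ r1 _ s1
    have lg := Real.log_le_log h0p hcase.le
    rw [Real.log_mul (by positivity) hDp.ne'] at lg
    have := le_abs_self Cε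
    linarith

end P6


section P7
open Filter Topology
variable {E : Type*} [NormedAddCommGroup E] [NormedSpace ℂ E]
variable {Ω K : Set E} {ρ : E → ℝ} {lam : E → E →L[ℂ] ℂ} {a : E → E → ℂ} {η c M : ℝ}

lemma quad_ineq {T a b c e f g : ℝ} (hT : 0 < T) (ha : 0 < a) (hb : 0 < b) (hc : 0 < c) (he : 0 < e)
    (hf : 0 < f) (hg : 0 < g)
    (h1 : f ≤ T * (a + c)) (h2 : f ≤ T * (e + b)) (h3 : g ≤ T * (a + e)) (h4 : g ≤ T * (c + b)) :
    f * g ≤ 4 * T ^ 2 * (a * b) ∨ f * g ≤ 4 * T ^ 2 * (c * e) := by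
  have key : ∀ u v : ℝ, 0 < u → 0 < v → f ≤ 2 * T * u → g ≤ 2 * T * v →
      f * g ≤ 4 * T ^ 2 * (u * v) := by
    intro u v hu hv k1 k2
    calc f * g ≤ (2 * T * u) * (2 * T * v) := by gcongr
      _ = _ := by ring
  by_cases hac : a ≤ c
  · by_cases hae : a ≤ e
    · right
      apply key c e hc he
      · have : T * (a + c) ≤ T * (c + c) := by gcongr
        linarith
      · have : T * (a + e) ≤ T * (e + e) := by gcongr
        linarith
    · push Not at hae
      by_cases hbe : b ≤ e
      · right
        rw [mul_comm c e]
        apply key e c he hc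
        · have : T * (e + b) ≤ T * (e + e) := by gcongr
          linarith
        · have : T * (c + b) ≤ T * (c + c) := by gcongr; linarith
          linarith
      · push Not at hbe
        left
        rw [mul_comm a b]
        apply key b a hb ha
        · have : T * (e + b) ≤ T * (b + b) := by gcongr
          linarith
        · have : T * (a + e) ≤ T * (a + a) := by gcongr
          linarith
  · push Not at hac
    by_cases hcb : c ≤ b
    · left
      apply key a b ha hb
      · have : T * (a + c) ≤ T * (a + a) := by gcongr
        linarith
      · have : T * (c + b) ≤ T * (b + b) := by gcongr
        linarith
    · push Not at hcb
      by_cases hbe : b ≤ e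
      · right
        rw [mul_comm c e]
        apply key e c he hc
        · have : T * (e + b) ≤ T * (e + e) := by gcongr
          linarith
        · have : T * (c + b) ≤ T * (c + c) := by gcongr
          linarith
      · push Not at hbe
        left
        rw [mul_comm a b]
        apply key b a hb ha
        · have : T * (e + b) ≤ T * (b + b) := by gcongr
          linarith
        · have : T * (a + e) ≤ T * (a + a) := by gcongr; linarith
          linarith

theorem BD.gromov (H : BD Ω K ρ lam a η c M) (hconn : DiscConn Ω)
    (hS : ∀ ε > 0, ∃ C, ∀ x ∈ Ω, ∀ y ∈ Ω, (∀ q ∈ K, ε ≤ dist x q) → (∀ q ∈ K, ε ≤ dist y q) →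
      kobayashi Ω x y ≤ C) : GromovHyperbolicWith Ω (kobayashi Ω) := by
  have hM := H.M_one
  have hη := H.η_pos
  obtain ⟨r0, hr0, hr0η, hr01, hpos, C1, hlow⟩ := H.lower hconn
  obtain ⟨r1, hr1, C2, hup⟩ := H.upper hS
  set r := min r0 r1 with hr
  have pr : 0 < r := lt_min hr0 hr1
  have sub0 : ∀ z ∈ Nb Ω K r, z ∈ Nb Ω K r0 := fun z hz =>
    ⟨hz.1, hz.2.imp fun q hq => ⟨hq.1, hq.2.trans_le (min_le_left _ _)⟩⟩
  have sub1 : ∀ z ∈ Nb Ω K r, z ∈ Nb Ω K r1 := fun z hz =>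
    ⟨hz.1, hz.2.imp fun q hq => ⟨hq.1, hq.2.trans_le (min_le_right _ _)⟩⟩
  have hout : ∀ z ∈ Ω, z ∉ Nb Ω K r → ∀ q ∈ K, r ≤ dist z q := by
    intro z hz hn q hq
    by_contra hh
    push Not at hh
    exact hn ⟨hz, q, hq, hh⟩
  -- the estimate on N
  obtain ⟨A, hA⟩ : ∃ A : ℝ, ∀ p ∈ Nb Ω K r, ∀ q ∈ Nb Ω K r, ∀ x ∈ Nb Ω K r, ∀ w ∈ Nb Ω K r,
      kobayashi Ω p q + kobayashi Ω x w ≤ kobayashi Ω p x + kobayashi Ω w q + A ∨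
      kobayashi Ω p q + kobayashi Ω x w ≤ kobayashi Ω x q + kobayashi Ω p w + A := by
    set T := M + 2 with hT
    set DD : E → E → ℝ := fun z w => max (Dq ρ lam z w) (Dq ρ lam w z) with hDD
    have ds : ∀ z w, DD z w = DD w z := fun z w => max_comm _ _
    have dpos : ∀ z ∈ Nb Ω K r, ∀ w ∈ Nb Ω K r, 0 < Dq ρ lam z w := by
      intro z hz w hw
      have := (hpos z (sub0 z hz)).1
      have := (hpos w (sub0 w hw)).1
      unfold Dq
      positivity
    have Dpos : ∀ z ∈ Nb Ω K r, ∀ w ∈ Nb Ω K r, 0 < DD z w := fun z hz w hw =>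
      lt_max_of_lt_left (dpos z hz w hw)
    have neg : ∀ z ∈ Nb Ω K r, ρ z ≤ 0 := fun z hz => by linarith [(hpos z (sub0 z hz)).1]
    have Dle : ∀ z ∈ Nb Ω K r, ∀ w ∈ Nb Ω K r, DD z w ≤ T * Dq ρ lam z w := by
      intro z hz w hw
      apply max_le
      · nlinarith [dpos z hz w hw]
      · exact H.dq_symm (neg z hz) (neg w hw)
    have Dtri : ∀ z ∈ Nb Ω K r, ∀ u ∈ Nb Ω K r, ∀ w ∈ Nb Ω K r, DD z w ≤ T * (DD z u + DD u w) := by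
      intro z hz u hu w hw
      apply max_le
      · refine (H.dq_tri (neg z hz) (neg u hu) (neg w hw)).trans ?_
        gcongr <;> exact le_max_left _ _
      · refine (H.dq_tri (neg w hw) (neg u hu) (neg z hz)).trans ?_
        rw [add_comm (Dq ρ lam w u)]
        gcongr <;> exact le_max_right _ _
    have klow : ∀ z ∈ Nb Ω K r, ∀ w ∈ Nb Ω K r,
        Real.log (DD z w) - Real.log (-ρ z) / 2 - Real.log (-ρ w) / 2 - (C1 + Real.log T)
        ≤ kobayashi Ω z w := by
      intro z hz w hw
      have h1 := hlow z (sub0 z hz) w (sub0 w hw)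
      have h2 := Real.log_le_log (Dpos z hz w hw) (Dle z hz w hw)
      rw [Real.log_mul (by positivity) (dpos z hz w hw).ne'] at h2
      linarith
    have kup : ∀ z ∈ Nb Ω K r, ∀ w ∈ Nb Ω K r, kobayashi Ω z w ≤
        Real.log (DD z w) - Real.log (-ρ z) / 2 - Real.log (-ρ w) / 2 + C2 := by
      intro z hz w hw
      have h1 := hup z (sub1 z hz) w (sub1 w hw)
      have h2 := Real.log_le_log (dpos z hz w hw) (le_max_left _ (Dq ρ lam w z))
      change _ ≤ Real.log (DD z w) at h2
      linarith
    refine ⟨2 * C2 + 2 * (C1 + Real.log T) + Real.log (4 * T ^ 2), ?_⟩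
    intro p hp q hq x hx w hw
    have u1 := kup p hp q hq
    have u2 := kup x hx w hw
    have v1 := klow p hp x hx
    have v2 := klow w hw q hq
    have v3 := klow x hx q hq
    have v4 := klow p hp w hw
    have P1 := Dpos p hp x hx
    have P2 := Dpos w hw q hq
    have P3 := Dpos x hx q hq
    have P4 := Dpos p hp w hw
    have P5 := Dpos p hp q hq
    have P6 := Dpos x hx w hw
    have Tp : 0 < T := by linarith
    have hq4 := quad_ineq Tp P1 P2 P3 P4 P5 P6 (Dtri p hp x hx q hq)
      (Dtri p hp w hw q hq) (by rw [ds p x]; exact Dtri x hx p hp w hw)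
      (by rw [ds w q]; exact Dtri x hx q hq w hw)
    rcases hq4 with h | h
    · left
      have h2 := Real.log_le_log (by positivity) h
      rw [Real.log_mul P5.ne' P6.ne', Real.log_mul (by positivity) (by positivity),
        Real.log_mul P1.ne' P2.ne'] at h2
      linarith
    · right
      have h2 := Real.log_le_log (by positivity) h
      rw [Real.log_mul P5.ne' P6.ne', Real.log_mul (by positivity) (by positivity),
        Real.log_mul P3.ne' P4.ne'] at h2
      linarith
  -- retraction onto N
  by_cases hne : (Nb Ω K r).Nonempty
  · obtain ⟨o, ho⟩ := hne
    have hρo := (hpos o (sub0 o ho)).1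
    set ε := min r (min 1 (-ρ o / (2 * M))) with hε
    have pε : 0 < ε := by rw [hε]; positivity
    have hoε : ∀ q ∈ K, ε ≤ dist o q := by
      intro q hq
      by_contra hh
      push Not at hh
      have e1 : dist o q < 1 := hh.trans_le ((min_le_right _ _).trans (min_le_left _ _))
      have e2 : dist o q < -ρ o / (2 * M) :=
        hh.trans_le ((min_le_right _ _).trans (min_le_right _ _))
      rw [lt_div_iff₀ (by positivity)] at e2
      have := H.rho_le hq e1.le
      linarith
    obtain ⟨Cε, hCε⟩ := hS ε pε
    have hret : ∀ x ∈ Ω, ∃ y ∈ Nb Ω K r, kobayashi Ω x y ≤ |Cε| := by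
      intro x hx
      by_cases hxN : x ∈ Nb Ω K r
      · exact ⟨x, hxN, by rw [kob_self hx]; exact abs_nonneg _⟩
      · refine ⟨o, ho, (hCε x hx o ho.1 (fun q hq => ?_) hoε).trans (le_abs_self _)⟩
        exact (min_le_left _ _).trans (hout x hx hxN q hq)
    have hcmp : ∀ x ∈ Ω, ∀ y ∈ Ω, ∀ x' ∈ Ω, ∀ y' ∈ Ω, kobayashi Ω x x' ≤ |Cε| →
        kobayashi Ω y y' ≤ |Cε| → kobayashi Ω x y ≤ kobayashi Ω x' y' + 2 * |Cε| := by
      intro x hx y hy x' hx' y' hy' h1 h2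
      have t1 := kob_triangle hx hx' hy
      have t2 := kob_triangle hx' hy' hy
      rw [kob_symm hy' hy] at t2
      linarith
    refine ⟨A + 8 * |Cε|, ?_⟩
    intro p hp q hq x hx w hw
    obtain ⟨p', hp', kp⟩ := hret p hp
    obtain ⟨q', hq', kq⟩ := hret q hq
    obtain ⟨x', hx', kx⟩ := hret x hx
    obtain ⟨w', hw', kw⟩ := hret w hw
    have kp' := kp; have kq' := kq; have kx' := kx; have kw' := kw
    rw [kob_symm hp hp'.1] at kp'
    rw [kob_symm hq hq'.1] at kq'
    rw [kob_symm hx hx'.1] at kx'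
    rw [kob_symm hw hw'.1] at kw'
    have a1 := hcmp p hp q hq p' hp'.1 q' hq'.1 kp kq
    have a2 := hcmp x hx w hw x' hx'.1 w' hw'.1 kx kw
    have a3 := hcmp p' hp'.1 x' hx'.1 p hp x hx kp' kx'
    have a4 := hcmp w' hw'.1 q' hq'.1 w hw q hq kw' kq'
    have a5 := hcmp x' hx'.1 q' hq'.1 x hx q hq kx' kq'
    have a6 := hcmp p' hp'.1 w' hw'.1 p hp w hw kp' kw'
    have s1 := kob_symm hw hx
    rcases hA p' hp' q' hq' x' hx' w' hw' with h | h
    · have := min_le_left (kobayashi Ω p w + kobayashi Ω w x - kobayashi Ω p x)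
        (kobayashi Ω x w + kobayashi Ω w q - kobayashi Ω x q)
      linarith
    · have := min_le_right (kobayashi Ω p w + kobayashi Ω w x - kobayashi Ω p x)
        (kobayashi Ω x w + kobayashi Ω w q - kobayashi Ω x q)
      linarith
  · rw [not_nonempty_iff_eq_empty] at hne
    obtain ⟨C, hC⟩ := hS r pr
    have hb : ∀ x ∈ Ω, ∀ y ∈ Ω, kobayashi Ω x y ≤ C := fun x hx y hy =>
      hC x hx y hy (hout x hx (by simp [hne])) (hout y hy (by simp [hne]))
    refine ⟨2 * C, ?_⟩
    intro p hp q hq x hx w hw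
    have := min_le_left (kobayashi Ω p w + kobayashi Ω w x - kobayashi Ω p x)
        (kobayashi Ω x w + kobayashi Ω w q - kobayashi Ω x q)
    have := hb w hw x hx
    have := hb p hp q hq
    have := kob_nonneg Ω p x
    have := kob_nonneg Ω w q
    linarith

end P7


section P8
set_option linter.all false
set_option linter.deprecated false
open Filter Topology ComplexConjugate

section sesq
variable {E : Type*} [NormedAddCommGroup E] [NormedSpace ℂ E]

lemma cs_smul (c : ℂ) (u : E) : c • u = c.re • u + c.im • (Complex.I • u) := by
  conv_lhs => rw [← Complex.re_add_im c]
  rw [add_smul, mul_smul]; simp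

lemma cI_smul (c : ℂ) (u : E) : Complex.I • c • u = c.re • (Complex.I • u) - c.im • u := by
  rw [cs_smul c u, smul_add, smul_comm Complex.I c.re u, smul_comm Complex.I c.im, smul_smul Complex.I,
    Complex.I_mul_I]; simp [sub_eq_add_neg]

/-- The sesquilinear form attached to a real bilinear form. -/
noncomputable def sesq (B : E →L[ℝ] E →L[ℝ] ℝ) : E →ₗ[ℂ] E →ₗ⋆[ℂ] ℂ :=
  LinearMap.mk₂'ₛₗ (RingHom.id ℂ) (starRingEnd ℂ)
    (fun u v => (((B u v + B (Complex.I • u) (Complex.I • v) : ℝ) : ℂ) +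
      Complex.I * ((B u (Complex.I • v) - B (Complex.I • u) v : ℝ) : ℂ)))
    (by intro a b c; simp only [map_add, smul_add, ContinuousLinearMap.add_apply]; push_cast; ring)
    (by
      intro c u v
      rw [cI_smul, cs_smul c u]
      simp only [map_add, map_sub, map_smul, ContinuousLinearMap.add_apply, ContinuousLinearMap.sub_apply,
        ContinuousLinearMap.smul_apply, smul_eq_mul, RingHom.id_apply]
      apply Complex.ext <;> simp <;> ring)
    (by intro a b c; simp only [map_add, smul_add, ContinuousLinearMap.add_apply]; push_cast; ring)
    (by
      intro c u v
      rw [cI_smul, cs_smul c v]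
      simp only [map_add, map_sub, map_smul, ContinuousLinearMap.add_apply, ContinuousLinearMap.sub_apply,
        ContinuousLinearMap.smul_apply, smul_eq_mul]
      apply Complex.ext <;> simp <;> ring)

lemma sesq_apply (B : E →L[ℝ] E →L[ℝ] ℝ) (u v : E) :
    sesq B u v = (((B u v + B (Complex.I • u) (Complex.I • v) : ℝ) : ℂ) +
      Complex.I * ((B u (Complex.I • v) - B (Complex.I • u) v : ℝ) : ℂ)) := rfl

end sesq

section conv
variable {n : ℕ}

lemma sum_stdBasis (X : EuclideanSpace ℂ (Fin n)) : X = ∑ j, X j • stdBasis j := by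
  have := (EuclideanSpace.basisFun (Fin n) ℂ).sum_repr X
  simpa [stdBasis] using this.symm

lemma levi_eq (ρ : EuclideanSpace ℂ (Fin n) → ℝ) (p X : EuclideanSpace ℂ (Fin n)) :
    leviForm ρ p X = sesq (fderiv ℝ (fderiv ℝ ρ) p) X X / 4 := by
  conv_rhs => rw [sum_stdBasis X]
  simp only [map_sum, LinearMap.sum_apply, map_smulₛₗ, LinearMap.smul_apply, leviForm, wirtinger2,
    iteratedFDeriv_two_apply, sesq_apply, smul_eq_mul, RingHom.id_apply]
  rw [Finset.sum_div, Finset.sum_comm]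
  refine Finset.sum_congr rfl fun j _ => ?_
  rw [Finset.mul_sum, Finset.sum_div]
  refine Finset.sum_congr rfl fun k _ => ?_
  simp
  ring

lemma wd_eq (ρ : EuclideanSpace ℂ (Fin n) → ℝ) (p X : EuclideanSpace ℂ (Fin n)) :
    ∑ j, wirtingerDeriv ρ p j * X j = (StrongDual.extendRCLike (𝕜 := ℂ) (fderiv ℝ ρ p)) X / 2 := by
  conv_rhs => rw [sum_stdBasis X]
  rw [map_sum, Finset.sum_div]
  refine Finset.sum_congr rfl fun j _ => ?_
  rw [map_smul, StrongDual.extendRCLike_apply, wirtingerDeriv]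
  simp
  ring

end conv

/-- Global defining function. -/
structure DF {E : Type*} [NormedAddCommGroup E] [NormedSpace ℂ E] (D : Set E) (ρ : E → ℝ)
    (V : Set E) : Prop where
  bd : Bornology.IsBounded D
  Vo : IsOpen V
  fr : frontier D ⊆ V
  cd : ContDiff ℝ 2 ρ
  cs : HasCompactSupport ρ
  iff : ∀ z ∈ V, (z ∈ D ↔ ρ z < 0)
  ne : ∀ p ∈ frontier D, fderiv ℝ ρ p ≠ 0
  levi : ∀ p ∈ frontier D, ∀ X : E, X ≠ 0 → fderiv ℝ ρ p X = 0 → fderiv ℝ ρ p (Complex.I • X) = 0 →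
    0 < fderiv ℝ (fderiv ℝ ρ) p X X +
      fderiv ℝ (fderiv ℝ ρ) p (Complex.I • X) (Complex.I • X)

open scoped Manifold ContDiff in
lemma exists_cutoff {E : Type*} [NormedAddCommGroup E] [NormedSpace ℝ E] [FiniteDimensional ℝ E]
    {K U : Set E} (hK : IsCompact K) (hU : IsOpen U) (hKU : K ⊆ U) :
    ∃ χ : E → ℝ, ContDiff ℝ 2 χ ∧ HasCompactSupport χ ∧ tsupport χ ⊆ U ∧ ∀ᶠ x in 𝓝ˢ K, χ x = 1 := by
  obtain ⟨δ, hδ, hδU⟩ := hK.exists_cthickening_subset_open hU hKU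
  have hs : IsClosed (thickening δ K)ᶜ := isOpen_thickening.isClosed_compl
  have hd : Disjoint (thickening δ K)ᶜ K :=
    disjoint_compl_left_iff_subset.mpr (self_subset_thickening hδ K)
  obtain ⟨f, h0, h1, -⟩ := exists_contMDiffMap_zero_one_nhds_of_isClosed (n := 2) 𝓘(ℝ, E) hs hK.isClosed hd
  have hsup : tsupport f ⊆ cthickening δ K := by
    refine closure_minimal ?_ isClosed_cthickening
    intro x hx
    by_contra hcon
    have : x ∈ (thickening δ K)ᶜ := fun h => hcon (thickening_subset_cthickening δ K h)
    exact hx (h0.self_of_nhdsSet x this)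
  refine ⟨f, f.contMDiff.contDiff, ?_, hsup.trans hδU, h1⟩
  exact (hK.cthickening).of_isClosed_subset (isClosed_tsupport _) hsup

lemma DF.of_psc {n : ℕ} {D : Set (EuclideanSpace ℂ (Fin n))} (h : IsStrictlyPseudoconvex D) :
    ∃ ρ V, DF D ρ V := by
  obtain ⟨hb, U, ρ, hU, hfr, hcd, hne, hD, hlevi⟩ := h
  have hK : IsCompact (frontier D) :=
    (Metric.isCompact_of_isClosed_isBounded isClosed_frontier
      (hb.closure.subset frontier_subset_closure))
  obtain ⟨χ, hχ, hχc, hχU, hχ1⟩ := exists_cutoff hK hU hfr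
  obtain ⟨W, hWo, hKW, hW1⟩ := mem_nhdsSet_iff_exists.mp hχ1
  have hagree : ∀ z ∈ W, χ z * ρ z = ρ z := fun z hz => by
    have : χ z = 1 := hW1 hz
    rw [this, one_mul]
  have hev : ∀ z ∈ W, (fun z => χ z * ρ z) =ᶠ[𝓝 z] ρ := fun z hz => by
    filter_upwards [hWo.mem_nhds hz] with w hw using hagree w hw
  refine ⟨fun z => χ z * ρ z, U ∩ W, ?_⟩
  refine ⟨hb, hU.inter hWo, fun p hp => ⟨hfr hp, hKW hp⟩, ?_, hχc.mul_right, ?_, ?_, ?_⟩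
  · rw [contDiff_iff_contDiffAt]
    intro x
    by_cases hx : x ∈ U
    · exact hχ.contDiffAt.mul (hcd.contDiffAt (hU.mem_nhds hx))
    · have hx' : x ∉ tsupport χ := fun h => hx (hχU h)
      have : (fun z => χ z * ρ z) =ᶠ[𝓝 x] fun _ => 0 := by
        filter_upwards [(isClosed_tsupport χ).isOpen_compl.mem_nhds hx'] with w hw
        rw [image_eq_zero_of_notMem_tsupport hw, zero_mul]
      exact contDiffAt_const.congr_of_eventuallyEq this
  · rintro z ⟨hzU, hzW⟩
    rw [hagree z hzW]
    have : z ∈ D ∩ U ↔ z ∈ {z ∈ U | ρ z < 0} := by rw [hD]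
    simpa [hzU] using this
  · intro p hp
    rw [(hev p (hKW hp)).fderiv_eq]
    exact hne p hp
  · intro p hp X hX h1 h2
    rw [(hev p (hKW hp)).fderiv_eq] at h1 h2
    rw [((hev p (hKW hp)).fderiv).fderiv_eq]
    have := hlevi p hp X hX (by
      rw [wd_eq, StrongDual.extendRCLike_apply, h1]
      have h2' : fderiv ℝ ρ p ((RCLike.I : ℂ) • X) = 0 := h2
      rw [h2']; simp)
    rw [levi_eq, sesq_apply] at this
    simp at this
    linarith
end P8


section P9
set_option linter.all false
set_option linter.deprecated false
open Filter Topology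

variable {E : Type*} [NormedAddCommGroup E] [NormedSpace ℂ E]

noncomputable def lamOf (ρ : E → ℝ) (z : E) : E →L[ℂ] ℂ :=
  StrongDual.extendRCLikeₗᵢ (𝕜 := ℂ) (fderiv ℝ ρ z)

lemma lamOf_apply (ρ : E → ℝ) (z v : E) : lamOf ρ z v =
    (fderiv ℝ ρ z v : ℂ) - Complex.I * (fderiv ℝ ρ z (Complex.I • v) : ℂ) := rfl

lemma lamOf_re (ρ : E → ℝ) (z v : E) : (lamOf ρ z v).re = fderiv ℝ ρ z v := by
  rw [lamOf_apply]; simp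

lemma lamOf_im (ρ : E → ℝ) (z v : E) : (lamOf ρ z v).im = - fderiv ℝ ρ z (Complex.I • v) := by
  rw [lamOf_apply]; simp

lemma lamOf_norm (ρ : E → ℝ) (z : E) : ‖lamOf ρ z‖ = ‖fderiv ℝ ρ z‖ :=
  (StrongDual.extendRCLikeₗᵢ (𝕜 := ℂ)).norm_map _

lemma lamOf_sub (ρ : E → ℝ) (z w : E) : ‖lamOf ρ z - lamOf ρ w‖ = ‖fderiv ℝ ρ z - fderiv ℝ ρ w‖ := by
  rw [lamOf, lamOf, ← map_sub (StrongDual.extendRCLikeₗᵢ (𝕜 := ℂ) (F := E))]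
  exact (StrongDual.extendRCLikeₗᵢ (𝕜 := ℂ)).norm_map _

/-- Complex bilinear part of a real bilinear form. -/
noncomputable def qf (B : E →L[ℝ] E →L[ℝ] ℝ) : E →L[ℂ] E →L[ℂ] ℂ :=
  LinearMap.mkContinuous₂ (LinearMap.mk₂ ℂ
    (fun u v => (((B u v - B (Complex.I • u) (Complex.I • v) : ℝ) : ℂ) -
      Complex.I * ((B u (Complex.I • v) + B (Complex.I • u) v : ℝ) : ℂ)) / 4)
    (by intro a b c; simp only [map_add, smul_add, ContinuousLinearMap.add_apply]; push_cast; ring)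
    (by
      intro c u v
      rw [cI_smul, cs_smul c u]
      simp only [map_add, map_sub, map_smul, ContinuousLinearMap.add_apply, ContinuousLinearMap.sub_apply,
        ContinuousLinearMap.smul_apply, smul_eq_mul, RingHom.id_apply]
      apply Complex.ext <;> simp <;> ring)
    (by intro a b c; simp only [map_add, smul_add, ContinuousLinearMap.add_apply]; push_cast; ring)
    (by
      intro c u v
      rw [cI_smul, cs_smul c v]
      simp only [map_add, map_sub, map_smul, ContinuousLinearMap.add_apply, ContinuousLinearMap.sub_apply,
        ContinuousLinearMap.smul_apply, smul_eq_mul]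
      apply Complex.ext <;> simp <;> ring)) ‖B‖ (by
    intro u v
    have hI : ∀ w : E, ‖Complex.I • w‖ = ‖w‖ := fun w => by rw [norm_smul]; simp
    have h1 := B.le_opNorm₂ u v
    have h2 := B.le_opNorm₂ (Complex.I • u) (Complex.I • v)
    have h3 := B.le_opNorm₂ u (Complex.I • v)
    have h4 := B.le_opNorm₂ (Complex.I • u) v
    rw [hI, hI] at h2
    rw [hI] at h3 h4
    simp only [LinearMap.mk₂_apply]
    rw [norm_div, show ‖(4:ℂ)‖ = 4 by simp, div_le_iff₀ (by norm_num)]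
    refine (norm_sub_le _ _).trans ?_
    rw [norm_mul, Complex.norm_I, one_mul, Complex.norm_real, Complex.norm_real]
    have h5 := norm_sub_le (B u v) (B (Complex.I • u) (Complex.I • v))
    have h6 := norm_add_le (B u (Complex.I • v)) (B (Complex.I • u) v)
    linarith)

lemma qf_apply (B : E →L[ℝ] E →L[ℝ] ℝ) (u v : E) : qf B u v =
    (((B u v - B (Complex.I • u) (Complex.I • v) : ℝ) : ℂ) -
      Complex.I * ((B u (Complex.I • v) + B (Complex.I • u) v : ℝ) : ℂ)) / 4 := rfl

lemma qf_re (B : E →L[ℝ] E →L[ℝ] ℝ) (v : E) : (qf B v v).re =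
    (B v v - B (Complex.I • v) (Complex.I • v)) / 4 := by
  rw [qf_apply]
  rw [show (4:ℂ) = ((4:ℝ):ℂ) by norm_num, Complex.div_ofReal_re]; simp

lemma qf_norm (B : E →L[ℝ] E →L[ℝ] ℝ) (u v : E) : ‖qf B u v‖ ≤ ‖B‖ * ‖u‖ * ‖v‖ :=
  ((qf B).le_opNorm₂ u v).trans (by
    have h : ‖qf B‖ ≤ ‖B‖ := LinearMap.mkContinuous₂_norm_le _ (norm_nonneg B) _
    gcongr)

variable {D V : Set E} {ρ : E → ℝ}

lemma DF.cd1 (H : DF D ρ V) : ContDiff ℝ 1 (fderiv ℝ ρ) := H.cd.fderiv_right (by norm_num)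
lemma DF.cd0 (H : DF D ρ V) : Continuous (fderiv ℝ (fderiv ℝ ρ)) := H.cd1.continuous_fderiv (by norm_num)

lemma DF.bounds (H : DF D ρ V) : ∃ M, 1 ≤ M ∧ (∀ z w, ‖lamOf ρ z - lamOf ρ w‖ ≤ M * ‖z - w‖) ∧
    (∀ z, ‖lamOf ρ z‖ ≤ M) ∧ (∀ z, ‖fderiv ℝ (fderiv ℝ ρ) z‖ ≤ M) ∧ (∀ z w, |ρ z - ρ w| ≤ M * ‖z - w‖) := by
  have hs1 := H.cs.fderiv ℝ
  obtain ⟨C1, h1⟩ := ContDiff.lipschitzWith_of_hasCompactSupport hs1 H.cd1 (by norm_num)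
  obtain ⟨C2, h2⟩ := Continuous.bounded_above_of_compact_support H.cd1.continuous hs1
  obtain ⟨C4, h4⟩ := ContDiff.lipschitzWith_of_hasCompactSupport H.cs H.cd (by norm_num)
  have p1 : 0 ≤ (C1:ℝ) := C1.2
  have p4 : 0 ≤ (C4:ℝ) := C4.2
  have p2 := abs_nonneg C2
  have l2 := le_abs_self C2
  obtain ⟨M, hM⟩ : ∃ M : ℝ, M = 1 + C1 + |C2| + C4 := ⟨_, rfl⟩
  refine ⟨M, by linarith, fun z w => ?_, fun z => ?_, fun z => ?_, fun z w => ?_⟩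
  · rw [lamOf_sub]
    exact (h1.norm_sub_le z w).trans (mul_le_mul_of_nonneg_right (by linarith) (norm_nonneg _))
  · rw [lamOf_norm]; exact (h2 z).trans (by linarith)
  · exact (norm_fderiv_le_of_lipschitz ℝ h1).trans (by linarith)
  · exact (h4.norm_sub_le z w).trans (mul_le_mul_of_nonneg_right (by linarith) (norm_nonneg _))

lemma DF.hline (H : DF D ρ V) (z v : E) (t : ℝ) :
    HasDerivAt (fun t : ℝ => ρ (z + t • v)) (fderiv ℝ ρ (z + t • v) v) t := by
  have h1 : HasFDerivAt ρ (fderiv ℝ ρ (z + t • v)) (z + t • v) :=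
    (H.cd.differentiable (by norm_num) _).hasFDerivAt
  have h2 : HasDerivAt (fun t : ℝ => z + t • v) v t := by
    simpa using ((hasDerivAt_id t).smul_const v).const_add z
  exact h1.comp_hasDerivAt t h2

lemma DF.hline2 (H : DF D ρ V) (z v : E) (t : ℝ) :
    HasDerivAt (fun t : ℝ => fderiv ℝ ρ (z + t • v)) (fderiv ℝ (fderiv ℝ ρ) (z + t • v) v) t := by
  have h1 : HasFDerivAt (fderiv ℝ ρ) (fderiv ℝ (fderiv ℝ ρ) (z + t • v)) (z + t • v) :=
    (H.cd1.differentiable (by norm_num) _).hasFDerivAt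
  have h2 : HasDerivAt (fun t : ℝ => z + t • v) v t := by
    simpa using ((hasDerivAt_id t).smul_const v).const_add z
  exact h1.comp_hasDerivAt t h2

lemma DF.taylor1 (H : DF D ρ V) {M : ℝ} (hM : ∀ z w, ‖lamOf ρ z - lamOf ρ w‖ ≤ M * ‖z - w‖)
    (hM0 : 0 ≤ M) (z v : E) : |ρ (z + v) - ρ z - (lamOf ρ z v).re| ≤ M * ‖v‖ ^ 2 := by
  have := norm_image_sub_le_of_norm_deriv_le_segment_01' (C := M * ‖v‖ ^ 2)
    (f := fun t : ℝ => ρ (z + t • v) - t * fderiv ℝ ρ z v)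
    (f' := fun t : ℝ => fderiv ℝ ρ (z + t • v) v - 1 * fderiv ℝ ρ z v)
    (fun t _ => ((H.hline z v t).sub ((hasDerivAt_id t).mul_const _)).hasDerivWithinAt)
    (fun t ht => by
      have h1 := hM (z + t • v) z
      rw [lamOf_sub] at h1
      rw [one_mul, ← ContinuousLinearMap.sub_apply]
      refine (ContinuousLinearMap.le_opNorm _ _).trans ?_
      rw [add_sub_cancel_left, norm_smul] at h1
      have h2 : ‖t‖ ≤ 1 := by rw [Real.norm_of_nonneg ht.1]; exact ht.2.le
      have h3 : M * (‖t‖ * ‖v‖) ≤ M * ‖v‖ :=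
        mul_le_mul_of_nonneg_left (mul_le_of_le_one_left (norm_nonneg _) h2) hM0
      calc _ ≤ (M * ‖v‖) * ‖v‖ := mul_le_mul_of_nonneg_right (h1.trans h3) (norm_nonneg _)
        _ = _ := by ring)
  rw [lamOf_re]
  simp at this
  convert this using 2
  ring

lemma DF.taylor2 (H : DF D ρ V) {ε : ℝ} (hε : 0 < ε) : ∃ δ > 0, ∀ z v, ‖v‖ < δ →
    |ρ (z + v) - ρ z - fderiv ℝ ρ z v - fderiv ℝ (fderiv ℝ ρ) z v v / 2| ≤ ε * ‖v‖ ^ 2 := by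
  have huc : UniformContinuous (fderiv ℝ (fderiv ℝ ρ)) :=
    HasCompactSupport.uniformContinuous_of_continuous ((H.cs.fderiv ℝ).fderiv ℝ) H.cd0
  obtain ⟨δ, hδ, hu⟩ := (Metric.uniformContinuous_iff (f := fderiv ℝ (fderiv ℝ ρ))).mp huc ε hε
  refine ⟨δ, hδ, ?_⟩
  have hA : ∀ z v, ‖v‖ < δ → ‖fderiv ℝ ρ (z + v) - fderiv ℝ ρ z - fderiv ℝ (fderiv ℝ ρ) z v‖ ≤ ε * ‖v‖ := by
    intro z v hv
    have := norm_image_sub_le_of_norm_deriv_le_segment_01' (C := ε * ‖v‖)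
      (f := fun t : ℝ => fderiv ℝ ρ (z + t • v) - t • fderiv ℝ (fderiv ℝ ρ) z v)
      (f' := fun t : ℝ => fderiv ℝ (fderiv ℝ ρ) (z + t • v) v - (1:ℝ) • fderiv ℝ (fderiv ℝ ρ) z v)
      (fun t _ => ((H.hline2 z v t).sub ((hasDerivAt_id t).smul_const _)).hasDerivWithinAt)
      (fun t ht => by
        rw [one_smul, ← ContinuousLinearMap.sub_apply]
        refine (ContinuousLinearMap.le_opNorm _ _).trans ?_
        gcongr
        rw [← dist_eq_norm]
        refine (hu ?_).le
        rw [dist_eq_norm, add_sub_cancel_left, norm_smul, Real.norm_of_nonneg ht.1]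
        exact (mul_le_of_le_one_left (norm_nonneg _) ht.2.le).trans_lt hv)
    simp only [one_smul, zero_smul, add_zero, sub_zero] at this
    rwa [sub_right_comm] at this
  intro z v hv
  have := norm_image_sub_le_of_norm_deriv_le_segment_01' (C := ε * ‖v‖ ^ 2)
    (f := fun t : ℝ => ρ (z + t • v) - t * fderiv ℝ ρ z v - t ^ 2 * (fderiv ℝ (fderiv ℝ ρ) z v v / 2))
    (f' := fun t : ℝ => fderiv ℝ ρ (z + t • v) v - 1 * fderiv ℝ ρ z v -
      ((2:ℕ):ℝ) * t ^ (2 - 1) * (fderiv ℝ (fderiv ℝ ρ) z v v / 2))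
    (fun t _ => (((H.hline z v t).sub ((hasDerivAt_id t).mul_const _)).sub
      ((hasDerivAt_pow 2 t).mul_const _)).hasDerivWithinAt)
    (fun t ht => by
      have h2 : ‖t • v‖ ≤ ‖v‖ := by
        rw [norm_smul, Real.norm_of_nonneg ht.1]
        exact mul_le_of_le_one_left (norm_nonneg _) ht.2.le
      have h1 := hA z (t • v) (h2.trans_lt hv)
      have h3 : fderiv ℝ ρ (z + t • v) v - 1 * fderiv ℝ ρ z v -
          ((2:ℕ):ℝ) * t ^ (2 - 1) * (fderiv ℝ (fderiv ℝ ρ) z v v / 2) =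
          (fderiv ℝ ρ (z + t • v) - fderiv ℝ ρ z - fderiv ℝ (fderiv ℝ ρ) z (t • v)) v := by
        simp; ring
      rw [h3]
      refine (ContinuousLinearMap.le_opNorm _ _).trans ?_
      calc _ ≤ (ε * ‖v‖) * ‖v‖ := by gcongr; exact h1.trans (by gcongr)
        _ = _ := by ring)
  simp at this
  convert this using 2
  ring

lemma DF.zero (H : DF D ρ V) (hD : IsOpen D) {p : E} (hp : p ∈ frontier D) : ρ p = 0 := by
  have hc : Continuous ρ := H.cd.continuous
  have h1 : ¬ ρ p < 0 := by
    rw [← H.iff p (H.fr hp)]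
    rw [hD.frontier_eq] at hp
    exact hp.2
  have h2 : ρ p ≤ 0 := by
    by_contra hcon
    push Not at hcon
    have hN : V ∩ {z | 0 < ρ z} ∈ 𝓝 p := (H.Vo.inter (isOpen_lt continuous_const hc)).mem_nhds ⟨H.fr hp, hcon⟩
    obtain ⟨z, ⟨hzV, hz⟩, hzD⟩ := mem_closure_iff_nhds.mp (frontier_subset_closure hp) _ hN
    have := (H.iff z hzV).mp hzD
    simp at hz; linarith
  linarith [not_lt.mp h1]

end P9


section P10
set_option linter.all false
set_option linter.deprecated false
open Filter Topology

lemma compact_penalty {X : Type*} [TopologicalSpace X] {T : Set X} (hT : IsCompact T) {F g : X → ℝ}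
    (hF : Continuous F) (hg : Continuous g) (hg0 : ∀ x, 0 ≤ g x) (h : ∀ x ∈ T, g x = 0 → 0 < F x) :
    ∃ A ≥ (0:ℝ), ∃ c > 0, ∀ x ∈ T, c ≤ F x + A * g x := by
  have key := hT.elim_directed_cover (fun n : ℕ => {x | 1 / ((n:ℝ) + 1) < F x + n * g x})
    (fun n => isOpen_lt continuous_const (by fun_prop)) ?_ ?_
  · obtain ⟨n, hn⟩ := key
    exact ⟨n, by positivity, 1 / ((n:ℝ) + 1), by positivity, fun x hx => (hn hx).le⟩
  · intro x hx
    rw [mem_iUnion]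
    by_cases h0 : g x = 0
    · obtain ⟨n, hn⟩ := exists_nat_one_div_lt (h x hx h0)
      exact ⟨n, by simp only [mem_setOf_eq, h0]; simpa using hn⟩
    · have hp : 0 < g x := lt_of_le_of_ne (hg0 x) (Ne.symm h0)
      obtain ⟨n, hn⟩ := exists_nat_gt ((1 - F x) / g x)
      refine ⟨n, ?_⟩
      rw [div_lt_iff₀ hp] at hn
      have : 1 / ((n:ℝ) + 1) ≤ 1 := by
        rw [div_le_one (by positivity)]; linarith [Nat.cast_nonneg (α := ℝ) n]
      simp only [mem_setOf_eq]
      linarith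
  · refine directed_of_isDirected_le ?_
    intro i j hij x hx
    simp only [mem_setOf_eq] at hx ⊢
    have hij' : (i:ℝ) ≤ j := by exact_mod_cast hij
    have h1 : 1 / ((j:ℝ) + 1) ≤ 1 / ((i:ℝ) + 1) := by gcongr
    have h2 : (i:ℝ) * g x ≤ j * g x := mul_le_mul_of_nonneg_right hij' (hg0 x)
    linarith

variable {E : Type*} [NormedAddCommGroup E] [NormedSpace ℂ E]
variable {D V : Set E} {ρ : E → ℝ}

lemma DF.lamCont (H : DF D ρ V) : Continuous (lamOf ρ) :=
  (StrongDual.extendRCLikeₗᵢ (𝕜 := ℂ)).continuous.comp H.cd1.continuous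

/-- The (four times) Levi form. -/
noncomputable def Sf (ρ : E → ℝ) (p v : E) : ℝ := fderiv ℝ (fderiv ℝ ρ) p v v +
      fderiv ℝ (fderiv ℝ ρ) p (Complex.I • v) (Complex.I • v)

lemma DF.SfCont (H : DF D ρ V) : Continuous (fun x : E × E => Sf ρ x.1 x.2) := by
  have h := H.cd0.comp (continuous_fst (X := E) (Y := E))
  have hI : Continuous (fun x : E × E => Complex.I • x.2) := continuous_snd.const_smul _
  exact ((h.clm_apply continuous_snd).clm_apply continuous_snd).add ((h.clm_apply hI).clm_apply hI)

lemma DF.fr_compact [FiniteDimensional ℂ E] (H : DF D ρ V) : IsCompact (frontier D) := by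
  have : ProperSpace E := FiniteDimensional.proper ℂ E
  exact Metric.isCompact_of_isClosed_isBounded isClosed_frontier
      (H.bd.closure.subset frontier_subset_closure)

lemma Sf_smul (p v : E) (t : ℝ) : Sf ρ p (t • v) = t ^ 2 * Sf ρ p v := by
  simp only [Sf, smul_comm Complex.I t v, map_smul, ContinuousLinearMap.smul_apply, smul_eq_mul]
  ring

lemma DF.convexify [FiniteDimensional ℂ E] (H : DF D ρ V) : ∃ A ≥ (0:ℝ), ∃ c > 0, ∀ p ∈ frontier D, ∀ v,
    2 * c * ‖v‖ ^ 2 ≤ Sf ρ p v / 4 + A * ‖lamOf ρ p v‖ ^ 2 := by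
  have : ProperSpace E := FiniteDimensional.proper ℂ E
  have hT : IsCompact (frontier D ×ˢ sphere (0:E) 1) := H.fr_compact.prod (isCompact_sphere 0 1)
  have hg : Continuous (fun x : E × E => ‖lamOf ρ x.1 x.2‖ ^ 2) :=
    (((H.lamCont.comp continuous_fst).clm_apply continuous_snd).norm).pow 2
  obtain ⟨A, hA, c, hc, h⟩ := compact_penalty hT (F := fun x => Sf ρ x.1 x.2 / 4)
    (H.SfCont.div_const _) hg (fun x => by positivity) (by
      rintro ⟨p, v⟩ ⟨hp, hv⟩ h0
      simp only at h0 hp hv ⊢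
      have h1 : lamOf ρ p v = 0 := by simpa using h0
      have hv0 : v ≠ 0 := by rintro rfl; simp at hv
      have h2 := congrArg Complex.re h1
      have h3 := congrArg Complex.im h1
      rw [lamOf_re] at h2
      rw [lamOf_im] at h3
      simp at h2 h3
      have := H.levi p hp v hv0 h2 h3
      simp only [Sf]; linarith)
  refine ⟨A, hA, c / 2, by positivity, fun p hp v => ?_⟩
  by_cases hv : v = 0
  · subst hv; simp [Sf]
  have hv' : ‖v‖ ≠ 0 := norm_ne_zero_iff.mpr hv
  set u : E := (‖v‖⁻¹ : ℝ) • v with hu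
  have hvu : v = ‖v‖ • u := by rw [hu, smul_smul, mul_inv_cancel₀ hv', one_smul]
  have hu1 : ‖u‖ = 1 := by rw [hu, norm_smul]; simp [hv']
  have := h (p, u) ⟨hp, by simpa using hu1⟩
  simp only at this
  have hl : ‖lamOf ρ p v‖ = ‖v‖ * ‖lamOf ρ p u‖ := by
    conv_lhs => rw [hvu]
    rw [← Complex.coe_smul, map_smul, norm_smul]; simp
  have hS : Sf ρ p v = ‖v‖ ^ 2 * Sf ρ p u := by
    conv_lhs => rw [hvu]
    rw [Sf_smul]
  rw [hl, hS]
  calc 2 * (c / 2) * ‖v‖ ^ 2 = ‖v‖ ^ 2 * c := by ring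
    _ ≤ ‖v‖ ^ 2 * (Sf ρ p u / 4 + A * ‖lamOf ρ p u‖ ^ 2) := by gcongr
    _ = _ := by ring

lemma DF.lam_lower [FiniteDimensional ℂ E] (H : DF D ρ V) : ∃ m > 0, ∀ p ∈ frontier D, m ≤ ‖lamOf ρ p‖ := by
  rcases (frontier D).eq_empty_or_nonempty with h | h
  · exact ⟨1, one_pos, by simp [h]⟩
  obtain ⟨p, hp, hmin⟩ := H.fr_compact.exists_isMinOn h (H.lamCont.norm.continuousOn)
  refine ⟨‖lamOf ρ p‖, ?_, fun q hq => hmin hq⟩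
  rw [lamOf_norm, gt_iff_lt, norm_pos_iff]
  exact H.ne p hp

lemma exists_nu (l : E →L[ℂ] ℂ) {m : ℝ} (hm : 0 < m) (h : m / 2 ≤ ‖l‖) :
    ∃ ν, l ν = -1 ∧ ‖ν‖ ≤ 4 / m := by
  obtain ⟨v, hv⟩ : ∃ v, m / 4 * ‖v‖ < ‖l v‖ := by
    by_contra hcon
    push Not at hcon
    have := l.opNorm_le_bound (by positivity) hcon
    linarith
  have hl : l v ≠ 0 := by
    intro h0
    rw [h0, norm_zero] at hv
    have : 0 ≤ m / 4 * ‖v‖ := by positivity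
    linarith
  refine ⟨-(l v)⁻¹ • v, ?_, ?_⟩
  · rw [map_smul, smul_eq_mul, neg_mul, inv_mul_cancel₀ hl]
  · rw [norm_smul, norm_neg, norm_inv, ← div_eq_inv_mul, div_le_div_iff₀ (norm_pos_iff.mpr hl) hm]
    linarith

/-- Elementary inequality behind the holomorphic support function. -/
lemma apos_aux {r q B4 S L A M c e nv reL : ℝ} (hA : 0 ≤ A) (hM : 1 ≤ M) (hc : 0 < c)
    (hr : r < 0) (hrM : -r ≤ M * nv) (hnv : 0 ≤ nv) (hnvη : nv ≤ e)
    (he1 : 4 * A * M * e ≤ 1) (he2 : 8 * A * M ^ 2 * e ^ 2 ≤ c)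
    (ht1 : |r - reL| ≤ M * nv ^ 2) (ht2 : r - reL - B4 ≥ -(c / 2 * nv ^ 2))
    (hB : B4 - q = S) (hS : 2 * c * nv ^ 2 ≤ S + A * L) :
    c * nv ^ 2 ≤ -reL - q - A * (2 * reL ^ 2 - L) := by
  have h1 : reL ^ 2 ≤ 2 * r ^ 2 + 2 * M ^ 2 * nv ^ 4 := by
    obtain ⟨a1, a2⟩ := abs_le.mp ht1
    have : (reL - r) ^ 2 ≤ (M * nv ^ 2) ^ 2 := sq_le_sq' (by linarith) (by linarith)
    nlinarith [sq_nonneg (reL - 2 * r)]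
  have h2 : A * reL ^ 2 ≤ A * (2 * r ^ 2 + 2 * M ^ 2 * nv ^ 4) := mul_le_mul_of_nonneg_left h1 hA
  have h3 : 4 * A * (-r) ≤ 1 := by
    have : 4 * A * (-r) ≤ 4 * A * (M * e) := by
      apply mul_le_mul_of_nonneg_left _ (by positivity)
      exact hrM.trans (mul_le_mul_of_nonneg_left hnvη (by linarith))
    linarith
  have h4 : 4 * A * (-r) * (-r) ≤ 1 * (-r) := mul_le_mul_of_nonneg_right h3 (by linarith)
  have h5 : 8 * A * M ^ 2 * nv ^ 2 ≤ c := by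
    refine le_trans ?_ he2
    gcongr
  have h6 : 8 * A * M ^ 2 * nv ^ 2 * nv ^ 2 ≤ c * nv ^ 2 := mul_le_mul_of_nonneg_right h5 (by positivity)
  have e1 : 4 * A * (-r) * (-r) = 4 * (A * r ^ 2) := by ring
  have e2 : 8 * A * M ^ 2 * nv ^ 2 * nv ^ 2 = 8 * (A * M ^ 2 * nv ^ 4) := by ring
  have e3 : A * (2 * r ^ 2 + 2 * M ^ 2 * nv ^ 4) = 2 * (A * r ^ 2) + 2 * (A * M ^ 2 * nv ^ 4) := by ring
  rw [e1] at h4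
  rw [e2] at h6
  rw [e3] at h2
  have e4 : A * (2 * reL ^ 2 - L) = 2 * (A * reL ^ 2) - A * L := by ring
  rw [e4]
  linarith
end P10


section P11
set_option linter.all false
set_option linter.deprecated false
open Filter Topology

variable {E : Type*} [NormedAddCommGroup E] [NormedSpace ℂ E]
variable {G L V : Set E} {ρ : E → ℝ}

lemma exists_small {x : ℝ} (hx : 0 ≤ x) {y : ℝ} (hy : 0 < y) : ∃ η > 0, ∀ e, 0 ≤ e → e ≤ η → x * e ≤ y := by
  refine ⟨y / (x + 1), by positivity, fun e he h => ?_⟩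
  calc x * e ≤ (x + 1) * (y / (x + 1)) := by gcongr; linarith
    _ = y := by field_simp

set_option maxHeartbeats 1000000 in
lemma DF.bdata [FiniteDimensional ℂ E] (H : DF G ρ V) (hG : IsOpen G) (hL : IsClosed L) (hLG : L ⊆ G)
    (hGn : G ≠ univ) :
    ∃ lam a η c M, BD (G \ L) (frontier G) ρ lam a η c M := by
  haveI : FiniteDimensional ℝ E := FiniteDimensional.complexToReal E
  obtain ⟨M0, hM1, hLip, hlB, hBB, hρL⟩ := H.bounds
  obtain ⟨A, hA, c, hc, hconv⟩ := H.convexify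
  obtain ⟨m, hm, hml⟩ := H.lam_lower
  obtain ⟨δ, hδ, ht2⟩ := H.taylor2 (ε := c / 2) (by positivity)
  have hfrG : ∀ p ∈ frontier G, p ∉ G := fun p hp => by
    rw [hG.frontier_eq] at hp; exact hp.2
  obtain ⟨η1, hη1, hV⟩ := H.fr_compact.exists_thickening_subset_open (t := V ∩ Lᶜ)
    (H.Vo.inter hL.isOpen_compl) (fun p hp => ⟨H.fr hp, fun h => hfrG p hp (hLG h)⟩)
  obtain ⟨N, hN⟩ : ∃ N : ℝ, N = 4 / m := ⟨_, rfl⟩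
  have hN0 : 0 < N := by rw [hN]; positivity
  have hM0 : 0 < M0 := by linarith
  obtain ⟨η2, hη2, k2⟩ := exists_small (x := M0) hM0.le (y := m / 2) (by positivity)
  obtain ⟨η3, hη3, k3⟩ := exists_small (x := 4 * A * M0) (by positivity) one_pos
  obtain ⟨η4, hη4, k4⟩ := exists_small (x := 8 * A * M0 ^ 2) (by positivity) hc
  obtain ⟨η5, hη5, k5⟩ := exists_small (x := 4 * M0 ^ 2 * N ^ 2) (by positivity) (y := 1 / 2) (by positivity)
  obtain ⟨η6, hη6, k6⟩ := exists_small (x := 1 + 2 * N * M0) (by positivity) (y := η1 / 2) (by positivity)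
  obtain ⟨η, hη, l1, l2, l3, l4, l5, l6, lδ, l7⟩ : ∃ η > 0, η ≤ η1 ∧ η ≤ η2 ∧ η ≤ η3 ∧ η ≤ η4 ∧ η ≤ η5 ∧
      η ≤ η6 ∧ η ≤ δ ∧ η ≤ 1 := by
    refine ⟨min η1 (min η2 (min η3 (min η4 (min η5 (min η6 (min δ 1)))))), by positivity, ?_⟩
    simp only [le_min_iff, min_le_iff, le_refl, true_or, or_true, and_true, true_and]
  have hzero : ∀ p ∈ frontier G, ρ p = 0 := fun p hp => H.zero hG hp
  have hin : ∀ p ∈ frontier G, ∀ x, dist x p < η1 → x ∈ V ∧ x ∉ L := fun p hp x hx =>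
    hV (mem_thickening_iff.mpr ⟨p, hp, hx⟩)
  have hnu : ∀ p ∈ frontier G, ∀ z, dist z p < η → ∃ ν, lamOf ρ z ν = -1 ∧ ‖ν‖ ≤ N := by
    intro p hp z hz
    rw [hN]
    apply exists_nu _ hm
    have h1 := hLip p z
    have h2 := norm_sub_norm_le (lamOf ρ p) (lamOf ρ z)
    rw [← dist_eq_norm p z, dist_comm p z] at h1
    have h3 := k2 η hη.le l2
    have h4 : M0 * dist z p ≤ M0 * η := by gcongr
    have h5 := hml p hp
    linarith
  obtain ⟨M, hM⟩ : ∃ M : ℝ, M = M0 + (M0 + A * M0 ^ 2) + 2 * N + diam G := ⟨_, rfl⟩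
  have hdG : 0 ≤ diam G := diam_nonneg
  have hAM : 0 ≤ A * M0 ^ 2 := by positivity
  have hMM : M0 ≤ M := by linarith
  refine ⟨lamOf ρ, fun p x => -(lamOf ρ p (x - p) + qf (fderiv ℝ (fderiv ℝ ρ) p) (x - p) (x - p) +
    A * (lamOf ρ p (x - p)) ^ 2), η, c, M, ?_⟩
  refine ⟨hη, hc, by linarith, ?_, fun p hp h => hfrG p hp h.1, hzero, ?_, ?_, ?_, ?_, ?_, ?_, ?_, ?_, ?_⟩
  · intro x hx y hy
    have := dist_le_diam_of_mem H.bd hx.1 hy.1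
    linarith
  · intro p hp x hx
    obtain ⟨h1, h2⟩ := hin p hp x (hx.trans_le l1)
    rw [← H.iff x h1]
    simp [h2]
  · intro x hx q hq hxq
    obtain ⟨h1, h2⟩ := hin q hq x (hxq.trans_le l1)
    have hneg := (H.iff x h1).mp hx.1
    obtain ⟨ν, hν1, hν2⟩ := hnu q hq x hxq
    obtain ⟨d, hd⟩ : ∃ d : ℝ, d = -ρ x := ⟨_, rfl⟩
    have hd0 : 0 < d := by linarith
    have hdη : d ≤ M0 * η := by
      have h3 := hρL q x
      rw [hzero q hq, ← dist_eq_norm q x, dist_comm q x] at h3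
      have h4 := (abs_le.mp h3).2
      have h5 : M0 * dist x q ≤ M0 * η := by gcongr
      linarith
    set y : E := x + ((-(2 * d) : ℝ) : ℂ) • ν with hy
    have hny : ‖((-(2 * d) : ℝ) : ℂ) • ν‖ ≤ 2 * d * N := by
      rw [norm_smul, Complex.norm_real, norm_neg, Real.norm_of_nonneg (by positivity)]
      gcongr
    have hxy : dist x y ≤ 2 * d * N := by
      rw [hy, dist_self_add_right]; exact hny
    have hyρ : 0 < ρ y := by
      have h3 := H.taylor1 hLip hM0.le x (((-(2 * d) : ℝ) : ℂ) • ν)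
      rw [← hy, map_smul, hν1] at h3
      have e1 : (((-(2 * d) : ℝ) : ℂ) • (-1 : ℂ)).re = 2 * d := by simp
      rw [e1] at h3
      have h4 := (abs_le.mp h3).1
      have h5 : M0 * ‖((-(2 * d) : ℝ) : ℂ) • ν‖ ^ 2 ≤ M0 * (2 * d * N) ^ 2 := by gcongr
      have h6 : 4 * M0 * N ^ 2 * d ≤ 1 / 2 := by
        calc 4 * M0 * N ^ 2 * d ≤ 4 * M0 * N ^ 2 * (M0 * η) := by gcongr
          _ = 4 * M0 ^ 2 * N ^ 2 * η := by ring
          _ ≤ 1 / 2 := k5 η hη.le l5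
      have h7 : M0 * (2 * d * N) ^ 2 ≤ 1 / 2 * d := by
        calc M0 * (2 * d * N) ^ 2 = 4 * M0 * N ^ 2 * d * d := by ring
          _ ≤ 1 / 2 * d := mul_le_mul_of_nonneg_right h6 hd0.le
      linarith
    have hyV : y ∈ V := by
      refine (hin q hq y ?_).1
      have h3 : dist y q ≤ dist x y + dist x q := by
        rw [dist_comm x y]; exact dist_triangle y x q
      have h4 := k6 η hη.le l6
      have h5 : 2 * d * N ≤ 2 * (M0 * η) * N := by gcongr
      have h6 : (1 + 2 * N * M0) * η = η + 2 * (M0 * η) * N := by ring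
      linarith
    have hyG : y ∉ G := fun h => by
      have := (H.iff y hyV).mp h
      linarith
    obtain ⟨p, hp, hpd⟩ := exists_mem_frontier_infDist_compl_eq_dist hx.1 hGn
    refine ⟨p, hp, ?_⟩
    rw [← hpd, ← hd]
    refine (infDist_le_dist_of_mem (show y ∈ Gᶜ from hyG)).trans (hxy.trans ?_)
    calc 2 * d * N = (2 * N) * d := by ring
      _ ≤ M * d := by gcongr; linarith
  · intro z w
    exact (hLip z w).trans (mul_le_mul_of_nonneg_right hMM (norm_nonneg _))
  · intro z; exact (hlB z).trans hMM
  · intro z v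
    exact (H.taylor1 hLip hM0.le z v).trans (mul_le_mul_of_nonneg_right hMM (by positivity))
  · intro p hp z hz
    obtain ⟨ν, h1, h2⟩ := hnu p hp z hz
    exact ⟨ν, h1, by linarith⟩
  · intro p hp
    have h0 : Differentiable ℂ (fun x : E => x - p) := differentiable_id.sub_const p
    have h1 : Differentiable ℂ (fun x : E => lamOf ρ p (x - p)) := (lamOf ρ p).differentiable.comp h0
    have h2 : Differentiable ℂ (fun x : E => qf (fderiv ℝ (fderiv ℝ ρ) p) (x - p) (x - p)) :=
      ((qf (fderiv ℝ (fderiv ℝ ρ) p)).differentiable.comp h0).clm_apply h0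
    exact ((h1.add h2).add ((h1.pow 2).const_mul _)).neg
  · intro p hp x
    have e : -(lamOf ρ p (x - p) + qf (fderiv ℝ (fderiv ℝ ρ) p) (x - p) (x - p) +
        A * (lamOf ρ p (x - p)) ^ 2) + lamOf ρ p (x - p) =
        -(qf (fderiv ℝ (fderiv ℝ ρ) p) (x - p) (x - p) + A * (lamOf ρ p (x - p)) ^ 2) := by ring
    beta_reduce
    rw [e, norm_neg]
    refine (norm_add_le _ _).trans ?_
    rw [norm_mul, norm_pow, Complex.norm_real, Real.norm_of_nonneg hA]
    have h1 : ‖qf (fderiv ℝ (fderiv ℝ ρ) p) (x - p) (x - p)‖ ≤ M0 * ‖x - p‖ * ‖x - p‖ :=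
      (qf_norm _ _ _).trans (by gcongr; exact hBB p)
    have h2 : ‖lamOf ρ p (x - p)‖ ≤ M0 * ‖x - p‖ :=
      ((lamOf ρ p).le_opNorm _).trans (by gcongr; exact hlB p)
    have h3 : A * ‖lamOf ρ p (x - p)‖ ^ 2 ≤ A * (M0 * ‖x - p‖) ^ 2 := by gcongr
    calc _ ≤ M0 * ‖x - p‖ * ‖x - p‖ + A * (M0 * ‖x - p‖) ^ 2 := add_le_add h1 h3
      _ = (M0 + A * M0 ^ 2) * ‖x - p‖ ^ 2 := by ring
      _ ≤ M * ‖x - p‖ ^ 2 := by gcongr; linarith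
  · intro p hp x hx hxp
    have hxV := (hin p hp x (hxp.trans_le l1)).1
    have hneg := (H.iff x hxV).mp hx.1
    rw [dist_eq_norm] at hxp
    have hx' : p + (x - p) = x := by abel
    have t1 := H.taylor1 hLip hM0.le p (x - p)
    have t2 := ht2 p (x - p) (hxp.trans_le lδ)
    rw [hx', hzero p hp, sub_zero, lamOf_re] at t1
    rw [hx', hzero p hp, sub_zero] at t2
    have t3 := hρL x p
    rw [hzero p hp, sub_zero] at t3
    have e0 := lamOf_re ρ p (x - p)
    have e1 : (-(lamOf ρ p (x - p) + qf (fderiv ℝ (fderiv ℝ ρ) p) (x - p) (x - p) +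
        A * (lamOf ρ p (x - p)) ^ 2)).re = - fderiv ℝ ρ p (x - p) -
        (qf (fderiv ℝ (fderiv ℝ ρ) p) (x - p) (x - p)).re -
        A * (2 * (fderiv ℝ ρ p (x - p)) ^ 2 - ‖lamOf ρ p (x - p)‖ ^ 2) := by
      rw [← e0, ← Complex.normSq_eq_norm_sq, Complex.normSq_apply]
      simp [pow_two]
      ring
    beta_reduce
    rw [e1]
    refine apos_aux (S := Sf ρ p (x - p) / 4) (B4 := fderiv ℝ (fderiv ℝ ρ) p (x - p) (x - p) / 2)
      (r := ρ x) hA hM1 hc hneg ?_ (norm_nonneg _)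
      hxp.le (k3 η hη.le l3) ?_ t1 ?_ ?_ (hconv p hp (x - p))
    · have := (abs_le.mp t3).1; linarith
    · have h8 : η ^ 2 ≤ η := by nlinarith
      have := k4 (η ^ 2) (by positivity) (h8.trans l4)
      linarith
    · have := (abs_le.mp t2).1; linarith
    · rw [qf_re, Sf]; ring

end P11


section P12
set_option linter.all false
set_option linter.deprecated false
open Filter Topology

variable {E : Type*} [NormedAddCommGroup E] [NormedSpace ℂ E]
variable {D V : Set E} {ρ : E → ℝ}

lemma Sf_csmul (p v : E) (ζ : ℂ) : Sf ρ p (ζ • v) = ‖ζ‖ ^ 2 * Sf ρ p v := by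
  have h : ∀ u, Sf ρ p u = (sesq (fderiv ℝ (fderiv ℝ ρ) p) u u).re := fun u => by
    rw [sesq_apply, Sf]; simp
  rw [h, h, map_smulₛₗ, map_smulₛₗ, LinearMap.smul_apply, ← Complex.normSq_eq_norm_sq, Complex.normSq_apply]
  simp
  ring

lemma qf_smul (B : E →L[ℝ] E →L[ℝ] ℝ) (ζ : ℂ) (v : E) : qf B (ζ • v) (ζ • v) = ζ ^ 2 * qf B v v := by
  rw [map_smul, map_smul, ContinuousLinearMap.smul_apply, smul_eq_mul, smul_eq_mul]; ring

/-- Lower bound for the defining function on the attached discs. -/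
lemma disc_lower {z w y : E} {e M : ℝ} (hB : ‖fderiv ℝ (fderiv ℝ ρ) z‖ ≤ M)
    (ht : |ρ (z + (w + y)) - ρ z - fderiv ℝ ρ z (w + y) - fderiv ℝ (fderiv ℝ ρ) z (w + y) (w + y) / 2|
      ≤ e * ‖w + y‖ ^ 2)
    (hw : lamOf ρ z w = 0) (hy : lamOf ρ z y = - qf (fderiv ℝ (fderiv ℝ ρ) z) w w) :
    ρ z + Sf ρ z w / 4 - M * (‖w‖ * ‖y‖ + ‖y‖ ^ 2 / 2) - e * ‖w + y‖ ^ 2 ≤ ρ (z + (w + y)) := by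
  set B := fderiv ℝ (fderiv ℝ ρ) z
  have h1 : fderiv ℝ ρ z (w + y) = - (B w w - B (Complex.I • w) (Complex.I • w)) / 4 := by
    rw [← lamOf_re, map_add, hw, hy, zero_add, Complex.neg_re, qf_re]; ring
  have h2 : B (w + y) (w + y) = B w w + B w y + B y w + B y y := by
    simp only [map_add, ContinuousLinearMap.add_apply]; ring
  have hb : ∀ a b : E, -(M * ‖a‖ * ‖b‖) ≤ B a b := fun a b => by
    have h3 : ‖B a b‖ ≤ M * ‖a‖ * ‖b‖ := (B.le_opNorm₂ a b).trans (by gcongr)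
    exact (abs_le.mp h3).1
  have h3 := hb w y
  have h4 := hb y w
  have h5 := hb y y
  have h6 := (abs_le.mp ht).1
  rw [h1, h2] at h6
  have h7 : Sf ρ z w = B w w + B (Complex.I • w) (Complex.I • w) := rfl
  rw [h7]
  have e1 : M * (‖w‖ * ‖y‖ + ‖y‖ ^ 2 / 2) = (M * ‖w‖ * ‖y‖ + M * ‖y‖ * ‖w‖ + M * ‖y‖ * ‖y‖) / 2 := by ring
  rw [e1]
  linarith

lemma DF.pos_notMem (H : DF D ρ V) {z : E} (hz : z ∈ V) (hp : 0 < ρ z) : z ∉ closure D := by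
  intro hcl
  have hc : Continuous ρ := H.cd.continuous
  have hN : V ∩ {z | 0 < ρ z} ∈ 𝓝 z := (H.Vo.inter (isOpen_lt continuous_const hc)).mem_nhds ⟨hz, hp⟩
  obtain ⟨u, ⟨hu1, hu2⟩, huD⟩ := mem_closure_iff_nhds.mp hcl _ hN
  have := (H.iff u hu1).mp huD
  simp at hu2; linarith

lemma small_aux {M K s e r t nw ny nv : ℝ} (hM : 0 ≤ M) (hK : 1 ≤ K) (hs : 0 < s) (he : 0 ≤ e)
    (ht : 0 ≤ t) (htr : t ≤ r) (hr : r ≤ 1) (h1 : e * (4 * K ^ 2) ≤ s / 16) (h2 : M * (2 * K ^ 2) * r ≤ s / 16)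
    (hnw : nw ≤ t * K) (hny : ny ≤ t ^ 2 * K) (hnw0 : 0 ≤ nw) (hny0 : 0 ≤ ny) (hnv0 : 0 ≤ nv) (hnv : nv ≤ nw + ny) :
    t ^ 2 * s / 4 - M * (nw * ny + ny ^ 2 / 2) - e * nv ^ 2 ≥ t ^ 2 * s / 8 := by
  have ht1 : t ≤ 1 := htr.trans hr
  have k1 : t ^ 2 ≤ t := by nlinarith
  have hny' : ny ≤ t * K := hny.trans (by gcongr)
  have k2 : nv ^ 2 ≤ (2 * (t * K)) ^ 2 := by gcongr; linarith
  have k3 : e * nv ^ 2 ≤ t ^ 2 * (s / 16) := by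
    calc e * nv ^ 2 ≤ e * (2 * (t * K)) ^ 2 := by gcongr
      _ = t ^ 2 * (e * (4 * K ^ 2)) := by ring
      _ ≤ _ := by gcongr
  have k4 : nw * ny ≤ (t * K) * (t ^ 2 * K) := by gcongr
  have k5 : ny ^ 2 ≤ (t * K) * (t ^ 2 * K) := by rw [pow_two]; gcongr
  have k6 : M * (nw * ny + ny ^ 2 / 2) ≤ t ^ 2 * (s / 16) := by
    calc M * (nw * ny + ny ^ 2 / 2) ≤ M * (2 * ((t * K) * (t ^ 2 * K))) := by
          gcongr
          have : 0 ≤ (t * K) * (t ^ 2 * K) := by positivity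
          linarith
      _ = t ^ 2 * (M * (2 * K ^ 2) * t) := by ring
      _ ≤ t ^ 2 * (M * (2 * K ^ 2) * r) := by gcongr
      _ ≤ _ := by gcongr
  linarith

set_option maxHeartbeats 1000000 in
lemma DF.discs [FiniteDimensional ℂ E] (hn : 2 ≤ Module.finrank ℂ E) (H : DF D ρ V) (hD : IsOpen D)
    {q : E} (hq : q ∈ frontier D) {ε : ℝ} (hε : 0 < ε) : ∃ φ : E → ℂ → E,
    (∀ z, Differentiable ℂ (φ z)) ∧ (∀ z, φ z 0 = z) ∧ (∀ ζ, ContinuousAt (fun z => φ z ζ) q) ∧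
    φ q (1 / 2) ∈ (closure D)ᶜ ∩ ball q ε ∧
    ∀ᶠ z in 𝓝 q, z ∉ closure D → MapsTo (φ z) (ball 0 1) ((closure D)ᶜ ∩ ball q ε) := by
  obtain ⟨M, hM1, -, -, hBB, -⟩ := H.bounds
  have hM0 : 0 ≤ M := by linarith
  obtain ⟨X, hX0, hX⟩ : ∃ X : E, X ≠ 0 ∧ lamOf ρ q X = 0 := by
    have h1 : LinearMap.ker (lamOf ρ q : E →ₗ[ℂ] ℂ) ≠ ⊥ :=
      LinearMap.ker_ne_bot_of_finrank_lt (by simp; omega)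
    obtain ⟨X, hX, hX0⟩ := Submodule.exists_mem_ne_zero_of_ne_bot h1
    exact ⟨X, hX0, hX⟩
  obtain ⟨ν, hν⟩ : ∃ ν, lamOf ρ q ν = 1 := by
    have h1 : lamOf ρ q ≠ 0 := by
      rw [← norm_ne_zero_iff, lamOf_norm, norm_ne_zero_iff]; exact H.ne q hq
    obtain ⟨v, hv⟩ : ∃ v, lamOf ρ q v ≠ 0 := by
      by_contra hcon; push Not at hcon; exact h1 (ContinuousLinearMap.ext hcon)
    exact ⟨(lamOf ρ q v)⁻¹ • v, by rw [map_smul, smul_eq_mul, inv_mul_cancel₀ hv]⟩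
  have hlc : ∀ v, Continuous (fun z => lamOf ρ z v) := fun v => H.lamCont.clm_apply continuous_const
  set Xf : E → E := fun z => X - (lamOf ρ z X / lamOf ρ z ν) • ν with hXf
  set Yf : E → E := fun z => -(qf (fderiv ℝ (fderiv ℝ ρ) z) (Xf z) (Xf z) / lamOf ρ z ν) • ν with hYf
  have hν0 : lamOf ρ q ν ≠ 0 := by rw [hν]; exact one_ne_zero
  have hXc : ContinuousAt Xf q :=
    continuousAt_const.sub ((((hlc X).continuousAt).div (hlc ν).continuousAt hν0).smul continuousAt_const)
  have hBc : ∀ f g : E → E, ContinuousAt f q → ContinuousAt g q →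
      ContinuousAt (fun z => fderiv ℝ (fderiv ℝ ρ) z (f z) (g z)) q := fun f g hf hg =>
    (H.cd0.continuousAt.clm_apply hf).clm_apply hg
  have hIc : ContinuousAt (fun z => Complex.I • Xf z) q := hXc.const_smul _
  have hQc : ContinuousAt (fun z => qf (fderiv ℝ (fderiv ℝ ρ) z) (Xf z) (Xf z)) q := by
    simp only [qf_apply]
    refine ContinuousAt.div_const (ContinuousAt.sub ?_ (continuousAt_const.mul ?_)) _
    · exact Complex.continuous_ofReal.continuousAt.comp ((hBc _ _ hXc hXc).sub (hBc _ _ hIc hIc))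
    · exact Complex.continuous_ofReal.continuousAt.comp ((hBc _ _ hXc hIc).add (hBc _ _ hIc hXc))
  have hYc : ContinuousAt Yf q := ((hQc.div (hlc ν).continuousAt hν0).neg).smul continuousAt_const
  have hSc : ContinuousAt (fun z => Sf ρ z (Xf z)) q := (hBc _ _ hXc hXc).add (hBc _ _ hIc hIc)
  have hXq : Xf q = X := by simp [hXf, hX]
  have hSq : 0 < Sf ρ q (Xf q) := by
    rw [hXq]
    have h2 := congrArg Complex.re hX
    have h3 := congrArg Complex.im hX
    rw [lamOf_re] at h2
    rw [lamOf_im] at h3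
    simp at h2 h3
    exact H.levi q hq X hX0 h2 h3
  obtain ⟨s, hs⟩ : ∃ s, s = Sf ρ q (Xf q) / 2 := ⟨_, rfl⟩
  have hs0 : 0 < s := by linarith
  obtain ⟨K, hK⟩ : ∃ K, K = 1 + ‖Xf q‖ + ‖Yf q‖ := ⟨_, rfl⟩
  have hK1 : 1 ≤ K := by have := norm_nonneg (Xf q); have := norm_nonneg (Yf q); linarith
  have hev : ∀ᶠ z in 𝓝 q, lamOf ρ z ν ≠ 0 ∧ ‖Xf z‖ < K ∧ ‖Yf z‖ < K ∧ s < Sf ρ z (Xf z) := by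
    have a1 := (hlc ν).continuousAt.eventually_ne hν0
    have a2 := hXc.norm.eventually_lt_const (u := K) (by linarith [norm_nonneg (Yf q)])
    have a3 := hYc.norm.eventually_lt_const (u := K) (by linarith [norm_nonneg (Xf q)])
    have a4 := hSc.eventually_const_lt (u := s) (by linarith)
    filter_upwards [a1, a2, a3, a4] with z b1 b2 b3 b4 using ⟨b1, b2, b3, b4⟩
  obtain ⟨ε1, hε1, hεV⟩ := Metric.isOpen_iff.mp H.Vo q (H.fr hq)
  obtain ⟨ε2, hε2, hε21, hε2'⟩ : ∃ ε2 > 0, ε2 ≤ ε1 ∧ ε2 ≤ ε := ⟨min ε1 ε, by positivity, min_le_left _ _, min_le_right _ _⟩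
  obtain ⟨e, he, ke⟩ := exists_small (x := 4 * K ^ 2) (by positivity) (y := s / 16) (by positivity)
  have ke := ke e he.le le_rfl
  obtain ⟨δ, hδ, ht2⟩ := H.taylor2 he
  obtain ⟨r1, hr1, k1⟩ := exists_small (x := M * (2 * K ^ 2)) (by positivity) (y := s / 16) (by positivity)
  obtain ⟨r2, hr2, k2⟩ := exists_small (x := 2 * K) (by positivity) (y := ε2 / 2) (by positivity)
  obtain ⟨r3, hr3, k3⟩ := exists_small (x := 2 * K) (by positivity) (y := δ / 2) (by positivity)
  obtain ⟨r, hr, l1, l2, l3, l4⟩ : ∃ r > 0, r ≤ r1 ∧ r ≤ r2 ∧ r ≤ r3 ∧ r ≤ 1 := by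
    refine ⟨min r1 (min r2 (min r3 1)), by positivity, ?_⟩
    simp only [le_min_iff, min_le_iff, le_refl, true_or, or_true, and_true, true_and]
  have k1 := k1 r hr.le l1
  have k2 := k2 r hr.le l2
  have k3 := k3 r hr.le l3
  -- the main estimate
  have main : ∀ z, (lamOf ρ z ν ≠ 0 ∧ ‖Xf z‖ < K ∧ ‖Yf z‖ < K ∧ s < Sf ρ z (Xf z)) → ∀ ζ : ℂ, ‖ζ‖ < 1 →
      ‖(r * ζ) • Xf z + (r * ζ) ^ 2 • Yf z‖ ≤ 2 * K * r ∧
      ρ z + (r * ‖ζ‖) ^ 2 * s / 8 ≤ ρ (z + ((r * ζ) • Xf z + (r * ζ) ^ 2 • Yf z)) := by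
    rintro z ⟨b1, b2, b3, b4⟩ ζ hζ
    have hnr : ‖(r * ζ : ℂ)‖ = r * ‖ζ‖ := by
      rw [norm_mul, Complex.norm_real, Real.norm_of_nonneg hr.le]
    set t : ℝ := r * ‖ζ‖ with ht
    have ht0 : 0 ≤ t := by positivity
    have htr : t ≤ r := by
      rw [ht]; exact mul_le_of_le_one_right hr.le hζ.le
    have n1 : ‖(r * ζ) • Xf z‖ ≤ t * K := by rw [norm_smul, hnr]; gcongr
    have n2 : ‖(r * ζ) ^ 2 • Yf z‖ ≤ t ^ 2 * K := by rw [norm_smul, norm_pow, hnr]; gcongr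
    have n3 := norm_add_le ((r * ζ) • Xf z) ((r * ζ) ^ 2 • Yf z)
    have n4 : t ^ 2 ≤ t := by nlinarith
    have n5 : t * K ≤ r * K := by gcongr
    have n6 : t ^ 2 * K ≤ t * K := by gcongr
    have n7 : ‖(r * ζ) • Xf z + (r * ζ) ^ 2 • Yf z‖ ≤ 2 * K * r := by linarith
    refine ⟨n7, ?_⟩
    have c1 : lamOf ρ z (Xf z) = 0 := by
      simp only [hXf]
      rw [map_sub, map_smul, smul_eq_mul, div_mul_cancel₀ _ b1, sub_self]
    have c2 : lamOf ρ z (Yf z) = - qf (fderiv ℝ (fderiv ℝ ρ) z) (Xf z) (Xf z) := by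
      simp only [hYf]
      rw [map_smul, smul_eq_mul, neg_mul, div_mul_cancel₀ _ b1]
    have hl := disc_lower (ρ := ρ) (z := z) (w := (r * ζ) • Xf z) (y := (r * ζ) ^ 2 • Yf z) (hBB z)
      (ht2 z _ (by linarith)) (by rw [map_smul, c1, smul_zero])
      (by rw [map_smul, c2, qf_smul, smul_eq_mul, mul_neg])
    rw [Sf_csmul, hnr] at hl
    have hsm := small_aux (M := M) (K := K) (s := s) (e := e) (r := r) (t := t) hM0 hK1 hs0 he.le ht0 htr l4
      (by linarith) k1 n1 n2 (norm_nonneg _) (norm_nonneg _) (norm_nonneg _) n3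
    have b5 : t ^ 2 * s ≤ t ^ 2 * Sf ρ z (Xf z) := by gcongr
    linarith
  have hq0 : ρ q = 0 := H.zero hD hq
  refine ⟨fun z ζ => z + ((r * ζ) • Xf z + (r * ζ) ^ 2 • Yf z), ?_, ?_, ?_, ?_, ?_⟩
  · intro z
    fun_prop
  · intro z; simp
  · intro ζ
    exact continuousAt_id.add ((hXc.const_smul _).add (hYc.const_smul _))
  · obtain ⟨m1, m2⟩ := main q hev.self_of_nhds (1 / 2) (by norm_num)
    beta_reduce
    refine ⟨?_, by rw [mem_ball, dist_self_add_left]; linarith⟩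
    apply H.pos_notMem
    · apply hεV
      rw [mem_ball, dist_self_add_left]; linarith
    · rw [hq0] at m2
      refine lt_of_lt_of_le ?_ m2
      have : 0 < ‖(1 / 2 : ℂ)‖ := by norm_num
      positivity
  · filter_upwards [hev, ball_mem_nhds q (half_pos hε2)] with z hz hzq hzD ζ hζ
    have hζ' : ‖ζ‖ < 1 := by simpa using hζ
    obtain ⟨m1, m2⟩ := main z hz ζ hζ'
    have hb : dist (z + ((r * ζ) • Xf z + (r * ζ) ^ 2 • Yf z)) q < ε2 := by
      have h1 := dist_triangle (z + ((r * ζ) • Xf z + (r * ζ) ^ 2 • Yf z)) z q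
      rw [dist_self_add_left] at h1
      rw [mem_ball] at hzq
      linarith
    refine ⟨?_, lt_of_lt_of_le hb hε2'⟩
    beta_reduce
    by_cases h0 : ζ = 0
    · subst h0; simpa using hzD
    · apply H.pos_notMem (hεV (lt_of_lt_of_le hb hε21))
      have hzV : z ∈ V := hεV (by rw [mem_ball] at hzq ⊢; linarith)
      have hz0 : 0 ≤ ρ z := by
        by_contra hcon
        push Not at hcon
        exact hzD (subset_closure ((H.iff z hzV).mpr hcon))
      have : 0 < ‖ζ‖ := norm_pos_iff.mpr h0
      have : 0 < (r * ‖ζ‖) ^ 2 * s / 8 := by positivity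
      linarith

end P12


section P13
set_option linter.all false
set_option linter.deprecated false
open Filter Topology

variable {E : Type*} [NormedAddCommGroup E] [NormedSpace ℂ E]
variable {D G V : Set E} {ρ : E → ℝ}

lemma kob_ball {Ω : Set E} {y z : E} {R : ℝ} (hR : ball y R ⊆ Ω) (hz : dist z y < R / 4) :
    kobayashi Ω z y ≤ artanh (1 / 2) := by
  have h := kob_le_disc (D := Ω) (φ := fun ζ : ℂ => z + ζ • ((2:ℂ) • (y - z))) (α := 1 / 2) (by norm_num)
    (by fun_prop) (by
      intro ζ hζ
      apply hR
      have hζ' : ‖ζ‖ < 1 := by simpa using hζ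
      rw [mem_ball, dist_eq_norm]
      have e : z + ζ • ((2:ℂ) • (y - z)) - y = (z - y) + ζ • ((2:ℂ) • (y - z)) := by abel
      rw [dist_eq_norm] at hz
      rw [e]
      refine (norm_add_le _ _).trans_lt ?_
      rw [norm_smul, norm_smul, norm_sub_rev y z]
      have : ‖ζ‖ * (‖(2:ℂ)‖ * ‖z - y‖) ≤ 1 * (‖(2:ℂ)‖ * ‖z - y‖) := by gcongr
      have h2 : ‖(2:ℂ)‖ = 2 := by simp
      rw [h2] at this ⊢
      have := norm_nonneg (z - y)
      linarith)
  have e1 : z + (0:ℂ) • ((2:ℂ) • (y - z)) = z := by simp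
  have e2 : z + (1 / 2 : ℂ) • ((2:ℂ) • (y - z)) = y := by rw [smul_smul]; norm_num
  have e3 : ‖(1 / 2 : ℂ)‖ = 1 / 2 := by norm_num
  beta_reduce at h
  rwa [e1, e2, e3] at h

lemma DF.local_bd [FiniteDimensional ℂ E] (hn : 2 ≤ Module.finrank ℂ E) (H : DF D ρ V) (hD : IsOpen D)
    (hG : IsOpen G) (hDG : closure D ⊆ G) {w : E} (hw : w ∈ G) (hwD : w ∉ D) :
    ∃ N ∈ 𝓝 w, ∃ y ∈ G \ closure D, ∃ C, ∀ z ∈ N, z ∈ G \ closure D → kobayashi (G \ closure D) z y ≤ C := by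
  have hΩ : IsOpen (G \ closure D) := hG.sdiff isClosed_closure
  by_cases hc : w ∈ closure D
  · have hq : w ∈ frontier D := by rw [hD.frontier_eq]; exact ⟨hc, hwD⟩
    obtain ⟨ε, hε, hεG⟩ := Metric.isOpen_iff.mp hG w hw
    obtain ⟨φ, h1, h2, h3, h4, h5⟩ := H.discs hn hD hq hε
    have hy : φ w (1 / 2) ∈ G \ closure D := ⟨hεG h4.2, h4.1⟩
    obtain ⟨R, hR, hRΩ⟩ := Metric.isOpen_iff.mp hΩ _ hy
    have h6 := (h3 (1 / 2)).eventually (ball_mem_nhds (φ w (1 / 2)) (show 0 < R / 4 by positivity))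
    refine ⟨_, h5.and h6, φ w (1 / 2), hy, artanh (1 / 2) + artanh (1 / 2), ?_⟩
    rintro z ⟨hz1, hz2⟩ hz
    have hm : MapsTo (φ z) (ball 0 1) (G \ closure D) := fun ζ hζ =>
      ⟨hεG (hz1 hz.2 hζ).2, (hz1 hz.2 hζ).1⟩
    have k1 := kob_le_disc (α := 1 / 2) (by norm_num) (h1 z).differentiableOn hm
    rw [h2, show ‖(1 / 2 : ℂ)‖ = 1 / 2 by norm_num] at k1
    have hzm : φ z (1 / 2) ∈ G \ closure D := hm (by norm_num)
    have k2 := kob_ball hRΩ (z := φ z (1 / 2)) hz2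
    have := kob_triangle hz hzm hy
    linarith
  · have hy : w ∈ G \ closure D := ⟨hw, hc⟩
    obtain ⟨R, hR, hRΩ⟩ := Metric.isOpen_iff.mp hΩ _ hy
    exact ⟨ball w (R / 4), ball_mem_nhds w (by positivity), w, hy, artanh (1 / 2), fun z hz _ => kob_ball hRΩ hz⟩

lemma DF.hS [FiniteDimensional ℂ E] (hn : 2 ≤ Module.finrank ℂ E) (H : DF D ρ V) (hD : IsOpen D)
    (hG : IsOpen G) (hGb : Bornology.IsBounded G) (hDG : closure D ⊆ G) :
    ∀ ε > 0, ∃ C, ∀ x ∈ G \ closure D, ∀ y ∈ G \ closure D, (∀ q ∈ frontier G, ε ≤ dist x q) →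
      (∀ q ∈ frontier G, ε ≤ dist y q) → kobayashi (G \ closure D) x y ≤ C := by
  intro ε hε
  have : ProperSpace E := FiniteDimensional.proper ℂ E
  rcases (G \ closure D).eq_empty_or_nonempty with h0 | ⟨o, ho⟩
  · exact ⟨0, by rw [h0]; simp⟩
  set T : Set E := closure (G \ closure D) ∩ {x | ∀ q ∈ frontier G, ε ≤ dist x q} with hT
  have hTc : IsCompact T := by
    refine Metric.isCompact_of_isClosed_isBounded (isClosed_closure.inter ?_)
      ((hGb.subset diff_subset).closure.subset inter_subset_left)
    simp only [setOf_forall]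
    exact isClosed_iInter fun q => isClosed_iInter fun _ => isClosed_le continuous_const (by fun_prop)
  have key : ∃ C, ∀ z ∈ T, z ∈ G \ closure D → kobayashi (G \ closure D) z o ≤ C := by
    refine hTc.induction_on (p := fun s => ∃ C, ∀ z ∈ s, z ∈ G \ closure D → kobayashi (G \ closure D) z o ≤ C)
      ⟨0, by simp⟩ ?_ ?_ ?_
    · rintro s t hst ⟨C, hC⟩
      exact ⟨C, fun z hz => hC z (hst hz)⟩
    · rintro s t ⟨C, hC⟩ ⟨C', hC'⟩
      refine ⟨max C C', fun z hz hzΩ => ?_⟩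
      rcases hz with hz | hz
      · exact (hC z hz hzΩ).trans (le_max_left _ _)
      · exact (hC' z hz hzΩ).trans (le_max_right _ _)
    · rintro w ⟨hw1, hw2⟩
      have hwG : w ∈ G := by
        by_contra hcon
        have : w ∈ frontier G := by
          rw [hG.frontier_eq]; exact ⟨closure_mono diff_subset hw1, hcon⟩
        have := hw2 w this
        simp at this; linarith
      have hwD : w ∉ D := by
        intro hcon
        obtain ⟨u, hu1, hu2⟩ := mem_closure_iff_nhds.mp hw1 D (hD.mem_nhds hcon)
        exact hu2.2 (subset_closure hu1)
      obtain ⟨N, hN, y, hy, C, hC⟩ := H.local_bd hn hD hG hDG hwG hwD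
      refine ⟨N, mem_nhdsWithin_of_mem_nhds hN, C + kobayashi (G \ closure D) y o, fun z hz hzΩ => ?_⟩
      have := kob_triangle hzΩ hy ho
      have := hC z hz hzΩ
      linarith
  obtain ⟨C, hC⟩ := key
  refine ⟨C + C, fun x hx y hy hxq hyq => ?_⟩
  have h1 := hC x ⟨subset_closure hx, hxq⟩ hx
  have h2 := hC y ⟨subset_closure hy, hyq⟩ hy
  rw [kob_symm hy ho] at h2
  have := kob_triangle hx ho hy
  linarith

end P13


section P14
set_option linter.all false
set_option linter.deprecated false
open Filter Topology

theorem contAt_ind {X : Type*} [TopologicalSpace X] {A B : Set X} (hA : IsOpen A) (hB : IsOpen B)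
    (hAB : Disjoint A B) {h : X → ℝ} (hh : Continuous h) {x : X}
    (hx : x ∈ A ∨ x ∈ B ∨ h x = 0) : ContinuousAt (B.indicator h) x := by
  rcases hx with hx | hx | hx
  · have : B.indicator h =ᶠ[𝓝 x] fun _ => (0:ℝ) := by
      filter_upwards [hA.mem_nhds hx] with y hy
      exact indicator_of_notMem (fun hb => (Set.disjoint_left.1 hAB) hy hb) _
    exact (continuousAt_const).congr this.symm
  · have : B.indicator h =ᶠ[𝓝 x] h := by
      filter_upwards [hB.mem_nhds hx] with y hy
      exact indicator_of_mem hy _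
    exact hh.continuousAt.congr this.symm
  · have h0 : B.indicator h x = 0 := by
      by_cases hb : x ∈ B
      · rw [indicator_of_mem hb, hx]
      · exact indicator_of_notMem hb _
    have h1 : Tendsto (fun y => ‖h y‖) (𝓝 x) (𝓝 0) := by
      have := hh.norm.tendsto x
      rwa [hx, norm_zero] at this
    unfold ContinuousAt
    rw [h0]
    exact squeeze_zero_norm (fun y => norm_indicator_le_norm_self h y) h1

theorem int_const {X : Type*} [TopologicalSpace X] {S : Set X} (hS : IsPreconnected S) {g : X → ℝ}
    (hg : ContinuousOn g S) (hz : ∀ x ∈ S, ∃ m : ℤ, g x = m) : ∃ c : ℝ, ∀ x ∈ S, g x = c := by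
  by_cases hn : S.Nonempty
  · have e : DiscreteTopology (range ((↑) : ℤ → ℝ)) :=
      Int.isClosedEmbedding_coe_real.isEmbedding.toHomeomorph.symm.isEmbedding.discreteTopology
    obtain ⟨y, -, hy⟩ := hS.eqOn_const_of_mapsTo (T := range ((↑) : ℤ → ℝ)) ⟨e⟩ hg
      (fun x hx => by obtain ⟨m, hm⟩ := hz x hx; exact ⟨m, hm.symm⟩) ⟨0, 0, by simp⟩
    exact ⟨y, fun x hx => hy hx⟩
  · exact ⟨0, fun x hx => (hn ⟨x, hx⟩).elim⟩

set_option maxHeartbeats 1000000 in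
theorem inter_preconn {E : Type*} [NormedAddCommGroup E] [NormedSpace ℝ E] {G W : Set E}
    (hG : IsOpen G) (hW : IsOpen W) (hGc : IsPreconnected G) (hWc : IsPreconnected W)
    (hu : G ∪ W = univ) : IsPreconnected (G ∩ W) := by
  rw [isPreconnected_iff_subset_of_disjoint]
  intro u v huo hvo hsub hdisj
  by_contra hcon
  push Not at hcon
  obtain ⟨⟨b, hb, hbu⟩, ⟨a, ha, hav⟩⟩ : (∃ b ∈ G ∩ W, b ∉ u) ∧ ∃ a ∈ G ∩ W, a ∉ v :=
    ⟨not_subset.1 hcon.1, not_subset.1 hcon.2⟩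
  have hbv : b ∈ v := (hsub hb).resolve_left hbu
  have hau : a ∈ u := (hsub ha).resolve_right hav
  set A := (G ∩ W) ∩ u with hA
  set B := (G ∩ W) ∩ v with hB
  have hAo : IsOpen A := (hG.inter hW).inter huo
  have hBo : IsOpen B := (hG.inter hW).inter hvo
  have hAB : Disjoint A B := by
    rw [Set.disjoint_left]
    intro x hx hy
    have : x ∈ G ∩ W ∩ (u ∩ v) := ⟨hx.1, hx.2, hy.2⟩
    rw [hdisj] at this
    exact this
  have hcases : ∀ x, x ∈ G ∩ W → x ∈ A ∨ x ∈ B := fun x hx => by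
    rcases hsub hx with h | h
    · exact Or.inl ⟨hx, h⟩
    · exact Or.inr ⟨hx, h⟩
  have hd : Disjoint Wᶜ Gᶜ := by
    rw [Set.disjoint_left]
    intro x hx hy
    have : x ∈ G ∪ W := by rw [hu]; trivial
    exact this.elim hy hx
  obtain ⟨χ, hχ0, hχ1, -⟩ := exists_continuous_zero_one_of_isClosed hW.isClosed_compl
    hG.isClosed_compl hd
  set ψ : E → ℝ := B.indicator (fun x => χ x) with hψ
  set ψ' : E → ℝ := B.indicator (fun x => χ x - 1) with hψ'
  have c1 : ∀ x ∈ G, ContinuousAt ψ x := fun x hx => by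
    refine contAt_ind hAo hBo hAB χ.continuous ?_
    by_cases hw : x ∈ W
    · rcases hcases x ⟨hx, hw⟩ with h | h
      · exact Or.inl h
      · exact Or.inr (Or.inl h)
    · exact Or.inr (Or.inr (hχ0 hw))
  have c2 : ∀ x ∈ W, ContinuousAt ψ' x := fun x hx => by
    refine contAt_ind hAo hBo hAB (χ.continuous.sub continuous_const) ?_
    by_cases hw : x ∈ G
    · rcases hcases x ⟨hw, hx⟩ with h | h
      · exact Or.inl h
      · exact Or.inr (Or.inl h)
    · refine Or.inr (Or.inr ?_)
      have := hχ1 hw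
      simp at this
      simp [this]
  have hBψ : ∀ x ∈ B, ψ x = ψ' x + 1 := fun x hx => by
    simp only [hψ, hψ', indicator_of_mem hx]; ring
  have hBψn : ∀ x, x ∉ B → ψ x = ψ' x := fun x hx => by
    simp only [hψ, hψ', indicator_of_notMem hx]
  set f : E → ℂ := fun x => Complex.exp ((ψ x : ℂ) * (2 * Real.pi * Complex.I)) with hf
  have hf' : ∀ x, f x = Complex.exp ((ψ' x : ℂ) * (2 * Real.pi * Complex.I)) := fun x => by
    by_cases hx : x ∈ B
    · simp only [hf, hBψ x hx]
      push_cast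
      rw [add_mul, one_mul, Complex.exp_add, Complex.exp_two_pi_mul_I, mul_one]
    · simp only [hf, hBψn x hx]
  have fc : Continuous f := by
    rw [continuous_iff_continuousAt]
    intro x
    have : x ∈ G ∪ W := by rw [hu]; trivial
    rcases this with h | h
    · exact ((Complex.continuous_ofReal.continuousAt.comp (c1 x h)).mul continuousAt_const).cexp
    · have := ((Complex.continuous_ofReal.continuousAt.comp (c2 x h)).mul
        (continuousAt_const (y := (2 * Real.pi * Complex.I)))).cexp
      exact this.congr (Eventually.of_forall fun y => (hf' y).symm)
  have hsc : IsSimplyConnected (univ : Set E) := by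
    have : ContractibleSpace (univ : Set E) :=
      (convex_univ (𝕜 := ℝ) (E := E)).contractibleSpace ⟨0, trivial⟩
    unfold IsSimplyConnected
    infer_instance
  obtain ⟨θ, hθ, hθe⟩ := Complex.exists_continuousOn_eqOn_exp_comp hsc isOpen_univ
    fc.continuousOn (by rintro ⟨x, -, hx⟩; exact Complex.exp_ne_zero _ hx)
  rw [continuousOn_univ] at hθ
  have hpi : (2 * (Real.pi:ℝ)) ≠ 0 := by positivity
  have key : ∀ (g : E → ℝ), (∀ x, f x = Complex.exp ((g x : ℂ) * (2 * Real.pi * Complex.I))) →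
      ∀ x, ∃ m : ℤ, (θ x).im / (2 * Real.pi) - g x = m := fun g hg x => by
    have h1 : Complex.exp (θ x) = Complex.exp ((g x : ℂ) * (2 * Real.pi * Complex.I)) :=
      (hθe (mem_univ x)).trans (hg x)
    obtain ⟨m, hm⟩ := Complex.exp_eq_exp_iff_exists_int.1 h1
    refine ⟨m, ?_⟩
    have := congrArg Complex.im hm
    simp at this
    rw [this]
    field_simp
    ring
  obtain ⟨m1, h1⟩ := int_const hGc (g := fun x => (θ x).im / (2 * Real.pi) - ψ x)
    (fun x hx => ContinuousAt.continuousWithinAt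
      (((Complex.continuous_im.comp hθ).div_const _).continuousAt.sub (c1 x hx)))
    (fun x _ => key ψ (fun _ => rfl) x)
  obtain ⟨m2, h2⟩ := int_const hWc (g := fun x => (θ x).im / (2 * Real.pi) - ψ' x)
    (fun x hx => ContinuousAt.continuousWithinAt
      (((Complex.continuous_im.comp hθ).div_const _).continuousAt.sub (c2 x hx)))
    (fun x _ => key ψ' hf' x)
  have a1 := h1 a ha.1
  have a2 := h2 a ha.2
  have b1 := h1 b hb.1
  have b2 := h2 b hb.2
  have ea := hBψn a (fun h => hav h.2)
  have eb := hBψ b ⟨hb, hbv⟩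
  linarith

theorem ext_preconn {E : Type*} [NormedAddCommGroup E] [NormedSpace ℝ E]
    (hr : 1 < Module.rank ℝ E) {R : ℝ} (hR : 0 ≤ R) : IsPreconnected ((closedBall (0:E) R)ᶜ) := by
  have h1 : IsPreconnected ((fun p : E × ℝ => p.2 • p.1) '' (sphere (0:E) 1 ×ˢ Ioi R)) :=
    ((isPreconnected_sphere hr 0 1).prod isPreconnected_Ioi).image _
      (continuous_snd.smul continuous_fst).continuousOn
  convert h1 using 1
  ext x
  simp only [mem_compl_iff, mem_closedBall, dist_zero_right, not_le, mem_image, mem_prod,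
    mem_sphere, mem_Ioi, Prod.exists]
  constructor
  · intro hx
    have : ‖x‖ ≠ 0 := by linarith
    refine ⟨‖x‖⁻¹ • x, ‖x‖, ⟨?_, hx⟩, ?_⟩
    · rw [norm_smul, norm_inv, norm_norm, inv_mul_cancel₀ this]
    · rw [smul_smul, mul_inv_cancel₀ this, one_smul]
  · rintro ⟨y, t, ⟨hy, ht⟩, rfl⟩
    rw [norm_smul, hy, mul_one, Real.norm_eq_abs, abs_of_nonneg (by linarith)]
    exact ht

variable {E : Type*} [NormedAddCommGroup E] [NormedSpace ℂ E] {D G V : Set E} {ρ : E → ℝ}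

theorem clopen_piece {W u v : Set E} (hsub : W ⊆ u ∪ v) (hdisj : W ∩ (u ∩ v) = ∅)
    (hu : IsOpen u) (hv : IsOpen v) {S : Set E} (hS : IsPreconnected S) (hSW : S ⊆ W) {x : E}
    (hx : x ∈ S) (hxv : x ∈ v) : S ⊆ v := by
  have := isPreconnected_iff_subset_of_disjoint.1 hS u v hu hv (hSW.trans hsub) (by
    rw [eq_empty_iff_forall_notMem] at hdisj ⊢
    exact fun y hy => hdisj y ⟨hSW hy.1, hy.2⟩)
  rcases this with h | h
  · exfalso
    have : x ∈ W ∩ (u ∩ v) := ⟨hSW hx, h hx, hxv⟩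
    rw [hdisj] at this
    exact this
  · exact h

set_option maxHeartbeats 1000000 in
theorem DF.no_piece [FiniteDimensional ℂ E] [StrictConvexSpace ℝ E]
    (hn : 2 ≤ Module.finrank ℂ E) (H : DF D ρ V)
    (hD : IsOpen D) {u v : Set E} (hu : IsOpen u) (hv : IsOpen v)
    (hsub : (closure D)ᶜ ⊆ u ∪ v) (hdisj : (closure D)ᶜ ∩ (u ∩ v) = ∅)
    {R : ℝ} (hR : (closedBall (0:E) R)ᶜ ⊆ (closure D)ᶜ) (hRu : (closedBall (0:E) R)ᶜ ⊆ u) :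
    (closure D)ᶜ ⊆ u := by
  haveI : ProperSpace E := FiniteDimensional.proper ℂ E
  set W := (closure D)ᶜ with hW
  have hWo : IsOpen W := isClosed_closure.isOpen_compl
  by_contra hcon
  obtain ⟨b, hbW, hbu⟩ := not_subset.1 hcon
  set S := W ∩ v with hS
  have hSo : IsOpen S := hWo.inter hv
  have hbS : b ∈ S := ⟨hbW, (hsub hbW).resolve_left hbu⟩
  have hdj : ∀ x ∈ W, x ∈ u → x ∈ v → False := fun x h1 h2 h3 => by
    have : x ∈ W ∩ (u ∩ v) := ⟨h1, h2, h3⟩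
    rw [hdisj] at this
    exact this
  have hSb : S ⊆ closedBall 0 R := fun x hx => by
    by_contra h
    exact hdj x hx.1 (hRu h) hx.2
  have hSc : IsCompact (closure S) := (isBounded_closedBall.subset hSb).isCompact_closure
  obtain ⟨p, hp, hmax⟩ := hSc.exists_isMaxOn ⟨b, subset_closure hbS⟩
    (continuous_norm (E := E)).continuousOn
  have hfin : ∀ f : ℂ → E, Differentiable ℂ f → f 0 = p →
      MapsTo f (ball 0 1) (closure S) → f (1/2) = p := fun f hf h0 hm => by
    have := Complex.eqOn_of_isPreconnected_of_isMaxOn_norm (f := f) (c := 0)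
      (isPreconnected_ball (x := (0:ℂ)) (r := 1)) isOpen_ball hf.differentiableOn
      (mem_ball_self one_pos) (fun z hz => by
        have := hmax (hm hz)
        simpa [h0] using this)
    have h2 := this (show (1/2:ℂ) ∈ ball 0 1 by simp; norm_num)
    simpa [h0] using h2
  have hnt : Nontrivial E := Module.nontrivial_of_finrank_pos (R := ℂ) (by omega)
  by_cases hpW : p ∈ W
  · have hpv : p ∈ v := by
      by_contra hpv
      have hpu := (hsub hpW).resolve_right hpv
      obtain ⟨x, hx1, hx2⟩ := mem_closure_iff.1 hp (W ∩ u) (hWo.inter hu) ⟨hpW, hpu⟩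
      exact hdj x hx1.1 hx1.2 hx2.2
    obtain ⟨r, hr, hrS⟩ := Metric.isOpen_iff.1 hSo p ⟨hpW, hpv⟩
    obtain ⟨w, hw⟩ := exists_norm_eq E (c := r/2) (by linarith)
    have := hfin (fun ζ => p + ζ • w) (by fun_prop) (by simp) (fun ζ hζ => by
      apply subset_closure
      apply hrS
      simp only [mem_ball, dist_zero_right] at hζ
      rw [mem_ball, dist_self_add_left, norm_smul, hw]
      nlinarith)
    have h0 : (1/2:ℂ) • w = 0 := by simpa using this
    rw [smul_eq_zero] at h0
    rcases h0 with h0 | h0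
    · norm_num at h0
    · rw [h0, norm_zero] at hw; linarith
  · have hpD : p ∈ closure D := by simpa [hW] using hpW
    have hpf : p ∈ frontier D := by
      rw [hD.frontier_eq]
      refine ⟨hpD, fun hpD' => ?_⟩
      obtain ⟨x, hx1, hx2⟩ := mem_closure_iff.1 hp D hD hpD'
      exact hx2.1 (subset_closure hx1)
    obtain ⟨φ, f1, f2, f3, f4, f5⟩ := H.discs hn hD hpf one_pos
    have := hfin (φ p) (f1 p) (f2 p) (fun ζ hζ => by
      refine mem_closure_of_frequently_of_tendsto ?_ (f3 ζ)
      refine ((mem_closure_iff_frequently.1 hp).and_eventually f5).mono ?_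
      rintro z ⟨hzS, hz⟩
      have hm := hz hzS.1
      have hi : IsPreconnected (φ z '' ball 0 1) :=
        isPreconnected_ball.image _ (f1 z).continuous.continuousOn
      have hsW : φ z '' ball 0 1 ⊆ W := by
        rintro _ ⟨t, ht, rfl⟩
        exact (hm ht).1
      exact ⟨(hm hζ).1, clopen_piece hsub hdisj hu hv hi hsW
        ⟨0, mem_ball_self one_pos, f2 z⟩ hzS.2 ⟨ζ, hζ, rfl⟩⟩)
    rw [this] at f4
    exact f4.1 hpD

theorem DF.compl_preconn [FiniteDimensional ℂ E] [StrictConvexSpace ℝ E]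
    (hn : 2 ≤ Module.finrank ℂ E) (H : DF D ρ V)
    (hD : IsOpen D) (hb : Bornology.IsBounded D) : IsPreconnected ((closure D)ᶜ) := by
  obtain ⟨R, hR⟩ := hb.closure.subset_closedBall (0:E)
  have hR' : closure D ⊆ closedBall 0 (max R 0) := hR.trans (closedBall_subset_closedBall (le_max_left _ _))
  have hsubW := compl_subset_compl.2 hR'
  have hrank : 1 < Module.rank ℝ E := by
    have h1 : Module.finrank ℝ E = 2 * Module.finrank ℂ E := finrank_real_of_complex E
    haveI : FiniteDimensional ℝ E := FiniteDimensional.complexToReal E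
    rw [← Module.finrank_eq_rank]
    exact_mod_cast (by omega : 1 < Module.finrank ℝ E)
  have hext := ext_preconn (E := E) hrank (le_max_right R 0)
  rw [isPreconnected_iff_subset_of_disjoint]
  intro u v hu hv hsub hdisj
  have := isPreconnected_iff_subset_of_disjoint.1 hext u v hu hv (hsubW.trans hsub) (by
    rw [eq_empty_iff_forall_notMem] at hdisj ⊢
    exact fun y hy => hdisj y ⟨hsubW hy.1, hy.2⟩)
  rcases this with h | h
  · exact Or.inl (H.no_piece hn hD hu hv hsub hdisj hsubW h)
  · exact Or.inr (H.no_piece hn hD hv hu (by rwa [union_comm]) (by rwa [inter_comm v u]) hsubW h)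

theorem DF.conn [FiniteDimensional ℂ E] [StrictConvexSpace ℝ E]
    (hn : 2 ≤ Module.finrank ℂ E) (H : DF D ρ V)
    (hD : IsOpen D) (hG : IsOpen G) (hGc : IsConnected G) (hGb : Bornology.IsBounded G)
    (hGn : G ≠ univ) (hDG : closure D ⊆ G) : IsConnected (G \ closure D) := by
  have hWo : IsOpen (closure D)ᶜ := isClosed_closure.isOpen_compl
  constructor
  · obtain ⟨p, hp⟩ := nonempty_frontier_iff.2 ⟨hGc.nonempty, hGn⟩
    rw [hG.frontier_eq] at hp
    obtain ⟨x, hx1, hx2⟩ := mem_closure_iff.1 hp.1 _ hWo (fun h => hp.2 (hDG h))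
    exact ⟨x, hx2, hx1⟩
  · refine inter_preconn hG hWo hGc.isPreconnected
      (H.compl_preconn hn hD (hGb.subset (subset_closure.trans hDG))) ?_
    rw [eq_univ_iff_forall]
    intro x
    by_cases h : x ∈ closure D
    · exact Or.inl (hDG h)
    · exact Or.inr h

end P14

/-- **Corollary 6.** If `D ⋐ G` are strictly pseudoconvex domains in `ℂⁿ` (`n ≥ 2`),
then `G ∖ cl(D)` is a domain which is Gromov hyperbolic with respect to its Kobayashi
distance. -/
theorem complement_of_strictly_pseudoconvex_gromov_hyperbolic
    (n : ℕ) (hn : 2 ≤ n) (D G : Set (EuclideanSpace ℂ (Fin n)))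
    (hDopen : IsOpen D) (hDconn : IsConnected D) (hDpsc : IsStrictlyPseudoconvex D)
    (hGopen : IsOpen G) (hGconn : IsConnected G) (hGpsc : IsStrictlyPseudoconvex G)
    (hDG : closure D ⊆ G) :
    IsOpen (G \ closure D) ∧ IsConnected (G \ closure D) ∧
      GromovHyperbolicWith (G \ closure D) (kobayashi (G \ closure D)) := by
  obtain ⟨ρ, V, H⟩ := DF.of_psc hDpsc
  obtain ⟨ρ', V', H'⟩ := DF.of_psc hGpsc
  have hfr : Module.finrank ℂ (EuclideanSpace ℂ (Fin n)) = n := finrank_euclideanSpace_fin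
  have hn' : 2 ≤ Module.finrank ℂ (EuclideanSpace ℂ (Fin n)) := by rw [hfr]; exact hn
  haveI : Nontrivial (EuclideanSpace ℂ (Fin n)) :=
    Module.nontrivial_of_finrank_pos (R := ℂ) (by omega)
  have hGn : G ≠ univ := by
    rintro rfl
    exact NormedSpace.unbounded_univ ℂ (EuclideanSpace ℂ (Fin n)) H'.bd
  have ho : IsOpen (G \ closure D) := hGopen.sdiff isClosed_closure
  have hc : IsConnected (G \ closure D) := H.conn hn' hDopen hGopen hGconn H'.bd hGn hDG
  obtain ⟨lam, a, η, c, M, hB⟩ := H'.bdata hGopen (isClosed_closure (s := D)) hDG hGn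
  exact ⟨ho, hc, hB.gromov (disc_conn ho hc) (H.hS hn' hDopen hGopen H'.bd hDG)⟩
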